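/- Jonsson's theorem: the Witten index of the hard-core fermion model on the torus square lattice G_{u,v} is given by rhombus tilings: Σ_I (−1)^{|I|} = t_b − t_f − (−1)^d θ_d θ_{d*}, where the sum runs over all independent sets I of G_{u,v}, d = gcd(u₁−u₂, v₁−v₂), d* = gcd(u₁+u₂, v₁+v₂), and θ_k = 2 if 3 divides k and θ_k = −1 otherwise. -/

import Mathlib

/-! ### The supersymmetric hard-core fermion model on a graph

For a finite simple graph `G` with totally ordered vertex set, the Hilbert space has an
orthonormal basis `{|I⟩ : I an independent set of G}`, the supercharge acts by
`Q|I⟩ = Σ_v ε(v,I) |I ∪ {v}⟩` (sum over `v ∉ I` with `I ∪ {v}` independent,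
`ε(v,I) = (−1)^{#{w ∈ I : w < v}}`), and the Hamiltonian is `H = Q Q† + Q† Q`. -/

open scoped BigOperators

/-- A finite set of vertices is independent if it contains no edge of `G`. -/
def Indep {V : Type*} (G : SimpleGraph V) (I : Finset V) : Prop :=
  ∀ ⦃a⦄, a ∈ I → ∀ ⦃b⦄, b ∈ I → ¬ G.Adj a b

lemma Indep.mono {V : Type*} {G : SimpleGraph V} {I J : Finset V}
    (hI : Indep G I) (hJI : J ⊆ I) : Indep G J :=
  fun _ ha _ hb => hI (hJI ha) (hJI hb)

/-- The independent sets of `G`, indexing the orthonormal basis of the Hilbert space. -/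
def IndepSet {V : Type*} (G : SimpleGraph V) : Type _ := {I : Finset V // Indep G I}

noncomputable instance {V : Type*} [Fintype V] [LinearOrder V] (G : SimpleGraph V) :
    Fintype (IndepSet G) := by
  classical exact Subtype.fintype _

instance {V : Type*} [LinearOrder V] (G : SimpleGraph V) : DecidableEq (IndepSet G) := by
  unfold IndepSet; infer_instance

/-- The Hilbert space `ℋ_G` of the hard-core fermion model: one orthonormal basis state
`|I⟩` for every independent set `I` of `G`. -/
noncomputable abbrev FockSpace {V : Type*} [Fintype V] [LinearOrder V] (G : SimpleGraph V) :=
  EuclideanSpace ℂ (IndepSet G)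

/-- The fermionic sign `ε(v, I) = (−1)^{#{w ∈ I : w < v}}`. -/
def fsign {V : Type*} [LinearOrder V] (I : Finset V) (v : V) : ℂ :=
  (-1) ^ (I.filter (· < v)).card

/-- The supercharge `Q`, with `Q|I⟩ = Σ_v ε(v,I) |I ∪ {v}⟩` over vertices `v ∉ I` such that
`I ∪ {v}` is independent; equivalently `(Qψ)(J) = Σ_{v ∈ J} ε(v, J∖{v}) ψ(J∖{v})`. -/
noncomputable def supercharge {V : Type*} [Fintype V] [LinearOrder V] (G : SimpleGraph V) :
    FockSpace G →ₗ[ℂ] FockSpace G where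
  toFun ψ := WithLp.toLp 2 fun J => ∑ v ∈ J.1, fsign (J.1.erase v) v *
      ψ ⟨J.1.erase v, J.2.mono (Finset.erase_subset v J.1)⟩
  map_add' ψ φ := by
    ext J
    simp only [WithLp.ofLp_add, Pi.add_apply]
    rw [← Finset.sum_add_distrib]
    exact Finset.sum_congr rfl fun v _ => mul_add _ _ _
  map_smul' c ψ := by
    ext J
    simp only [WithLp.ofLp_smul, Pi.smul_apply, RingHom.id_apply, smul_eq_mul, Finset.mul_sum]
    exact Finset.sum_congr rfl fun v _ => (mul_left_comm c _ _).symm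

/-- The Hamiltonian `H = Q Q† + Q† Q` of the supersymmetric hard-core fermion model. -/
noncomputable def hamiltonian {V : Type*} [Fintype V] [LinearOrder V] (G : SimpleGraph V) :
    FockSpace G →ₗ[ℂ] FockSpace G :=
  supercharge G ∘ₗ LinearMap.adjoint (supercharge G)
    + LinearMap.adjoint (supercharge G) ∘ₗ supercharge G

/-- The fermion-number operator `F`, with `F|I⟩ = |I| · |I⟩`. -/
noncomputable def numberOp {V : Type*} [Fintype V] [LinearOrder V] (G : SimpleGraph V) :
    FockSpace G →ₗ[ℂ] FockSpace G where
  toFun ψ := WithLp.toLp 2 fun I => (I.1.card : ℂ) * ψ I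
  map_add' ψ φ := by ext I; simp [mul_add]
  map_smul' c ψ := by ext I; simp [mul_left_comm]

/-- The bosonic subspace: the span of the basis states `|I⟩` with `|I|` even. -/
noncomputable def bosonic {V : Type*} [Fintype V] [LinearOrder V] (G : SimpleGraph V) :
    Submodule ℂ (FockSpace G) :=
  Submodule.span ℂ
    {e : FockSpace G | ∃ I : IndepSet G, Even I.1.card ∧ e = EuclideanSpace.single I 1}

/-- The fermionic subspace: the span of the basis states `|I⟩` with `|I|` odd. -/
noncomputable def fermionic {V : Type*} [Fintype V] [LinearOrder V] (G : SimpleGraph V) :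
    Submodule ℂ (FockSpace G) :=
  Submodule.span ℂ
    {e : FockSpace G | ∃ I : IndepSet G, Odd I.1.card ∧ e = EuclideanSpace.single I 1}

/-! ### The torus square lattice and Jonsson's rhombus tilings -/

/-- The lattice `Λ = ℤu + ℤv ⊆ ℤ²`. -/
def lat (u v : ℤ × ℤ) : AddSubgroup (ℤ × ℤ) := AddSubgroup.closure {u, v}

/-- The torus square-lattice graph `G_{u,v}` on `ℤ²/Λ`: two distinct classes are adjacent
whenever they have representatives differing by `(1,0)` or `(0,1)`. -/
def torusGraph (u v : ℤ × ℤ) : SimpleGraph ((ℤ × ℤ) ⧸ lat u v) where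
  Adj a b := a ≠ b ∧
    (a - b = ((1, 0) : ℤ × ℤ) ∨ b - a = ((1, 0) : ℤ × ℤ) ∨
     a - b = ((0, 1) : ℤ × ℤ) ∨ b - a = ((0, 1) : ℤ × ℤ))
  symm := by
    refine ⟨?_⟩
    rintro a b ⟨hne, h⟩
    exact ⟨hne.symm, by tauto⟩
  loopless := ⟨fun a h => h.1 rfl⟩

/-- A rhombus placed in the plane: a corner in `ℤ²` together with one of the four Jonsson
rhombus kinds. -/
structure PlacedRhombus where
  corner : ℤ × ℤ
  kind : Fin 4

/-- First edge vectors of the four Jonsson rhombi. -/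
def edgeVec1 : Fin 4 → ℤ × ℤ := ![(1, 2), (2, 1), (1, 2), (2, 1)]

/-- Second edge vectors of the four Jonsson rhombi. -/
def edgeVec2 : Fin 4 → ℤ × ℤ := ![(-1, 2), (2, -1), (2, -1), (-1, 2)]

/-- Embedding of `ℤ²` into `ℝ²`. -/
def toR (p : ℤ × ℤ) : ℝ × ℝ := ((p.1 : ℝ), (p.2 : ℝ))

/-- The closed parallelogram covered by a placed rhombus. -/
def closedCell (r : PlacedRhombus) : Set (ℝ × ℝ) :=
  {x | ∃ s t : ℝ, 0 ≤ s ∧ s ≤ 1 ∧ 0 ≤ t ∧ t ≤ 1 ∧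
    x = toR r.corner + s • toR (edgeVec1 r.kind) + t • toR (edgeVec2 r.kind)}

/-- The open parallelogram (interior) covered by a placed rhombus. -/
def openCell (r : PlacedRhombus) : Set (ℝ × ℝ) :=
  {x | ∃ s t : ℝ, 0 < s ∧ s < 1 ∧ 0 < t ∧ t < 1 ∧
    x = toR r.corner + s • toR (edgeVec1 r.kind) + t • toR (edgeVec2 r.kind)}

/-- Translation of a placed rhombus by a lattice vector. -/
def rTranslate (w : ℤ × ℤ) (r : PlacedRhombus) : PlacedRhombus :=
  ⟨r.corner + w, r.kind⟩

/-- A rhombus tiling of the torus `ℝ²/Λ`: a `Λ`-invariant family of Jonsson rhombi with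
pairwise disjoint interiors whose union is all of `ℝ²`. -/
def IsTiling (Λ : AddSubgroup (ℤ × ℤ)) (T : Set PlacedRhombus) : Prop :=
  (∀ w ∈ Λ, ∀ r ∈ T, rTranslate w r ∈ T) ∧
  (∀ r ∈ T, ∀ r' ∈ T, r ≠ r' → openCell r ∩ openCell r' = ∅) ∧
  (⋃ r ∈ T, closedCell r) = Set.univ

/-- The number of tiles of a tiling, counted modulo `Λ`. -/
noncomputable def numTiles (Λ : AddSubgroup (ℤ × ℤ)) (T : Set PlacedRhombus) : ℕ :=
  Nat.card (Quot (fun r r' : T => ∃ w ∈ Λ, rTranslate w (r' : PlacedRhombus) = r))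

/-- `t_b`: the number of rhombus tilings of the torus `ℝ²/Λ` with an even number of tiles. -/
noncomputable def evenTilings (Λ : AddSubgroup (ℤ × ℤ)) : ℕ :=
  Nat.card {T : Set PlacedRhombus // IsTiling Λ T ∧ Even (numTiles Λ T)}

/-- `t_f`: the number of rhombus tilings of the torus `ℝ²/Λ` with an odd number of tiles. -/
noncomputable def oddTilings (Λ : AddSubgroup (ℤ × ℤ)) : ℕ :=
  Nat.card {T : Set PlacedRhombus // IsTiling Λ T ∧ Odd (numTiles Λ T)}

/-- `θ_k = 2` if `3 ∣ k`, and `θ_k = −1` otherwise. -/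
def theta (k : ℤ) : ℤ := if (3 : ℤ) ∣ k then 2 else -1



section SignSums

/-- Sums of signs over a family stable under toggling one fixed element vanish. -/
theorem sum_toggle_fixed {V : Type*} [Fintype V] [DecidableEq V] (Q : Finset V → Prop)
    [DecidablePred Q] (x : V)
    (h : ∀ σ, x ∉ σ → (Q σ ↔ Q (insert x σ))) :
    ∑ σ : Finset V with Q σ, (-1 : ℤ) ^ σ.card = 0 := by
  have key : ∀ σ : Finset V, Q σ ↔ Q (if x ∈ σ then σ.erase x else insert x σ) := by
    intro σ
    by_cases hx : x ∈ σ
    · rw [if_pos hx, h (σ.erase x) (Finset.notMem_erase x σ), Finset.insert_erase hx]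
    · rw [if_neg hx, h σ hx]
  refine Finset.sum_involution (fun σ _ => if x ∈ σ then σ.erase x else insert x σ) ?_ ?_ ?_ ?_
  · intro σ _
    by_cases hx : x ∈ σ
    · simp only [hx, if_true]
      rw [← Finset.card_erase_add_one hx, pow_succ]
      ring
    · simp only [hx, if_false]
      rw [Finset.card_insert_of_notMem hx, pow_succ]
      ring
  · intro σ _ _
    by_cases hx : x ∈ σ
    · simp only [hx, if_true]
      intro he
      have := Finset.notMem_erase x σ
      rw [he] at this
      exact this hx
    · simp only [hx, if_false]
      intro he
      exact hx (he ▸ Finset.mem_insert_self x σ)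
  · intro σ hσ
    rw [Finset.mem_filter] at hσ ⊢
    exact ⟨Finset.mem_univ _, (key σ).1 hσ.2⟩
  · intro σ _
    by_cases hx : x ∈ σ
    · simp [hx]
    · simp [hx]

/-- Sums of signs over a family in which every member comes with a nonempty set of elements
that may be toggled freely vanish. -/
theorem sum_toggle_var {V : Type*} [Fintype V] [DecidableEq V] (Q : Finset V → Prop)
    [DecidablePred Q] (T : Finset V → Finset V)
    (hT : ∀ σ, Q σ → (T σ).Nonempty)
    (h : ∀ σ τ x, Q σ → x ∈ T σ → (∀ y, y ≠ x → (y ∈ σ ↔ y ∈ τ)) → Q τ ∧ T τ = T σ) :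
    ∑ σ : Finset V with Q σ, (-1 : ℤ) ^ σ.card = 0 := by
  have h1 : ∀ T₀ : Finset V, ∑ σ : Finset V with (Q σ ∧ T σ = T₀), (-1 : ℤ) ^ σ.card = 0 := by
    intro T₀
    by_cases hne : T₀.Nonempty
    · obtain ⟨x, hx⟩ := hne
      apply sum_toggle_fixed (fun σ => Q σ ∧ T σ = T₀) x
      intro σ hxσ
      constructor
      · rintro ⟨hQ, hTσ⟩
        have := h σ (insert x σ) x hQ (hTσ ▸ hx) (by intro y hy; simp [hy])
        exact ⟨this.1, this.2.trans hTσ⟩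
      · rintro ⟨hQ, hTσ⟩
        have := h (insert x σ) σ x hQ (hTσ ▸ hx) (by intro y hy; simp [hy])
        exact ⟨this.1, this.2.trans hTσ⟩
    · apply Finset.sum_eq_zero
      intro σ hσ
      rw [Finset.mem_filter] at hσ
      exact absurd (hσ.2.2 ▸ hT σ hσ.2.1) hne
  rw [← Finset.sum_fiberwise (s := Finset.univ.filter Q) (g := T)]
  apply Finset.sum_eq_zero
  intro T₀ _
  rw [← h1 T₀, Finset.filter_filter]

/-- The alternating sum over the subsets of a finite set. -/
theorem sum_powerset_sign {V : Type*} [DecidableEq V] (M : Finset V) :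
    ∑ K ∈ M.powerset, (-1 : ℤ) ^ K.card = if M = ∅ then 1 else 0 :=
  Finset.sum_powerset_neg_one_pow_card

/-- The Moebius transform of a function on finite sets. -/
def moeb {V : Type*} (g : Finset V → ℤ) (K : Finset V) : ℤ :=
  ∑ K' ∈ K.powerset, (-1) ^ K.card * (-1) ^ K'.card * g K'

theorem moeb_inversion {V : Type*} [Fintype V] [DecidableEq V] (g : Finset V → ℤ) (M : Finset V) :
    ∑ K ∈ M.powerset, moeb g K = g M := by
  unfold moeb
  rw [Finset.sum_comm' (t' := M.powerset) (s' := fun K' => Finset.univ.filter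
    (fun K => K' ⊆ K ∧ K ⊆ M))]
  · rw [Finset.sum_eq_single M]
    · rw [show (Finset.univ.filter fun K => M ⊆ K ∧ K ⊆ M) = {M} from by
        ext K
        simp only [Finset.mem_filter, Finset.mem_univ, true_and, Finset.mem_singleton]
        constructor
        · rintro ⟨h1, h2⟩
          exact Finset.Subset.antisymm h2 h1
        · rintro rfl
          exact ⟨Finset.Subset.refl _, Finset.Subset.refl _⟩]
      rw [Finset.sum_singleton, ← mul_pow]
      simp
    · intro K' hK' hne
      rw [Finset.mem_powerset] at hK'
      obtain ⟨x, hxM, hxK'⟩ : ∃ x ∈ M, x ∉ K' := by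
        by_contra hcon
        push Not at hcon
        exact hne (Finset.Subset.antisymm hK' hcon)
      have := sum_toggle_fixed (fun K => K' ⊆ K ∧ K ⊆ M) x (by
        intro σ hxσ
        constructor
        · rintro ⟨h1, h2⟩
          exact ⟨h1.trans (Finset.subset_insert _ _), Finset.insert_subset hxM h2⟩
        · rintro ⟨h1, h2⟩
          refine ⟨?_, (Finset.subset_insert _ _).trans h2⟩
          intro y hy
          have := h1 hy
          rw [Finset.mem_insert] at this
          rcases this with rfl | h
          · exact absurd hy hxK'
          · exact h)
      rw [← Finset.sum_mul, ← Finset.sum_mul, this]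
      simp
    · intro h
      simp at h
  · intro K K'
    simp only [Finset.mem_powerset, Finset.mem_filter, Finset.mem_univ, true_and]
    constructor
    · rintro ⟨h1, h2⟩
      exact ⟨⟨h2, h1⟩, h2.trans h1⟩
    · rintro ⟨⟨h1, h2⟩, _⟩
      exact ⟨h2, h1⟩

end SignSums


section Acyclic

/-- `M` contains a nonempty subset in which everyone has a child (`+a` or `+c`). -/
def Cyc {V : Type*} [AddCommGroup V] (a c : V) (M : Finset V) : Prop :=
  ∃ N ⊆ M, N.Nonempty ∧ ∀ y ∈ N, y + a ∈ N ∨ y + c ∈ N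

theorem Cyc.mono {V : Type*} [AddCommGroup V] {a c : V} {M M' : Finset V} (h : Cyc a c M)
    (hM : M ⊆ M') : Cyc a c M' := by
  obtain ⟨N, h1, h2, h3⟩ := h
  exact ⟨N, h1.trans hM, h2, h3⟩

theorem cyc_insert_parentless {V : Type*} [AddCommGroup V] [DecidableEq V] {a c : V}
    (ha : a ≠ 0) (hc : c ≠ 0) {M : Finset V} {x : V} (h1 : x - a ∉ M) (h2 : x - c ∉ M)
    (h : Cyc a c (insert x M)) : Cyc a c M := by
  obtain ⟨N, hN, ⟨y, hy⟩, hch⟩ := h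
  refine ⟨N.erase x, ?_, ?_, ?_⟩
  · intro z hz
    rw [Finset.mem_erase] at hz
    have := hN hz.2
    rw [Finset.mem_insert] at this
    tauto
  · by_cases hyx : y = x
    · subst hyx
      rcases hch y hy with h | h
      · exact ⟨y + a, Finset.mem_erase.2 ⟨by simpa using ha, h⟩⟩
      · exact ⟨y + c, Finset.mem_erase.2 ⟨by simpa using hc, h⟩⟩
    · exact ⟨y, Finset.mem_erase.2 ⟨hyx, hy⟩⟩
  · intro z hz
    rw [Finset.mem_erase] at hz
    have hzM : z ∈ M := by
      have := hN hz.2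
      rw [Finset.mem_insert] at this
      tauto
    have e1 : z + a ≠ x := by
      rintro rfl
      simp [hzM] at h1
    have e2 : z + c ≠ x := by
      rintro rfl
      simp [hzM] at h2
    rcases hch z hz.2 with h | h
    · exact Or.inl (Finset.mem_erase.2 ⟨e1, h⟩)
    · exact Or.inr (Finset.mem_erase.2 ⟨e2, h⟩)

theorem cyc_insert_childless {V : Type*} [AddCommGroup V] [DecidableEq V] {a c : V}
    (ha : a ≠ 0) (hc : c ≠ 0) {M : Finset V} {x : V} (h1 : x + a ∉ M) (h2 : x + c ∉ M)
    (h : Cyc a c (insert x M)) : Cyc a c M := by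
  obtain ⟨N, hN, hne, hch⟩ := h
  have hx : x ∉ N := by
    intro hx
    rcases hch x hx with h | h
    · have := hN h
      rw [Finset.mem_insert] at this
      rcases this with h | h
      · exact ha (by simpa using h)
      · exact h1 h
    · have := hN h
      rw [Finset.mem_insert] at this
      rcases this with h | h
      · exact hc (by simpa using h)
      · exact h2 h
  refine ⟨N, ?_, hne, hch⟩
  intro z hz
  have := hN hz
  rw [Finset.mem_insert] at this
  rcases this with rfl | h
  · exact absurd hz hx
  · exact h

/-- Independence in the cycle graph on `ZMod d`. -/
def CI {d : ℕ} (J : Finset (ZMod d)) : Prop := ∀ j ∈ J, j + 1 ∉ J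

open Classical in
/-- Alternating sum over independent sets of the subgraph of the cycle graph induced by `S`. -/
noncomputable def zc {d : ℕ} (S : Finset (ZMod d)) : ℤ := ∑ J ∈ S.powerset with CI J, (-1) ^ J.card

open Classical in
/-- Remove the closed neighbourhood of `J` from `S`. -/
noncomputable def remN {d : ℕ} (S J : Finset (ZMod d)) : Finset (ZMod d) :=
  S.filter fun j => j ∉ J ∧ j + 1 ∉ J ∧ j - 1 ∉ J

open Classical in
theorem zc_rec {d : ℕ} (S : Finset (ZMod d)) :
    ∑ J ∈ S.powerset with CI J, zc (remN S J) = 1 := by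
  unfold zc
  have h1 : ∑ I ∈ S.powerset with CI I, ∑ K ∈ I.powerset, (-1 : ℤ) ^ K.card = 1 := by
    simp_rw [sum_powerset_sign]
    rw [Finset.sum_ite_eq', if_pos]
    rw [Finset.mem_filter]
    exact ⟨Finset.empty_mem_powerset _, by simp [CI]⟩
  refine Eq.trans ?_ h1
  rw [Finset.sum_sigma', Finset.sum_sigma']
  refine Finset.sum_nbij' (fun p => ⟨p.1 ∪ p.2, p.2⟩) (fun p => ⟨p.1 \ p.2, p.2⟩) ?_ ?_ ?_ ?_ ?_
  · rintro ⟨J, K⟩ h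
    simp only [Finset.mem_sigma, Finset.mem_filter, Finset.mem_powerset, remN] at h ⊢
    obtain ⟨⟨hJ, hJi⟩, hK, hKi⟩ := h
    refine ⟨⟨Finset.union_subset hJ (hK.trans (Finset.filter_subset _ _)), ?_⟩,
      Finset.subset_union_right⟩
    intro j hj hj1
    rw [Finset.mem_union] at hj hj1
    rcases hj with hj | hj <;> rcases hj1 with hj1 | hj1
    · exact hJi j hj hj1
    · have := (Finset.mem_filter.1 (hK hj1)).2.2.2
      simp [hj] at this
    · exact (Finset.mem_filter.1 (hK hj)).2.2.1 hj1
    · exact hKi j hj hj1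
  · rintro ⟨I, K⟩ h
    simp only [Finset.mem_sigma, Finset.mem_filter, Finset.mem_powerset, remN] at h ⊢
    obtain ⟨⟨hI, hIi⟩, hK⟩ := h
    refine ⟨⟨Finset.sdiff_subset.trans hI, ?_⟩, ?_, ?_⟩
    · intro j hj hj1
      exact hIi j (Finset.sdiff_subset hj) (Finset.sdiff_subset hj1)
    · intro k hk
      rw [Finset.mem_filter]
      refine ⟨hI (hK hk), ?_, ?_, ?_⟩
      · simp [hk]
      · intro h
        exact hIi k (hK hk) (Finset.sdiff_subset h)
      · intro h
        have := hIi _ (Finset.sdiff_subset h)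
        simp only [sub_add_cancel] at this
        exact this (hK hk)
    · intro j hj hj1
      exact hIi j (hK hj) (hK hj1)
  · rintro ⟨J, K⟩ h
    simp only [Finset.mem_sigma, Finset.mem_filter, Finset.mem_powerset, remN] at h ⊢
    have : (J ∪ K) \ K = J := by
      ext j
      simp only [Finset.mem_sdiff, Finset.mem_union]
      constructor
      · tauto
      · intro hj
        exact ⟨Or.inl hj, fun hk => (Finset.mem_filter.1 (h.2.1 hk)).2.1 hj⟩
    rw [this]
  · rintro ⟨I, K⟩ h
    simp only [Finset.mem_sigma, Finset.mem_filter, Finset.mem_powerset] at h ⊢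
    rw [Finset.sdiff_union_of_subset h.2]
  · intro p _
    rfl

open Classical in
theorem zc_unique {d : ℕ} (e : Finset (ZMod d) → ℤ)
    (he : ∀ S, ∑ J ∈ S.powerset with CI J, e (remN S J) = 1) (S : Finset (ZMod d)) :
    e S = zc S := by
  induction S using Finset.strongInduction with
  | H S ih =>
    have h1 := he S
    have h2 := zc_rec S
    have hmem : (∅ : Finset (ZMod d)) ∈ S.powerset.filter CI := by simp [CI]
    rw [← Finset.add_sum_erase _ _ hmem] at h1 h2
    have h0 : remN S ∅ = S := by simp [remN]
    rw [h0] at h1 h2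
    have h3 : ∑ J ∈ (S.powerset.filter CI).erase ∅, e (remN S J)
        = ∑ J ∈ (S.powerset.filter CI).erase ∅, zc (remN S J) := by
      apply Finset.sum_congr rfl
      intro J hJ
      apply ih
      simp only [Finset.mem_erase, Finset.mem_filter, Finset.mem_powerset] at hJ
      obtain ⟨j, hj⟩ := Finset.nonempty_iff_ne_empty.2 hJ.1
      refine (Finset.ssubset_iff_of_subset (Finset.filter_subset _ _)).2 ⟨j, hJ.2.1 hj, ?_⟩
      simp [remN, hj]
    linarith

open Classical in
/-- The alternating sum over acyclic admissible sets equals that of a cycle graph. -/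
theorem acyc_sum {V : Type*} [AddCommGroup V] [Fintype V] {d : ℕ} [NeZero d] {a c t : V}
    (ha : a ≠ 0) (hc : c ≠ 0) (B : Finset V) (hB : B.Nonempty) (ok : Finset V → Prop) (k : V → ZMod d)
    (hBt : ∀ y ∈ B, y + t ∈ B) (hBa : ∀ y ∈ B, y - a ∈ B) (hBc : ∀ y ∈ B, y - c ∈ B)
    (hka : ∀ y, k (y - a) = k y + 1) (hkc : ∀ y, k (y - c) = k y - 1)
    (hkt : ∀ y, k (y + t) = k y)
    (htr : ∀ p ∈ B, ∀ q ∈ B, k p = k q → ∃ n : ℕ, q = p + n • t)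
    (ok0 : ok ∅) (okm : ∀ σ τ, ok σ → τ ⊆ σ → ok τ)
    (okt : ∀ σ ⊆ B, ok σ → ∀ p ∈ σ, p + a ∉ σ → p + c ∉ σ →
      ok (insert (p + t) σ) ∧ p + t - a ∉ σ ∧ p + t - c ∉ σ)
    (oku : ∀ τ ⊆ B, ok τ → ∀ J : Finset (ZMod d), CI J →
      (∀ y ∈ τ, k y ∉ J ∧ k y + 1 ∉ J ∧ k y - 1 ∉ J) → ok (B.filter (fun y => k y ∈ J) ∪ τ)) :
    ∑ σ : Finset V with (σ ⊆ B ∧ ok σ ∧ ¬ Cyc a c σ), (-1 : ℤ) ^ σ.card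
      = zc (Finset.univ : Finset (ZMod d)) := by
  set e : Finset (ZMod d) → ℤ := fun S =>
    ∑ σ : Finset V with (σ ⊆ B.filter (fun y => k y ∈ S) ∧ ok σ ∧ ¬ Cyc a c σ),
      (-1 : ℤ) ^ σ.card with he
  suffices h : ∀ S, ∑ J ∈ S.powerset with CI J, e (remN S J) = 1 by
    have := zc_unique e h Finset.univ
    rw [← this, he]
    simp
  intro S
  -- childless elements
  set ch : Finset V → Finset V := fun σ => σ.filter (fun y => y + a ∉ σ ∧ y + c ∉ σ) with hch
  have step1 : ∑ σ : Finset V with (σ ⊆ B.filter (fun y => k y ∈ S) ∧ ok σ ∧ ¬ Cyc a c σ),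
      ∑ M ∈ (ch σ).powerset, (-1 : ℤ) ^ σ.card * (-1) ^ M.card = 1 := by
    have : ∀ σ ∈ (Finset.univ.filter
        (fun σ : Finset V => σ ⊆ B.filter (fun y => k y ∈ S) ∧ ok σ ∧ ¬ Cyc a c σ)),
        ∑ M ∈ (ch σ).powerset, (-1 : ℤ) ^ σ.card * (-1) ^ M.card = if σ = ∅ then 1 else 0 := by
      intro σ hσ
      rw [← Finset.mul_sum, sum_powerset_sign]
      by_cases h0 : σ = ∅
      · simp [h0, hch]
      · have : ch σ ≠ ∅ := by
          intro hemp
          rw [Finset.mem_filter] at hσ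
          apply hσ.2.2.2
          refine ⟨σ, Finset.Subset.refl _, Finset.nonempty_iff_ne_empty.2 h0, ?_⟩
          intro y hy
          by_contra hcon
          push Not at hcon
          have : y ∈ ch σ := Finset.mem_filter.2 ⟨hy, hcon⟩
          rw [hemp] at this
          simp at this
        simp [this, h0]
    rw [Finset.sum_congr rfl this, Finset.sum_ite_eq']
    have h0 : ¬ Cyc a c (∅ : Finset V) := by
      rintro ⟨N, h1, h2, _⟩
      obtain ⟨y, hy⟩ := h2
      simpa using h1 hy
    simp [ok0, h0]
  rw [Finset.sum_comm' (t' := Finset.univ) (s' := fun M => Finset.univ.filter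
    (fun σ => (σ ⊆ B.filter (fun y => k y ∈ S) ∧ ok σ ∧ ¬ Cyc a c σ) ∧ M ⊆ ch σ))
    (by intro σ M; simp)] at step1
  rw [← step1]
  -- only unions of full diagonals contribute
  have hzero : ∀ M : Finset V, (∃ p ∈ M, p + t ∉ M) →
      ∑ σ : Finset V with ((σ ⊆ B.filter (fun y => k y ∈ S) ∧ ok σ ∧ ¬ Cyc a c σ) ∧ M ⊆ ch σ),
        (-1 : ℤ) ^ σ.card = 0 := by
    rintro M ⟨p, hp, hpt⟩
    apply sum_toggle_fixed (fun σ : Finset V =>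
      (σ ⊆ B.filter (fun y => k y ∈ S) ∧ ok σ ∧ ¬ Cyc a c σ) ∧ M ⊆ ch σ) (p + t)
    intro σ hx
    constructor
    · rintro ⟨⟨h1, h2, h3⟩, h4⟩
      have hpc := Finset.mem_filter.1 (h4 hp)
      have hσB : σ ⊆ B := h1.trans (Finset.filter_subset _ _)
      obtain ⟨o1, o2, o3⟩ := okt σ hσB h2 p hpc.1 hpc.2.1 hpc.2.2
      refine ⟨⟨?_, o1, fun hcy => h3 (cyc_insert_parentless ha hc o2 o3 hcy)⟩, ?_⟩
      · refine Finset.insert_subset ?_ h1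
        have := Finset.mem_filter.1 (h1 hpc.1)
        exact Finset.mem_filter.2 ⟨hBt _ this.1, by rw [hkt]; exact this.2⟩
      · intro m hm
        have := Finset.mem_filter.1 (h4 hm)
        refine Finset.mem_filter.2 ⟨Finset.mem_insert_of_mem this.1, ?_, ?_⟩
        · intro hh
          rcases Finset.mem_insert.1 hh with hh | hh
          · rw [← hh] at o2
            simp [this.1] at o2
          · exact this.2.1 hh
        · intro hh
          rcases Finset.mem_insert.1 hh with hh | hh
          · rw [← hh] at o3
            simp [this.1] at o3
          · exact this.2.2 hh
    · rintro ⟨⟨h1, h2, h3⟩, h4⟩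
      have hs := Finset.subset_insert (p + t) σ
      refine ⟨⟨hs.trans h1, okm _ _ h2 hs, fun hcy => h3 (hcy.mono hs)⟩, ?_⟩
      intro m hm
      have := Finset.mem_filter.1 (h4 hm)
      refine Finset.mem_filter.2 ⟨?_, fun hh => this.2.1 (hs hh), fun hh => this.2.2 (hs hh)⟩
      rcases Finset.mem_insert.1 this.1 with hh | hh
      · exact absurd (hh ▸ hm) hpt
      · exact hh
  set D : Finset (ZMod d) → Finset V := fun J => B.filter (fun y => k y ∈ J) with hD
  have hsurj : ∀ j : ZMod d, ∃ y ∈ B, k y = j := by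
    intro j
    obtain ⟨y, hy⟩ := hB
    have h1 : ∀ n : ℕ, ∃ z ∈ B, k z = k y + n := by
      intro n
      induction n with
      | zero => exact ⟨y, hy, by simp⟩
      | succ n ih =>
        obtain ⟨z, hz, hkz⟩ := ih
        exact ⟨z - a, hBa z hz, by rw [hka, hkz]; push_cast; ring⟩
    obtain ⟨z, hz, hkz⟩ := h1 (j - k y).val
    exact ⟨z, hz, by rw [hkz]; simp⟩
  have hinj : Function.Injective D := by
    have hsub : ∀ J J', D J = D J' → J ⊆ J' := by
      intro J J' h j hj
      obtain ⟨y, hy, hky⟩ := hsurj j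
      have : y ∈ D J := Finset.mem_filter.2 ⟨hy, hky ▸ hj⟩
      rw [h] at this
      exact hky ▸ (Finset.mem_filter.1 this).2
    intro J J' h
    exact Finset.Subset.antisymm (hsub _ _ h) (hsub _ _ h.symm)
  symm
  rw [← Finset.sum_subset (Finset.subset_univ ((S.powerset.filter CI).image D)),
    Finset.sum_image (fun J _ J' _ h => hinj h)]
  · apply Finset.sum_congr rfl
    intro J hJ
    rw [Finset.mem_filter, Finset.mem_powerset] at hJ
    obtain ⟨hJS, hJi⟩ := hJ
    have hcl : ∀ τ : Finset V, (∀ y ∈ τ, k y ∉ J ∧ k y + 1 ∉ J ∧ k y - 1 ∉ J) → ∀ y ∈ D J,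
        y + a ∉ D J ∪ τ ∧ y + c ∉ D J ∪ τ := by
      intro τ hτ y hy
      have hy2 := (Finset.mem_filter.1 hy).2
      have e1 : k y = k (y + a) + 1 := by rw [← hka]; simp
      have e2 : k y = k (y + c) - 1 := by rw [← hkc]; simp
      constructor
      · intro h
        rcases Finset.mem_union.1 h with h | h
        · exact hJi _ (Finset.mem_filter.1 h).2 (e1 ▸ hy2)
        · exact (hτ _ h).2.1 (e1 ▸ hy2)
      · intro h
        rcases Finset.mem_union.1 h with h | h
        · have e3 : k (y + c) = k y + 1 := by rw [e2]; ring
          exact hJi _ hy2 (e3 ▸ (Finset.mem_filter.1 h).2)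
        · exact (hτ _ h).2.2 (e2 ▸ hy2)
    have hrem : ∀ τ : Finset V, τ ⊆ D (remN S J) → (∀ y ∈ τ, k y ∉ J ∧ k y + 1 ∉ J ∧ k y - 1 ∉ J) := by
      intro τ hτ y hy
      exact (Finset.mem_filter.1 (Finset.mem_filter.1 (hτ hy)).2).2
    rw [he]
    refine Finset.sum_nbij' (fun σ => σ \ D J) (fun τ => D J ∪ τ) ?_ ?_ ?_ ?_ ?_
    · intro σ hσ
      simp only [Finset.mem_filter, Finset.mem_univ, true_and] at hσ ⊢
      obtain ⟨⟨h1, h2, h3⟩, h4⟩ := hσ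
      refine ⟨?_, okm _ _ h2 Finset.sdiff_subset, fun hcy => h3 (hcy.mono Finset.sdiff_subset)⟩
      intro y hy
      rw [Finset.mem_sdiff] at hy
      have hyB := Finset.mem_filter.1 (h1 hy.1)
      refine Finset.mem_filter.2 ⟨hyB.1, Finset.mem_filter.2 ⟨hyB.2, ?_, ?_, ?_⟩⟩
      · intro h
        exact hy.2 (Finset.mem_filter.2 ⟨hyB.1, h⟩)
      · intro h
        have hm : y - a ∈ D J := Finset.mem_filter.2 ⟨hBa _ hyB.1, by rw [hka]; exact h⟩
        have := (Finset.mem_filter.1 (h4 hm)).2.1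
        simp [hy.1] at this
      · intro h
        have hm : y - c ∈ D J := Finset.mem_filter.2 ⟨hBc _ hyB.1, by rw [hkc]; exact h⟩
        have := (Finset.mem_filter.1 (h4 hm)).2.2
        simp [hy.1] at this
    · intro τ hτ
      simp only [Finset.mem_filter, Finset.mem_univ, true_and] at hτ ⊢
      obtain ⟨h1, h2, h3⟩ := hτ
      have hτB : τ ⊆ B := h1.trans (Finset.filter_subset _ _)
      have hr := hrem τ h1
      refine ⟨⟨?_, oku τ hτB h2 J hJi hr, ?_⟩, ?_⟩
      · refine Finset.union_subset ?_ ?_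
        · intro y hy
          have := Finset.mem_filter.1 hy
          exact Finset.mem_filter.2 ⟨this.1, hJS this.2⟩
        · intro y hy
          have := Finset.mem_filter.1 (h1 hy)
          exact Finset.mem_filter.2 ⟨this.1, (Finset.mem_filter.1 this.2).1⟩
      · rintro ⟨N, n1, n2, n3⟩
        apply h3
        refine ⟨N, ?_, n2, n3⟩
        intro y hy
        rcases Finset.mem_union.1 (n1 hy) with h | h
        · have := hcl τ hr y h
          rcases n3 y hy with hh | hh
          · exact absurd (n1 hh) this.1
          · exact absurd (n1 hh) this.2
        · exact h
      · intro y hy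
        exact Finset.mem_filter.2 ⟨Finset.mem_union_left _ hy, hcl τ hr y hy⟩
    · intro σ hσ
      simp only [Finset.mem_filter, Finset.mem_univ, true_and] at hσ
      exact Finset.union_sdiff_of_subset (hσ.2.trans (Finset.filter_subset _ _))
    · intro τ hτ
      simp only [Finset.mem_filter, Finset.mem_univ, true_and] at hτ
      have hr := hrem τ hτ.1
      ext y
      simp only [Finset.mem_sdiff, Finset.mem_union]
      constructor
      · tauto
      · intro hy
        exact ⟨Or.inr hy, fun h => (hr y hy).1 (Finset.mem_filter.1 h).2⟩
    · intro σ hσ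
      simp only [Finset.mem_filter, Finset.mem_univ, true_and] at hσ
      have hsub : D J ⊆ σ := hσ.2.trans (Finset.filter_subset _ _)
      have hcard := Finset.card_sdiff_add_card_eq_card hsub
      rw [← hcard, pow_add, mul_assoc, ← pow_add, ← two_mul, pow_mul]
      simp
  · intro M _ hM
    rw [← Finset.sum_mul]
    by_cases hcl : ∃ p ∈ M, p + t ∉ M
    · rw [hzero M hcl, zero_mul]
    · push Not at hcl
      rw [Finset.sum_eq_zero, zero_mul]
      intro σ hσ
      exfalso
      simp only [Finset.mem_filter, Finset.mem_univ, true_and] at hσ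
      obtain ⟨⟨h1, h2, h3⟩, h4⟩ := hσ
      apply hM
      have hMσ : M ⊆ σ := h4.trans (Finset.filter_subset _ _)
      have hn : ∀ n : ℕ, ∀ p ∈ M, p + n • t ∈ M := by
        intro n
        induction n with
        | zero => intro p hp; simpa using hp
        | succ n ih =>
          intro p hp
          rw [succ_nsmul, ← add_assoc]
          exact hcl _ (ih p hp)
      have hMD : D (M.image k) = M := by
        ext y
        simp only [hD, Finset.mem_filter, Finset.mem_image]
        constructor
        · rintro ⟨hy, p, hp, hpy⟩
          obtain ⟨n, rfl⟩ := htr p (Finset.mem_filter.1 (h1 (hMσ hp))).1 y hy hpy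
          exact hn n p hp
        · intro hy
          exact ⟨(Finset.mem_filter.1 (h1 (hMσ hy))).1, y, hy, rfl⟩
      refine Finset.mem_image.2 ⟨M.image k, Finset.mem_filter.2 ⟨Finset.mem_powerset.2 ?_, ?_⟩, hMD⟩
      · intro j hj
        obtain ⟨p, hp, rfl⟩ := Finset.mem_image.1 hj
        exact (Finset.mem_filter.1 (h1 (hMσ hp))).2
      · intro j hj hj1
        obtain ⟨p, hp, rfl⟩ := Finset.mem_image.1 hj
        have hm : p - a ∈ D (M.image k) := Finset.mem_filter.2
          ⟨hBa _ (Finset.mem_filter.1 (h1 (hMσ hp))).1, by rw [hka]; exact hj1⟩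
        rw [hMD] at hm
        have := (Finset.mem_filter.1 (h4 hm)).2.1
        simp [hMσ hp] at this

end Acyclic


section CycleValue

open Classical in
theorem zc_split {d : ℕ} (S : Finset (ZMod d)) (x : ZMod d) (hx : x ∈ S) (h1 : x + 1 ≠ x) :
    zc S = zc (S.erase x) - zc (S.filter fun j => j ≠ x ∧ j ≠ x + 1 ∧ j ≠ x - 1) := by
  unfold zc
  rw [← Finset.sum_filter_add_sum_filter_not _ (fun J => x ∉ J), sub_eq_add_neg]
  congr 1
  · apply Finset.sum_congr _ (fun _ _ => rfl)
    ext J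
    simp only [Finset.mem_filter, Finset.mem_powerset, Finset.subset_erase]
    tauto
  · rw [← Finset.sum_neg_distrib]
    refine Finset.sum_nbij' (fun J => J.erase x) (fun J => insert x J) ?_ ?_ ?_ ?_ ?_
    · intro J hJ
      simp only [Finset.mem_filter, Finset.mem_powerset, not_not] at hJ ⊢
      obtain ⟨⟨hS, hci⟩, hxJ⟩ := hJ
      refine ⟨?_, ?_⟩
      · intro j hj
        rw [Finset.mem_erase] at hj
        refine Finset.mem_filter.2 ⟨hS hj.2, hj.1, ?_, ?_⟩
        · rintro rfl
          exact hci x hxJ hj.2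
        · rintro rfl
          have := hci _ hj.2
          simp [hxJ] at this
      · intro j hj hj1
        exact hci j (Finset.mem_of_mem_erase hj) (Finset.mem_of_mem_erase hj1)
    · intro J hJ
      simp only [Finset.mem_filter, Finset.mem_powerset, not_not] at hJ ⊢
      obtain ⟨hS, hci⟩ := hJ
      refine ⟨⟨Finset.insert_subset hx (hS.trans (Finset.filter_subset _ _)), ?_⟩,
        Finset.mem_insert_self _ _⟩
      intro j hj hj1
      rw [Finset.mem_insert] at hj hj1
      rcases hj with rfl | hj <;> rcases hj1 with hj1 | hj1
      · exact h1 hj1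
      · exact (Finset.mem_filter.1 (hS hj1)).2.2.1 rfl
      · exact (Finset.mem_filter.1 (hS hj)).2.2.2 (by rw [← hj1]; ring)
      · exact hci j hj hj1
    · intro J hJ
      simp only [Finset.mem_filter, not_not] at hJ
      exact Finset.insert_erase hJ.2
    · intro J hJ
      simp only [Finset.mem_filter, Finset.mem_powerset] at hJ
      apply Finset.erase_insert
      intro h
      exact (Finset.mem_filter.1 (hJ.1 h)).2.1 rfl
    · intro J hJ
      simp only [Finset.mem_filter, not_not] at hJ
      rw [← Finset.card_erase_add_one hJ.2, pow_succ]
      ring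

/-- Values of the alternating sums for paths. -/
def pth : ℕ → ℤ
  | 0 => 1
  | 1 => 0
  | n + 2 => pth (n + 1) - pth n

theorem zc_path {d : ℕ} [NeZero d] (m n : ℕ) (h : m + n < d) :
    zc (Finset.univ.filter fun j : ZMod d => m ≤ j.val ∧ j.val < m + n) = pth n := by
  induction n using Nat.strong_induction_on with
  | _ n ih =>
    have hcast : ∀ k : ℕ, k < d → ((k : ℕ) : ZMod d).val = k := fun k hk => by
      rw [ZMod.val_natCast, Nat.mod_eq_of_lt hk]
    have hj : ∀ (j : ZMod d) (k : ℕ), k < d → (j = (k : ZMod d) ↔ j.val = k) := by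
      intro j k hk
      constructor
      · rintro rfl
        exact hcast k hk
      · intro h
        rw [← h]
        simp
    have hemp : zc (∅ : Finset (ZMod d)) = 1 := by
      unfold zc
      rw [Finset.powerset_empty, Finset.sum_filter, Finset.sum_singleton, if_pos (by simp [CI])]
      simp
    match n with
    | 0 =>
      have : (Finset.univ.filter fun j : ZMod d => m ≤ j.val ∧ j.val < m + 0) = ∅ := by
        ext j
        simp
      rw [this, hemp]
      rfl
    | 1 =>
      have hne : (m : ZMod d) + 1 ≠ m := by
        intro h1
        have h2 : ((m + 1 : ℕ) : ZMod d) = (m : ℕ) := by push_cast; exact h1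
        have := (hj _ m (by omega)).1 h2
        rw [hcast _ h] at this
        omega
      rw [zc_split _ (m : ZMod d) (by simp [hcast m (by omega)]) hne]
      have e1 : (Finset.univ.filter fun j : ZMod d => m ≤ j.val ∧ j.val < m + 1).erase (m : ZMod d)
          = ∅ := by
        ext j
        simp only [Finset.mem_erase, Finset.mem_filter, Finset.mem_univ, true_and,
          Finset.notMem_empty, iff_false, ne_eq, hj j m (by omega)]
        omega
      have e2 : (Finset.univ.filter fun j : ZMod d => m ≤ j.val ∧ j.val < m + 1).filter
          (fun j => j ≠ (m : ZMod d) ∧ j ≠ (m : ZMod d) + 1 ∧ j ≠ (m : ZMod d) - 1) = ∅ := by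
        ext j
        simp only [Finset.mem_filter, Finset.mem_univ, true_and,
          Finset.notMem_empty, iff_false, ne_eq, hj j m (by omega)]
        omega
      rw [e1, e2]
      simp [pth]
    | n + 2 =>
      have hx1 : ((m + n + 1 : ℕ) : ZMod d) + 1 = ((m + n + 2 : ℕ) : ZMod d) := by push_cast; ring
      have hx2 : ((m + n + 1 : ℕ) : ZMod d) - 1 = ((m + n : ℕ) : ZMod d) := by push_cast; ring
      rw [zc_split _ ((m + n + 1 : ℕ) : ZMod d)]
      · rw [hx1, hx2]
        have e1 := ih (n + 1) (by omega) (by omega)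
        have e2 := ih n (by omega) (by omega)
        rw [show pth (n + 2) = pth (n + 1) - pth n from rfl, ← e1, ← e2]
        congr 2
        · ext j
          simp only [Finset.mem_erase, Finset.mem_filter, Finset.mem_univ, true_and, ne_eq,
            hj j (m + n + 1) (by omega)]
          omega
        · ext j
          simp only [Finset.mem_filter, Finset.mem_univ, true_and, ne_eq,
            hj j (m + n + 1) (by omega), hj j (m + n) (by omega), hj j (m + n + 2) (by omega)]
          omega
      · simp only [Finset.mem_filter, Finset.mem_univ, true_and]
        rw [hcast _ (by omega)]
        omega
      · rw [hx1, ne_eq, hj _ _ (by omega), hcast _ (by omega)]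
        omega

theorem pth_cycle (n : ℕ) : pth (n + 2) - pth n = (-1) ^ (n + 3) * theta ((n + 3 : ℕ) : ℤ) := by
  induction n using Nat.strong_induction_on with
  | _ n ih =>
    match n with
    | 0 => decide
    | 1 => decide
    | 2 => decide
    | n + 3 =>
      have h := ih n (by omega)
      have e : ∀ m, pth (m + 3) = - pth m := by
        intro m
        rw [show pth (m + 3) = pth (m + 2) - pth (m + 1) from rfl,
          show pth (m + 2) = pth (m + 1) - pth m from rfl]
        ring
      rw [show n + 3 + 2 = (n + 2) + 3 by ring, e, e]
      have : theta ((n + 3 + 3 : ℕ) : ℤ) = theta ((n + 3 : ℕ) : ℤ) := by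
        unfold theta
        congr 1
        push_cast
        apply propext
        omega
      rw [this, show n + 3 + 3 = (n + 3) + 3 from rfl, pow_add]
      linarith

theorem zmod_two_aux1 : (1 : ZMod 2) ∈ Finset.univ.erase (0 : ZMod 2) := by decide

theorem zmod_two_aux2 : (Finset.univ.filter fun j : ZMod 2 => j ≠ 0 ∧ j ≠ 0 + 1 ∧ j ≠ 0 - 1)
      = (Finset.univ.filter fun j : ZMod 2 => 1 ≤ j.val ∧ j.val < 1 + 0) := by decide

open Classical in
theorem zc_univ {d : ℕ} [NeZero d] :
    zc (Finset.univ : Finset (ZMod d)) = (-1) ^ d * theta (d : ℤ) := by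
  have hd := NeZero.pos d
  have hcast : ∀ k : ℕ, k < d → ((k : ℕ) : ZMod d).val = k := fun k hk => by
    rw [ZMod.val_natCast, Nat.mod_eq_of_lt hk]
  have hj : ∀ (j : ZMod d) (k : ℕ), k < d → (j = (k : ZMod d) ↔ j.val = k) := by
    intro j k hk
    constructor
    · rintro rfl
      exact hcast k hk
    · intro h
      rw [← h]
      simp
  obtain _ | _ | _ | n := d
  · omega
  · have : ((Finset.univ : Finset (ZMod (0 + 1))).powerset.filter fun J => CI J) = {∅} := by
      ext J
      simp only [Finset.mem_filter, Finset.mem_powerset, Finset.subset_univ, true_and,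
        Finset.mem_singleton]
      constructor
      · intro h
        rw [Finset.eq_empty_iff_forall_notMem]
        intro j hj
        have e : j + 1 = j := (inferInstance : Subsingleton (Fin 1)).elim _ _
        exact h j hj (by rwa [e])
      · rintro rfl
        simp [CI]
    unfold zc
    rw [Finset.sum_congr (by convert this) (fun _ _ => rfl)]
    simp [theta]
  · rw [zc_split _ 0 (Finset.mem_univ _) (by decide)]
    have h1 := zc_path (d := 0 + 1 + 1) 1 0 (by norm_num)
    have h2 : zc (Finset.univ.erase (0 : ZMod (0 + 1 + 1))) = 0 := by
      rw [zc_split _ 1 zmod_two_aux1 (by decide)]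
      rw [sub_eq_zero]
      congr 1
    rw [h2]
    have h3 : (Finset.univ.filter fun j : ZMod (0 + 1 + 1) => j ≠ 0 ∧ j ≠ 0 + 1 ∧ j ≠ 0 - 1)
      = (Finset.univ.filter fun j : ZMod (0 + 1 + 1) => 1 ≤ j.val ∧ j.val < 1 + 0) := zmod_two_aux2
    rw [h3, h1]
    simp [theta, pth]
  · have hx1 : ((n + 2 : ℕ) : ZMod (n + 1 + 1 + 1)) + 1 = ((0 : ℕ) : ZMod (n + 1 + 1 + 1)) := by
      have := ZMod.natCast_self (n + 3)
      rw [Nat.cast_zero, ← this]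
      push_cast; ring
    have hx2 : ((n + 2 : ℕ) : ZMod (n + 1 + 1 + 1)) - 1 = ((n + 1 : ℕ) : ZMod (n + 1 + 1 + 1)) := by
      push_cast; ring
    rw [zc_split _ ((n + 2 : ℕ) : ZMod (n + 1 + 1 + 1)) (Finset.mem_univ _)]
    · rw [hx1, hx2, ← pth_cycle]
      rw [← zc_path (d := n + 1 + 1 + 1) 0 (n + 2) (by omega), ← zc_path (d := n + 1 + 1 + 1) 1 n (by omega)]
      congr 2
      · ext j
        have := j.val_lt
        simp only [Finset.mem_erase, Finset.mem_filter, Finset.mem_univ, true_and, ne_eq,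
            hj j (n + 2) (by omega), and_true]
        omega
      · ext j
        have := j.val_lt
        simp only [Finset.mem_filter, Finset.mem_univ, true_and, ne_eq,
            hj j (n + 1) (by omega), hj j (n + 2) (by omega), hj j 0 (by omega)]
        omega
    · rw [hx1, ne_eq, hj _ _ (by omega), hcast _ (by omega)]
      omega

end CycleValue


section Combi

/-- The NE steps. -/
def va {V : Type*} [AddCommGroup V] (i j : V) : V := i + 2 • j
def vc {V : Type*} [AddCommGroup V] (i j : V) : V := 2 • i + j
/-- The NW steps. -/
def vU {V : Type*} [AddCommGroup V] (i j : V) : V := 2 • j - i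
def vD {V : Type*} [AddCommGroup V] (i j : V) : V := j - 2 • i

/-- Independence. -/
def Ind {V : Type*} [AddCommGroup V] (i j : V) (σ : Finset V) : Prop :=
  ∀ p ∈ σ, p + i ∉ σ ∧ p + j ∉ σ

variable {V : Type*} [AddCommGroup V] {i j : V}

theorem Ind.mono {σ τ : Finset V} (h : Ind i j σ) (hs : τ ⊆ σ) : Ind i j τ :=
  fun p hp => ⟨fun hh => (h p (hs hp)).1 (hs hh), fun hh => (h p (hs hp)).2 (hs hh)⟩

theorem Ind.ff {σ : Finset V} (h : Ind i j σ) {p q : V} (hp : p ∈ σ) (hq : q ∈ σ)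
    (e : q - p = i ∨ p - q = i ∨ q - p = j ∨ p - q = j) : False := by
  rcases e with e | e | e | e
  · exact (h p hp).1 (by rw [← e]; simpa using hq)
  · exact (h q hq).1 (by rw [← e]; simpa using hp)
  · exact (h p hp).2 (by rw [← e]; simpa using hq)
  · exact (h q hq).2 (by rw [← e]; simpa using hp)

theorem ind_insert [DecidableEq V] (hi : i ≠ 0) (hj : j ≠ 0) {σ : Finset V} (h : Ind i j σ) {x : V}
    (h1 : x + i ∉ σ) (h2 : x - i ∉ σ) (h3 : x + j ∉ σ) (h4 : x - j ∉ σ) :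
    Ind i j (insert x σ) := by
  intro p hp
  simp only [Finset.mem_insert] at hp ⊢
  rcases hp with rfl | hp
  · simp [hi, hj, h1, h3]
  · refine ⟨?_, ?_⟩
    · rintro (e | e)
      · rw [← e] at h2
        simp [hp] at h2
      · exact (h p hp).1 e
    · rintro (e | e)
      · rw [← e] at h4
        simp [hp] at h4
      · exact (h p hp).2 e

theorem nsmul_of_zsmul [Finite V] (t : V) (n : ℤ) : ∃ m : ℕ, n • t = m • t := by
  have hpos : 0 < addOrderOf t := addOrderOf_pos t
  refine ⟨(n % (addOrderOf t : ℤ)).toNat, ?_⟩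
  rw [← natCast_zsmul, Int.toNat_of_nonneg (Int.emod_nonneg _ (by omega)), mod_addOrderOf_zsmul]

open Classical in
theorem acyc_all [Fintype V] {d : ℕ} [NeZero d] (hi : i ≠ 0) (hj : j ≠ 0) (ha : va i j ≠ 0)
    (hc : vc i j ≠ 0) (k : V →+ ZMod d) (hki : k i = 1) (hkj : k j = -1)
    (hk : ∀ x, k x = 0 → ∃ n : ℤ, x = n • (i + j)) :
    ∑ σ : Finset V with (Ind i j σ ∧ ¬ Cyc (va i j) (vc i j) σ), (-1 : ℤ) ^ σ.card
      = (-1) ^ d * theta (d : ℤ) := by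
  rw [← zc_univ, ← acyc_sum (a := va i j) (c := vc i j) (t := i + j) ha hc Finset.univ ⟨0, Finset.mem_univ _⟩
    (fun σ => Ind i j σ) k]
  · apply Finset.sum_congr _ (fun _ _ => rfl)
    ext σ
    simp
  · simp
  · simp
  · simp
  · intro y
    simp only [va, map_sub, map_add, map_nsmul, hki, hkj]
    ring
  · intro y
    simp only [vc, map_sub, map_add, map_nsmul, hki, hkj]
    ring
  · intro y
    simp [hki, hkj]
  · intro p _ q _ hpq
    obtain ⟨n, hn⟩ := hk (q - p) (by simp [hpq])
    obtain ⟨m, hm⟩ := nsmul_of_zsmul (i + j) n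
    exact ⟨m, by rw [← hm, ← hn]; abel⟩
  · intro p hp
    simp at hp
  · intro σ τ h1 h2
    exact h1.mono h2
  · intro σ _ hσ p hp h1 h2
    refine ⟨ind_insert hi hj hσ ?_ ?_ ?_ ?_, ?_, ?_⟩
    · intro h
      exact h2 (by rwa [show p + (i + j) + i = p + vc i j by simp only [vc]; abel] at h)
    · intro h
      exact hσ.ff hp h (by right; right; left; abel)
    · intro h
      exact h1 (by rwa [show p + (i + j) + j = p + va i j by simp only [va]; abel] at h)
    · intro h
      exact hσ.ff hp h (by left; abel)
    · intro h
      exact hσ.ff hp h (by right; right; right; simp only [va]; abel)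
    · intro h
      exact hσ.ff hp h (by right; left; simp only [vc]; abel)
  · intro τ _ hτ J hJ hJτ p hp
    simp only [Finset.mem_union, Finset.mem_filter, Finset.mem_univ, true_and] at hp ⊢
    refine ⟨?_, ?_⟩
    · intro h
      simp only [map_add, hki] at h
      rcases hp with hp | hp <;> rcases h with h | h
      · exact hJ _ hp h
      · have := (hJτ _ h).2.2
        simp [hki, hp] at this
      · exact (hJτ _ hp).2.1 h
      · exact (hτ p hp).1 h
    · intro h
      simp only [map_add, hkj] at h
      rcases hp with hp | hp <;> rcases h with h | h
      · have := hJ _ h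
        simp [hp] at this
      · have := (hJτ _ h).2.1
        simp [hkj, hp] at this
      · exact (hJτ _ hp).2.2 (by rwa [sub_eq_add_neg])
      · exact (hτ p hp).2 h

/-- Level sets. -/
def Lev (i j : V) (K : Finset V) : Prop :=
  K.Nonempty ∧ Ind i j K ∧ ∀ p ∈ K, p + (j - i) ∈ K ∧ (p + va i j ∈ K ∨ p + vc i j ∈ K)

theorem nsmul_closed {K : Finset V} {t : V} (h : ∀ p ∈ K, p + t ∈ K) (n : ℕ) :
    ∀ p ∈ K, p + n • t ∈ K := by
  induction n with
  | zero => intro p hp; simpa using hp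
  | succ n ih =>
    intro p hp
    rw [succ_nsmul, ← add_assoc]
    exact h _ (ih p hp)

theorem zsmul_closed [Finite V] {K : Finset V} {t : V} (h : ∀ p ∈ K, p + t ∈ K) (n : ℤ) :
    ∀ p ∈ K, p + n • t ∈ K := by
  obtain ⟨m, hm⟩ := nsmul_of_zsmul t n
  rw [hm]
  exact nsmul_closed h m

theorem Lev.move [Finite V] {K : Finset V} (h : Lev i j K) {p : V} (hp : p ∈ K) (m n : ℤ)
    (hmn : (3 : ℤ) ∣ m + n) : p + (m • i + n • j) ∈ K := by
  obtain ⟨l, hl⟩ := hmn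
  have h1 : ∀ p ∈ K, p + (j - i) ∈ K := fun p hp => (h.2.2 p hp).1
  have h2 : ∀ p ∈ K, p + 3 • j ∈ K := by
    intro p hp
    rcases (h.2.2 p hp).2 with hh | hh
    · have := zsmul_closed h1 1 _ hh
      rwa [show p + va i j + (1 : ℤ) • (j - i) = p + 3 • j by simp only [va]; abel] at this
    · have := zsmul_closed h1 2 _ hh
      rwa [show p + vc i j + (2 : ℤ) • (j - i) = p + 3 • j by simp only [vc]; abel] at this
  have h3 := zsmul_closed h2 l _ (zsmul_closed h1 (-m) _ hp)
  have : n = 3 * l - m := by omega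
  subst this
  convert h3 using 1
  module

theorem Lev.move_iff [Finite V] {K : Finset V} (h : Lev i j K) {p : V} (hp : p ∈ K) (m n : ℤ) :
    p + (m • i + n • j) ∈ K ↔ (3 : ℤ) ∣ m + n := by
  refine ⟨?_, h.move hp m n⟩
  intro hm
  by_contra hcon
  have h12 : (3 : ℤ) ∣ (-m) + (1 - n) ∨ (3 : ℤ) ∣ (-m) + (-1 - n) := by omega
  rcases h12 with h1 | h1
  · have := h.move hm _ _ h1
    exact h.2.1.ff hp this (by right; right; left; module)
  · have := h.move hm _ _ h1
    exact h.2.1.ff hp this (by right; right; right; module)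

open Classical in
theorem acyc_level [Fintype V] {d : ℕ} [NeZero d] (ha : va i j ≠ 0)
    (hc : vc i j ≠ 0) (k : V →+ ZMod d) (hki : k i = 1) (hkj : k j = -1)
    (hk : ∀ x, k x = 0 → ∃ n : ℤ, x = n • (i + j)) (K : Finset V) (hK : Lev i j K) :
    ∑ σ : Finset V with (σ ⊆ K ∧ ¬ Cyc (va i j) (vc i j) σ), (-1 : ℤ) ^ σ.card
      = (-1) ^ d * theta (d : ℤ) := by
  rw [← zc_univ, ← acyc_sum (a := va i j) (c := vc i j) (t := va i j + vc i j) ha hc K hK.1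
    (fun σ => True) k]
  · apply Finset.sum_congr _ (fun _ _ => rfl)
    ext σ
    simp
  · intro y hy
    have := hK.move hy 3 3 (by norm_num)
    convert this using 2
    simp only [va, vc]; abel
  · intro y hy
    have := hK.move hy (-1) (-2) (by norm_num)
    convert this using 1
    simp only [va, vc]; abel
  · intro y hy
    have := hK.move hy (-2) (-1) (by norm_num)
    convert this using 1
    simp only [va, vc]; abel
  · intro y
    simp only [va, map_sub, map_add, map_nsmul, hki, hkj]
    ring
  · intro y
    simp only [vc, map_sub, map_add, map_nsmul, hki, hkj]
    ring
  · intro y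
    simp only [va, vc, map_sub, map_add, map_nsmul, hki, hkj]
    ring
  · intro p hp q hq hpq
    obtain ⟨n, hn⟩ := hk (q - p) (by simp [hpq])
    have h3 := (hK.move_iff hp n n).1 (by convert hq using 1; rw [← smul_add, ← hn]; abel)
    have : (3 : ℤ) ∣ n := by omega
    obtain ⟨l, rfl⟩ := this
    obtain ⟨m, hm⟩ := nsmul_of_zsmul (va i j + vc i j) l
    refine ⟨m, ?_⟩
    rw [← hm]
    have : q = p + (q - p) := by abel
    rw [this, hn]
    simp only [va, vc]
    module
  · trivial
  · intros; trivial
  · intro σ hσ _ p hp h1 h2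
    refine ⟨trivial, ?_, ?_⟩
    · rwa [show p + (va i j + vc i j) - va i j = p + vc i j by abel]
    · rwa [show p + (va i j + vc i j) - vc i j = p + va i j by abel]
  · intros; trivial

end Combi


section Step2

variable {V : Type*} [AddCommGroup V] {i j : V}

open Classical in
/-- Elements without NW-children. -/
noncomputable def nwless (i j : V) (σ : Finset V) : Finset V :=
  σ.filter fun p => p + vU i j ∉ σ ∧ p + vD i j ∉ σ

theorem mem_nwless {σ : Finset V} {p : V} :
    p ∈ nwless i j σ ↔ p ∈ σ ∧ p + vU i j ∉ σ ∧ p + vD i j ∉ σ := by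
  simp [nwless]

open Classical in
/-- If `p` is NW-childless, `p + (-1,1)` is free. -/
theorem free_insert (hi : i ≠ 0) (hj : j ≠ 0) {σ : Finset V} (h : Ind i j σ) {p : V}
    (hp : p ∈ nwless i j σ) : Ind i j (insert (p + (j - i)) σ) := by
  rw [mem_nwless] at hp
  obtain ⟨hp, h1, h2⟩ := hp
  refine ind_insert hi hj h ?_ ?_ ?_ ?_
  · intro hh
    exact h.ff hp hh (by right; right; left; abel)
  · intro hh
    exact h2 (by convert hh using 1; simp only [vD]; abel)
  · intro hh
    exact h1 (by convert hh using 1; simp only [vU]; abel)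
  · intro hh
    exact h.ff hp hh (by right; left; abel)

open Classical in
/-- ... and NW-childlessness of elements of `σ` is unaffected by adding it. -/
theorem nwless_insert {σ : Finset V} (h : Ind i j σ) {p q : V}
    (hp : p ∈ σ) (hq : q ∈ σ) :
    q ∈ nwless i j (insert (p + (j - i)) σ) ↔ q ∈ nwless i j σ := by
  simp only [mem_nwless, Finset.mem_insert, hq, or_true, true_and, not_or]
  constructor
  · tauto
  · rintro ⟨h1, h2⟩
    refine ⟨⟨?_, h1⟩, ?_, h2⟩
    · intro e
      have : q = p - j := by
        rw [eq_sub_of_add_eq e]; simp only [vU]; abel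
      exact h.ff hp hq (by right; right; right; rw [this]; abel)
    · intro e
      have : q = p + i := by
        rw [eq_sub_of_add_eq e]; simp only [vD]; abel
      exact h.ff hp hq (by left; rw [this]; abel)

open Classical in
theorem step2 [Fintype V] (hi : i ≠ 0) (hj : j ≠ 0) (ha : va i j ≠ 0) (hc : vc i j ≠ 0)
    (hgen : ∀ x : V, ∃ m n : ℤ, x = m • i + n • j) :
    ∑ σ : Finset V with (Ind i j σ ∧ ¬ Cyc (va i j) (vc i j) (nwless i j σ)), (-1 : ℤ) ^ σ.card
     = ∑ σ : Finset V with Ind i j σ, (-1 : ℤ) ^ σ.card +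
       ∑ K : Finset V with Lev i j K,
        ∑ σ : Finset V with (σ ⊆ K ∧ ¬ Cyc (va i j) (vc i j) σ), (-1 : ℤ) ^ σ.card := by
  set g : Finset V → ℤ := fun M => if Cyc (va i j) (vc i j) M then 0 else 1 with hg
  have e1 : ∑ σ : Finset V with (Ind i j σ ∧ ¬ Cyc (va i j) (vc i j) (nwless i j σ)),
      (-1 : ℤ) ^ σ.card = ∑ σ : Finset V with Ind i j σ, ∑ K ∈ (nwless i j σ).powerset,
        (-1 : ℤ) ^ σ.card * moeb g K := by
    rw [← Finset.filter_filter, Finset.sum_filter]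
    apply Finset.sum_congr rfl
    intro σ _
    rw [← Finset.mul_sum, moeb_inversion, hg]
    by_cases h : Cyc (va i j) (vc i j) (nwless i j σ) <;> simp [h]
  rw [e1, Finset.sum_comm' (t' := Finset.univ) (s' := fun K => Finset.univ.filter
    (fun σ => Ind i j σ ∧ K ⊆ nwless i j σ)) (by intro σ M; simp)]
  simp_rw [← Finset.sum_mul]
  have hmo : ∀ K : Finset V, moeb g K = (-1) ^ K.card *
      ∑ σ : Finset V with (σ ⊆ K ∧ ¬ Cyc (va i j) (vc i j) σ), (-1 : ℤ) ^ σ.card := by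
    intro K
    unfold moeb
    rw [Finset.mul_sum, ← Finset.filter_filter, Finset.sum_filter]
    apply Finset.sum_congr
    · ext σ
      simp
    · intro σ _
      rw [hg]
      by_cases h : Cyc (va i j) (vc i j) σ <;> simp [h]
  have hm : ∀ K : Finset V, (∃ y ∈ K, y + va i j ∉ K ∧ y + vc i j ∉ K) → moeb g K = 0 := by
    rintro K ⟨y, hy, h1, h2⟩
    rw [hmo, sum_toggle_fixed (fun σ => σ ⊆ K ∧ ¬ Cyc (va i j) (vc i j) σ) y, mul_zero]
    intro σ hyσ
    have hs := Finset.subset_insert y σ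
    constructor
    · rintro ⟨h3, h4⟩
      exact ⟨Finset.insert_subset hy h3, fun h => h4 (cyc_insert_childless ha hc
        (fun hh => h1 (h3 hh)) (fun hh => h2 (h3 hh)) h)⟩
    · rintro ⟨h3, h4⟩
      exact ⟨hs.trans h3, fun h => h4 (h.mono hs)⟩
  have hin : ∀ K : Finset V, (∃ p ∈ K, p + (j - i) ∉ K) →
      ∑ σ : Finset V with (Ind i j σ ∧ K ⊆ nwless i j σ), (-1 : ℤ) ^ σ.card = 0 := by
    rintro K ⟨p, hp, hx⟩
    apply sum_toggle_fixed (fun σ => Ind i j σ ∧ K ⊆ nwless i j σ) (p + (j - i))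
    intro σ hxσ
    have hs := Finset.subset_insert (p + (j - i)) σ
    constructor
    · rintro ⟨h1, h2⟩
      refine ⟨free_insert hi hj h1 (h2 hp), ?_⟩
      intro q hq
      have hq1 := h2 hq
      rw [nwless_insert h1 (mem_nwless.1 (h2 hp)).1 (mem_nwless.1 hq1).1]
      exact hq1
    · rintro ⟨h1, h2⟩
      refine ⟨h1.mono hs, ?_⟩
      intro q hq
      have hq1 := mem_nwless.1 (h2 hq)
      rw [mem_nwless]
      refine ⟨?_, fun h => hq1.2.1 (hs h), fun h => hq1.2.2 (hs h)⟩
      rcases Finset.mem_insert.1 hq1.1 with h | h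
      · exact absurd (h ▸ hq) hx
      · exact h
  have key : ∀ K : Finset V,
      (∑ σ : Finset V with (Ind i j σ ∧ K ⊆ nwless i j σ), (-1 : ℤ) ^ σ.card) * moeb g K =
      (if K = ∅ then ∑ σ : Finset V with Ind i j σ, (-1 : ℤ) ^ σ.card else 0) +
      (if Lev i j K then ∑ σ : Finset V with (σ ⊆ K ∧ ¬ Cyc (va i j) (vc i j) σ),
        (-1 : ℤ) ^ σ.card else 0) := by
    intro K
    by_cases h0 : K = ∅
    · have hnl : ¬ Lev i j (∅ : Finset V) := by
        rintro ⟨⟨y, hy⟩, _⟩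
        simp at hy
      have hg0 : moeb g ∅ = 1 := by
        have : ¬ Cyc (va i j) (vc i j) (∅ : Finset V) := by
          rintro ⟨N, h1, ⟨y, hy⟩, _⟩
          simpa using h1 hy
        simp [moeb, hg, this]
      rw [h0, hg0]
      simp [hnl]
    rw [if_neg h0, zero_add]
    by_cases hL : Lev i j K
    · rw [if_pos hL, hmo]
      have : (Finset.univ.filter fun σ : Finset V => Ind i j σ ∧ K ⊆ nwless i j σ) = {K} := by
        ext σ
        simp only [Finset.mem_filter, Finset.mem_univ, true_and, Finset.mem_singleton]
        constructor
        · rintro ⟨h1, h2⟩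
          have hKσ : K ⊆ σ := fun q hq => (mem_nwless.1 (h2 hq)).1
          refine Finset.Subset.antisymm ?_ hKσ
          intro q hq
          obtain ⟨p, hp⟩ := hL.1
          obtain ⟨m, n, hmn⟩ := hgen (q - p)
          have hq2 : q = p + (m • i + n • j) := by rw [← hmn]; abel
          have h3 : (3 : ℤ) ∣ m + n ∨ (3 : ℤ) ∣ m + (n + 1) ∨ (3 : ℤ) ∣ m + (n - 1) := by omega
          rcases h3 with h3 | h3 | h3
          · rw [hq2]
            exact hL.move hp _ _ h3
          · exact (h1.ff hq (hKσ (hL.move hp _ _ h3))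
              (by right; right; left; rw [hq2]; module)).elim
          · exact (h1.ff hq (hKσ (hL.move hp _ _ h3))
              (by right; right; right; rw [hq2]; module)).elim
        · rintro rfl
          refine ⟨hL.2.1, ?_⟩
          intro q hq
          refine mem_nwless.2 ⟨hq, ?_, ?_⟩
          · intro h
            have := (hL.move_iff hq (-1) 2).1 (by convert h using 1; simp only [vU]; abel)
            omega
          · intro h
            have := (hL.move_iff hq (-2) 1).1 (by convert h using 1; simp only [vD]; abel)
            omega
      rw [this, Finset.sum_singleton, ← mul_assoc, ← mul_pow]
      simp
    · rw [if_neg hL]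
      by_cases hA : ∃ p ∈ K, p + (j - i) ∉ K
      · rw [hin K hA, zero_mul]
      by_cases hB : ∃ y ∈ K, y + va i j ∉ K ∧ y + vc i j ∉ K
      · rw [hm K hB, mul_zero]
      push Not at hA hB
      rw [Finset.sum_eq_zero, zero_mul]
      intro σ hσ
      exfalso
      simp only [Finset.mem_filter, Finset.mem_univ, true_and] at hσ
      have hKσ : K ⊆ σ := fun q hq => (mem_nwless.1 (hσ.2 hq)).1
      refine hL ⟨Finset.nonempty_iff_ne_empty.2 h0, hσ.1.mono hKσ, fun p hp => ⟨hA p hp, ?_⟩⟩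
      by_contra hcon
      push Not at hcon
      exact hcon.2 (hB p hp hcon.1)
  rw [Finset.sum_congr rfl (fun K _ => key K), Finset.sum_add_distrib]
  congr 1
  · simp
  · rw [Finset.sum_filter]

open Classical in
theorem lev_card_zero [Fintype V] (m n : ℤ) (h0 : m • i + n • j = 0) (h3 : ¬ (3 : ℤ) ∣ m + n) :
    (Finset.univ.filter fun K : Finset V => Lev i j K).card = 0 := by
  rw [Finset.card_eq_zero, Finset.filter_eq_empty_iff]
  intro K _ hK
  obtain ⟨p, hp⟩ := hK.1
  exact h3 ((hK.move_iff hp m n).1 (by rw [h0]; simpa using hp))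

open Classical in
theorem lev_card_three [Fintype V] (hgen : ∀ x : V, ∃ m n : ℤ, x = m • i + n • j)
    (l : V →+ ZMod 3) (hi : l i = 1) (hj : l j = 1) :
    (Finset.univ.filter fun K : Finset V => Lev i j K).card = 3 := by
  have hl : ∀ r : ZMod 3, l (r.val • i) = r := by
    intro r
    rw [map_nsmul, hi]
    simp
  have hlev : ∀ r : ZMod 3, Lev i j (Finset.univ.filter fun x => l x = r) := by
    intro r
    refine ⟨⟨r.val • i, by simp only [Finset.mem_filter, Finset.mem_univ, true_and]; exact hl r⟩, ?_, ?_⟩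
    · intro p hp
      simp only [Finset.mem_filter, Finset.mem_univ, true_and] at hp
      simp [hi, hj, hp]
    · intro p hp
      simp only [Finset.mem_filter, Finset.mem_univ, true_and] at hp
      refine ⟨by simp [hi, hj, hp], Or.inl ?_⟩
      simp only [Finset.mem_filter, Finset.mem_univ, true_and, va, map_add, map_nsmul, hi, hj, hp]
      have : (1 : ZMod 3) + 2 • 1 = 0 := by decide
      rw [this, add_zero]
  have : (Finset.univ.filter fun K : Finset V => Lev i j K)
      = Finset.univ.image (fun r : ZMod 3 => Finset.univ.filter fun x => l x = r) := by
    ext K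
    simp only [Finset.mem_filter, Finset.mem_univ, true_and, Finset.mem_image]
    constructor
    · intro hK
      obtain ⟨p, hp⟩ := hK.1
      refine ⟨l p, ?_⟩
      ext q
      obtain ⟨m, n, hmn⟩ := hgen (q - p)
      have hq2 : q = p + (m • i + n • j) := by rw [← hmn]; abel
      simp only [Finset.mem_filter, Finset.mem_univ, true_and]
      rw [hq2, hK.move_iff hp, show (3 : ℤ) ∣ m + n ↔ ((m + n : ℤ) : ZMod 3) = 0 from
        (ZMod.intCast_zmod_eq_zero_iff_dvd _ 3).symm]
      simp [hi, hj]
    · rintro ⟨r, rfl⟩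
      exact hlev r
  rw [this, Finset.card_image_of_injective]
  · simp [ZMod.card]
  · intro r r' h
    have h1 : r.val • i ∈ (Finset.univ.filter fun x => l x = r) := by
      simp only [Finset.mem_filter, Finset.mem_univ, true_and]
      exact hl r
    simp only at h
    rw [h] at h1
    simp only [Finset.mem_filter, Finset.mem_univ, true_and] at h1
    rw [← h1, hl r]

end Step2


section Step3

variable {V : Type*} [AddCommGroup V] {i j : V}

theorem Ind.ee {σ : Finset V} (h : Ind i j σ) {p q : V} (hp : p ∈ σ) (hq : q ∈ σ)
    (e : q = p + i) : False := h.ff hp hq (by left; rw [e]; abel)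

theorem Ind.nn {σ : Finset V} (h : Ind i j σ) {p q : V} (hp : p ∈ σ) (hq : q ∈ σ)
    (e : q = p + j) : False := h.ff hp hq (by right; right; left; rw [e]; abel)

open Classical in
/-- The forward NE core. -/
noncomputable def core [Fintype V] (i j : V) (σ : Finset V) : Finset V :=
  Finset.univ.filter fun x => ∃ N ⊆ σ, x ∈ N ∧ ∀ y ∈ N, y + va i j ∈ N ∨ y + vc i j ∈ N

theorem mem_core [Fintype V] {σ : Finset V} {x : V} : x ∈ core i j σ ↔
    ∃ N ⊆ σ, x ∈ N ∧ ∀ y ∈ N, y + va i j ∈ N ∨ y + vc i j ∈ N := by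
  simp [core]

theorem core_subset [Fintype V] {σ : Finset V} : core i j σ ⊆ σ := by
  intro x hx
  obtain ⟨N, h1, h2, _⟩ := mem_core.1 hx
  exact h1 h2

theorem core_child [Fintype V] {σ : Finset V} {x : V} (hx : x ∈ core i j σ) :
    x + va i j ∈ core i j σ ∨ x + vc i j ∈ core i j σ := by
  obtain ⟨N, h1, h2, h3⟩ := mem_core.1 hx
  rcases h3 x h2 with h | h
  · exact Or.inl (mem_core.2 ⟨N, h1, h, h3⟩)
  · exact Or.inr (mem_core.2 ⟨N, h1, h, h3⟩)

theorem core_mono [Fintype V] {σ τ : Finset V} (h : σ ⊆ τ) : core i j σ ⊆ core i j τ := by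
  intro x hx
  obtain ⟨N, h1, h2⟩ := mem_core.1 hx
  exact mem_core.2 ⟨N, h1.trans h, h2⟩

open Classical in
/-- The preferred NE step. -/
noncomputable def stp [Fintype V] (i j : V) (σ : Finset V) (y : V) : V :=
  if y + vc i j ∈ core i j σ then y + vc i j else y + va i j

theorem stp_core [Fintype V] {σ : Finset V} {x : V} (hx : x ∈ core i j σ) :
    stp i j σ x ∈ core i j σ := by
  unfold stp
  split_ifs with h
  · exact h
  · exact (core_child hx).resolve_right h

theorem stp_cases [Fintype V] (σ : Finset V) (x : V) :
    (stp i j σ x = x + vc i j) ∨ (stp i j σ x = x + va i j ∧ x + vc i j ∉ core i j σ) := by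
  unfold stp
  split_ifs with h
  · exact Or.inl rfl
  · exact Or.inr ⟨rfl, h⟩

/-- `Q` is an invariant set for the preferred step. -/
def StpInv [Fintype V] (i j : V) (σ Q : Finset V) : Prop :=
  Q ⊆ core i j σ ∧ (∀ y ∈ Q, stp i j σ y ∈ Q) ∧ ∀ y ∈ Q, ∃ z ∈ Q, stp i j σ z = y

open Classical in
/-- The periodic part. -/
noncomputable def per [Fintype V] (i j : V) (σ : Finset V) : Finset V :=
  Finset.univ.filter fun x => ∃ Q, StpInv i j σ Q ∧ x ∈ Q

theorem mem_per [Fintype V] {σ : Finset V} {x : V} :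
    x ∈ per i j σ ↔ ∃ Q, StpInv i j σ Q ∧ x ∈ Q := by
  simp [per]

theorem per_inv [Fintype V] (σ : Finset V) : StpInv i j σ (per i j σ) := by
  refine ⟨?_, ?_, ?_⟩
  · intro x hx
    obtain ⟨Q, hQ, hxQ⟩ := mem_per.1 hx
    exact hQ.1 hxQ
  · intro x hx
    obtain ⟨Q, hQ, hxQ⟩ := mem_per.1 hx
    exact mem_per.2 ⟨Q, hQ, hQ.2.1 x hxQ⟩
  · intro x hx
    obtain ⟨Q, hQ, hxQ⟩ := mem_per.1 hx
    obtain ⟨z, hz, e⟩ := hQ.2.2 x hxQ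
    exact ⟨z, mem_per.2 ⟨Q, hQ, hz⟩, e⟩

theorem per_subset [Fintype V] {σ : Finset V} : per i j σ ⊆ σ :=
  (per_inv σ).1.trans core_subset

open Classical in
theorem per_inj [Fintype V] (σ : Finset V) : Set.InjOn (stp i j σ) (per i j σ : Set V) := by
  apply Finset.injOn_of_surjOn_of_card_le (t := per i j σ)
  · intro x hx
    exact (per_inv σ).2.1 x hx
  · intro x hx
    obtain ⟨z, hz, e⟩ := (per_inv σ).2.2 x hx
    exact ⟨z, hz, e⟩
  · exact le_rfl

/-- A subset of the periodic part mapped into itself is mapped onto itself. -/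
theorem per_onto [Fintype V] {σ R : Finset V} (hR : R ⊆ per i j σ)
    (h : ∀ y ∈ R, stp i j σ y ∈ R) : ∀ y ∈ R, ∃ z ∈ R, stp i j σ z = y := by
  have := Finset.surjOn_of_injOn_of_card_le (s := R) (t := R) (stp i j σ) (fun x hx => h x hx)
    ((per_inj σ).mono hR) le_rfl
  intro y hy
  obtain ⟨z, hz, e⟩ := this hy
  exact ⟨z, hz, e⟩

theorem per_nonempty [Fintype V] {σ : Finset V} (h : Cyc (va i j) (vc i j) σ) :
    (per i j σ).Nonempty := by
  classical
  obtain ⟨N, h1, ⟨x, hx⟩, h3⟩ := h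
  have hcore : x ∈ core i j σ := mem_core.2 ⟨N, h1, hx, h3⟩
  set F : Finset (Finset V) := Finset.univ.filter fun Q =>
    Q.Nonempty ∧ Q ⊆ core i j σ ∧ ∀ y ∈ Q, stp i j σ y ∈ Q with hF
  have hne : F.Nonempty := ⟨core i j σ, by
    simp only [hF, Finset.mem_filter, Finset.mem_univ, true_and]
    exact ⟨⟨x, hcore⟩, Finset.Subset.refl _, fun y hy => stp_core hy⟩⟩
  obtain ⟨Q, hQ, hmin⟩ := F.exists_min_image Finset.card hne
  simp only [hF, Finset.mem_filter, Finset.mem_univ, true_and] at hQ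
  obtain ⟨⟨q, hq⟩, hQc, hQs⟩ := hQ
  have hsub : Q.image (stp i j σ) ⊆ Q := by
    intro y hy
    obtain ⟨z, hz, rfl⟩ := Finset.mem_image.1 hy
    exact hQs z hz
  have hmem : Q.image (stp i j σ) ∈ F := by
    simp only [hF, Finset.mem_filter, Finset.mem_univ, true_and]
    refine ⟨⟨_, Finset.mem_image_of_mem _ hq⟩, hsub.trans hQc, ?_⟩
    intro y hy
    exact Finset.mem_image_of_mem _ (hsub hy)
  have heq := Finset.eq_of_subset_of_card_le hsub (hmin _ hmem)
  refine ⟨q, mem_per.2 ⟨Q, ⟨hQc, hQs, ?_⟩, hq⟩⟩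
  intro y hy
  rw [← heq] at hy
  obtain ⟨z, hz, e⟩ := Finset.mem_image.1 hy
  exact ⟨z, hz, e⟩

theorem cyc_of_per [Fintype V] {σ : Finset V} {x : V} (hx : x ∈ per i j σ) :
    Cyc (va i j) (vc i j) σ := by
  obtain ⟨N, h1, h2, h3⟩ := mem_core.1 ((per_inv σ).1 hx)
  exact ⟨N, h1, ⟨x, h2⟩, h3⟩

open Classical in
/-- The toggling positions. -/
noncomputable def tog [Fintype V] (i j : V) (σ : Finset V) : Finset V :=
  ((per i j σ).filter fun p => p ∈ nwless i j σ ∧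
    ∃ z ∈ per i j σ, stp i j σ z = p ∧ z ∉ nwless i j σ).image (fun p => p + (j - i))

theorem mem_tog [Fintype V] {σ : Finset V} {x : V} : x ∈ tog i j σ ↔
    ∃ p z, p ∈ per i j σ ∧ z ∈ per i j σ ∧ stp i j σ z = p ∧ p ∈ nwless i j σ ∧
      z ∉ nwless i j σ ∧ x = p + (j - i) := by
  simp only [tog, Finset.mem_image, Finset.mem_filter]
  constructor
  · rintro ⟨p, ⟨h1, h2, z, h3, h4, h5⟩, rfl⟩
    exact ⟨p, z, h1, h3, h4, h2, h5, rfl⟩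
  · rintro ⟨p, z, h1, h3, h4, h2, h5, rfl⟩
    exact ⟨p, ⟨h1, h2, z, h3, h4, h5⟩, rfl⟩

/-- Local facts at a toggling position. -/
theorem tog_local [Fintype V] (hji : j - i ≠ 0) (h3j : 3 • j ≠ 0) (ha : va i j ≠ 0)
    {σ : Finset V} (h : Ind i j σ) {p z : V}
    (hp : p ∈ per i j σ) (hz : z ∈ per i j σ) (hzp : stp i j σ z = p)
    (hzn : z ∉ nwless i j σ) :
    (∀ q ∈ σ, q + vU i j ≠ p + (j - i) ∧ q + vD i j ≠ p + (j - i)) ∧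
    (∀ q ∈ σ, q + vc i j ≠ p + (j - i)) ∧ (∀ q ∈ σ, q + va i j = p + (j - i) → q = z) ∧
    p ≠ p + (j - i) ∧ z ≠ p + (j - i) := by
  have hpσ := per_subset hp
  have hzσ := per_subset hz
  have hw : z + vU i j ∈ σ ∨ z + vD i j ∈ σ := by
    by_contra hcon
    push Not at hcon
    exact hzn (mem_nwless.2 ⟨hzσ, hcon⟩)
  refine ⟨?_, ?_, ?_, ?_, ?_⟩
  · intro q hq
    refine ⟨?_, ?_⟩
    · intro e
      refine h.nn hq hpσ ?_
      rw [← sub_eq_iff_eq_add.2 e.symm]; simp only [vU]; abel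
    · intro e
      refine h.ee hpσ hq ?_
      rw [eq_sub_of_add_eq e]; simp only [vD]; abel
  · intro q hq e
    have e2 := eq_sub_of_add_eq e
    rcases stp_cases σ z with hs | ⟨hs, _⟩
    · rw [hzp] at hs
      rw [hs] at e2
      rcases hw with hw | hw
      · exact h.nn hq hw (by rw [e2]; simp only [vU, vc]; abel)
      · exact h.ee hw hq (by rw [e2]; simp only [vD, vc]; abel)
    · rw [hzp] at hs
      rw [hs] at e2
      rcases hw with hw | hw
      · exact h.ee hq hw (by rw [e2]; simp only [vU, va, vc]; abel)
      · exact h.nn hw hq (by rw [e2]; simp only [vD, va, vc]; abel)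
  · intro q hq e
    have e2 := eq_sub_of_add_eq e
    rcases stp_cases σ z with hs | ⟨hs, _⟩
    · rw [hzp] at hs
      rw [e2, hs]; simp only [va, vc]; abel
    · exfalso
      rw [hzp] at hs
      rw [hs] at e2
      rcases hw with hw | hw
      · exact h.nn hq hw (by rw [e2]; simp only [vU, va]; abel)
      · exact h.ee hw hq (by rw [e2]; simp only [vD, va]; abel)
  · intro e
    exact hji (by simpa using e)
  · intro e
    rcases stp_cases σ z with hs | ⟨hs, _⟩
    · rw [hzp] at hs
      rw [hs] at e
      apply ha
      have : va i j = (z + vc i j + (j - i)) - z := by simp only [va, vc]; abel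
      rw [this, ← e]; abel
    · rw [hzp] at hs
      rw [hs] at e
      apply h3j
      have : 3 • j = (z + va i j + (j - i)) - z := by simp only [va]; abel
      rw [this, ← e]; abel

theorem tog_step [Fintype V] (hi : i ≠ 0) (hj : j ≠ 0) (hji : j - i ≠ 0) (h3j : 3 • j ≠ 0)
    (ha : va i j ≠ 0) (hc : vc i j ≠ 0) {σ τ : Finset V} {x : V} (hσ : Ind i j σ)
    (hcyc : ¬ Cyc (va i j) (vc i j) (nwless i j σ)) (hx : x ∈ tog i j σ)
    (hτ : ∀ y, y ≠ x → (y ∈ σ ↔ y ∈ τ)) :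
    Ind i j τ ∧ Cyc (va i j) (vc i j) τ ∧ ¬ Cyc (va i j) (vc i j) (nwless i j τ) ∧
      tog i j τ = tog i j σ := by
  classical
  obtain ⟨p, z, hp, hz, hzp, hpn, hzn, hxe⟩ := mem_tog.1 hx
  obtain ⟨l1, l2, l3, l4, l5⟩ := tog_local hji h3j ha hσ hp hz hzp hzn
  rw [← hxe] at l1 l2 l3 l4 l5
  have hpσ := per_subset hp
  have hzσ := per_subset hz
  -- `x` is not periodic for `σ`
  have hxper : x ∉ per i j σ := by
    intro hxp
    obtain ⟨y, hy, e⟩ := (per_inv σ).2.2 x hxp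
    have hyσ := per_subset hy
    rcases stp_cases σ y with hs | ⟨hs, _⟩
    · exact l2 y hyσ (hs.symm.trans e)
    · have := l3 y hyσ (hs.symm.trans e)
      subst this
      exact l4 (hzp.symm.trans e)
  have hcore0 : ∀ y, y ≠ x → y ∈ core i j (insert x σ) → y ∈ core i j (σ.erase x) := by
    intro y hyx hy
    obtain ⟨N, n1, n2, n3⟩ := mem_core.1 hy
    refine mem_core.2 ⟨N.erase x ∪ per i j σ, ?_, ?_, ?_⟩
    · intro q hq
      rcases Finset.mem_union.1 hq with hq | hq
      · rw [Finset.mem_erase] at hq ⊢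
        exact ⟨hq.1, (Finset.mem_insert.1 (n1 hq.2)).resolve_left hq.1⟩
      · exact Finset.mem_erase.2 ⟨fun e => hxper (e ▸ hq), per_subset hq⟩
    · exact Finset.mem_union_left _ (Finset.mem_erase.2 ⟨hyx, n2⟩)
    · intro q hq
      have hperc : ∀ q ∈ per i j σ, q + va i j ∈ N.erase x ∪ per i j σ ∨
          q + vc i j ∈ N.erase x ∪ per i j σ := by
        intro q hq
        have := (per_inv σ).2.1 q hq
        rcases stp_cases σ q with hs | ⟨hs, _⟩
        · right
          exact Finset.mem_union_right _ (hs ▸ this)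
        · left
          exact Finset.mem_union_right _ (hs ▸ this)
      rcases Finset.mem_union.1 hq with hq | hq
      · rw [Finset.mem_erase] at hq
        have hqσ : q ∈ σ := (Finset.mem_insert.1 (n1 hq.2)).resolve_left hq.1
        rcases n3 q hq.2 with h | h
        · by_cases e : q + va i j = x
          · have := l3 q hqσ e
            subst this
            exact hperc q hz
          · left
            exact Finset.mem_union_left _ (Finset.mem_erase.2 ⟨e, h⟩)
        · right
          exact Finset.mem_union_left _ (Finset.mem_erase.2 ⟨l2 q hqσ, h⟩)
      · exact hperc q hq
  -- sets between
  set Bt : Finset V → Prop := fun τ => ∀ y, y ≠ x → (y ∈ σ ↔ y ∈ τ) with hBt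
  have bσ : Bt σ := fun y _ => Iff.rfl
  have hcore : ∀ τ, Bt τ → ∀ y, y ≠ x → (y ∈ core i j τ ↔ y ∈ core i j (σ.erase x)) := by
    intro τ hτ y hy
    constructor
    · intro h
      refine hcore0 y hy (core_mono ?_ h)
      intro q hq
      rw [Finset.mem_insert]
      by_cases e : q = x
      · exact Or.inl e
      · exact Or.inr ((hτ q e).2 hq)
    · intro h
      refine core_mono ?_ h
      intro q hq
      rw [Finset.mem_erase] at hq
      exact (hτ q hq.1).1 hq.2
  have hstp : ∀ τ, Bt τ → ∀ y ∈ σ, stp i j τ y = stp i j σ y := by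
    intro τ hτ y hy
    unfold stp
    have : y + vc i j ∈ core i j τ ↔ y + vc i j ∈ core i j σ := by
      rw [hcore τ hτ _ (l2 y hy), hcore σ bσ _ (l2 y hy)]
    simp only [this]
  have hxp : ∀ τ, Bt τ → x ∉ per i j τ := by
    intro τ hτ hxp
    obtain ⟨y, hy, e⟩ := (per_inv τ).2.2 x hxp
    have hyτ := per_subset hy
    have hyx : y ≠ x := by
      rintro rfl
      rcases stp_cases τ y with hs | ⟨hs, _⟩
      · rw [e] at hs
        exact hc (by simpa using hs.symm)
      · rw [e] at hs
        exact ha (by simpa using hs.symm)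
    have hyσ := (hτ y hyx).2 hyτ
    have e2 := hstp τ hτ y hyσ
    rcases stp_cases τ y with hs | ⟨hs, _⟩
    · exact l2 y hyσ (hs.symm.trans e)
    · have := l3 y hyσ (hs.symm.trans e)
      subst this
      exact l4 (by rw [← hzp, ← e2, e])
  have hper0 : ∀ τ₁ τ₂, Bt τ₁ → Bt τ₂ → per i j τ₁ ⊆ per i j τ₂ := by
    intro τ₁ τ₂ h1 h2 q hq
    have hQ := per_inv (i := i) (j := j) τ₁
    have hne : ∀ y ∈ per i j τ₁, y ≠ x := fun y hy e => hxp τ₁ h1 (e ▸ hy)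
    have hs : ∀ y ∈ per i j τ₁, stp i j τ₂ y = stp i j τ₁ y := by
      intro y hy
      have : y ∈ σ := (h1 y (hne y hy)).2 (per_subset hy)
      rw [hstp _ h1 y this, hstp _ h2 y this]
    refine mem_per.2 ⟨per i j τ₁, ⟨?_, ?_, ?_⟩, hq⟩
    · intro y hy
      exact (hcore τ₂ h2 y (hne y hy)).2 ((hcore τ₁ h1 y (hne y hy)).1 (hQ.1 hy))
    · intro y hy
      rw [hs y hy]
      exact hQ.2.1 y hy
    · intro y hy
      obtain ⟨w, hw, e⟩ := hQ.2.2 y hy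
      exact ⟨w, hw, by rw [hs w hw, e]⟩
  have hper : per i j τ = per i j σ :=
    Finset.Subset.antisymm (hper0 _ _ hτ bσ) (hper0 _ _ bσ hτ)
  have hnw : ∀ q, q ≠ x → (q ∈ nwless i j τ ↔ q ∈ nwless i j σ) := by
    intro q hq
    rw [mem_nwless, mem_nwless, ← hτ q hq]
    constructor
    · rintro ⟨h1, h2, h3⟩
      exact ⟨h1, by rwa [hτ _ (l1 q h1).1], by rwa [hτ _ (l1 q h1).2]⟩
    · rintro ⟨h1, h2, h3⟩
      exact ⟨h1, by rwa [← hτ _ (l1 q h1).1], by rwa [← hτ _ (l1 q h1).2]⟩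
  have hperσ : ∀ q ∈ per i j σ, q ≠ x := fun q hq e => hxper (e ▸ hq)
  refine ⟨?_, ?_, ?_, ?_⟩
  · refine (free_insert hi hj hσ hpn).mono ?_
    rw [← hxe]
    intro q hq
    rw [Finset.mem_insert]
    by_cases e : q = x
    · exact Or.inl e
    · exact Or.inr ((hτ q e).2 hq)
  · rw [← hper] at hp
    exact cyc_of_per hp
  · intro h
    apply hcyc
    have h' : Cyc (va i j) (vc i j) (insert x ((nwless i j σ).erase x)) := by
      refine h.mono ?_
      intro q hq
      by_cases e : q = x
      · simp [e]
      · simp [e, (hnw q e).1 hq]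
    refine Cyc.mono (cyc_insert_parentless ha hc ?_ ?_ h') (Finset.erase_subset _ _)
    · intro hh
      have hh := Finset.mem_of_mem_erase hh
      have := l3 (x - va i j) (mem_nwless.1 hh).1 (by abel)
      rw [this] at hh
      exact hzn hh
    · intro hh
      have hh := Finset.mem_of_mem_erase hh
      exact l2 (x - vc i j) (mem_nwless.1 hh).1 (by abel)
  · ext y
    rw [mem_tog, mem_tog, hper]
    constructor
    · rintro ⟨p, z, a1, a2, a3, a4, a5, a6⟩
      refine ⟨p, z, a1, a2, ?_, ?_, ?_, a6⟩
      · rw [← hstp τ hτ z (per_subset a2), a3]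
      · rwa [← hnw p (hperσ p a1)]
      · rwa [← hnw z (hperσ z a2)]
    · rintro ⟨p, z, a1, a2, a3, a4, a5, a6⟩
      refine ⟨p, z, a1, a2, ?_, ?_, ?_, a6⟩
      · rw [hstp τ hτ z (per_subset a2), a3]
      · rwa [hnw p (hperσ p a1)]
      · rwa [hnw z (hperσ z a2)]

end Step3


section Terminal

variable {V : Type*} [AddCommGroup V] {i j : V}

/-- Nonempty independent sets in which every element has neighbours in all four diagonal
directions. -/
def Til (i j : V) (P : Finset V) : Prop :=
  P.Nonempty ∧ Ind i j P ∧ ∀ p ∈ P, (p + va i j ∈ P ∨ p + vc i j ∈ P) ∧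
    (p - va i j ∈ P ∨ p - vc i j ∈ P) ∧ (p + vU i j ∈ P ∨ p + vD i j ∈ P) ∧
    (p - vU i j ∈ P ∨ p - vD i j ∈ P)

/-- Covered points. -/
def Cov (i j : V) (P : Finset V) (q : V) : Prop :=
  q ∈ P ∨ q + i ∈ P ∨ q - i ∈ P ∨ q + j ∈ P ∨ q - j ∈ P

theorem Til.cov_ii {P : Finset V} (h : Til i j P) {p : V} (hp : p ∈ P) : Cov i j P (p + 2 • i) := by
  obtain ⟨_, hI, h4⟩ := h
  obtain ⟨h1, _, _, h2⟩ := h4 p hp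
  rcases h1 with h1 | h1
  swap
  · right; right; right; left
    convert h1 using 1; simp only [vc]; abel
  rcases h2 with h2 | h2
  swap
  · right; right; right; right
    convert h2 using 1; simp only [vD]; abel
  rcases (h4 _ h1).2.2.2 with h3 | h3
  · left
    convert h3 using 1; simp only [va, vU]; abel
  rcases (h4 _ h2).1 with h5 | h5
  · left
    convert h5 using 1; simp only [va, vU]; abel
  rcases (h4 _ h3).2.1 with h6 | h6
  · right; right; right; right
    convert h6 using 1; simp only [vD]; abel
  · exfalso
    exact hI.ee hp h6 (by simp only [va, vc, vD]; abel)

theorem Til.cov_jj {P : Finset V} (h : Til i j P) {p : V} (hp : p ∈ P) : Cov i j P (p + 2 • j) := by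
  obtain ⟨_, hI, h4⟩ := h
  obtain ⟨h1, _, h2, _⟩ := h4 p hp
  rcases h1 with h1 | h1
  · right; left
    convert h1 using 1; simp only [va]; abel
  rcases h2 with h2 | h2
  · right; right; left
    convert h2 using 1; simp only [vU]; abel
  rcases (h4 _ h1).2.2.1 with h3 | h3
  swap
  · left
    convert h3 using 1; simp only [vc, vD]; abel
  rcases (h4 _ h3).2.1 with h6 | h6
  · exfalso
    exact hI.nn hp h6 (by simp only [va, vc, vU]; abel)
  · right; right; left
    convert h6 using 1; simp only [vc, vU]; abel

theorem Til.cov_i {P : Finset V} (h : Til i j P) {q : V} (hq : Cov i j P q) :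
    Cov i j P (q + i) := by
  rcases hq with hq | hq | hq | hq | hq
  · right; right; left
    convert hq using 1; abel
  · left; exact hq
  · have := h.cov_ii hq
    convert this using 1; abel
  · rcases (h.2.2 _ hq).2.2.2 with h1 | h1
    · right; right; right; right
      convert h1 using 1; simp only [vU]; abel
    · right; left
      convert h1 using 1; simp only [vD]; abel
  · rcases (h.2.2 _ hq).1 with h1 | h1
    · right; right; right; left
      convert h1 using 1; simp only [va]; abel
    · right; left
      convert h1 using 1; simp only [vc]; abel

theorem Til.cov_j {P : Finset V} (h : Til i j P) {q : V} (hq : Cov i j P q) :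
    Cov i j P (q + j) := by
  rcases hq with hq | hq | hq | hq | hq
  · right; right; right; right
    convert hq using 1; abel
  · rcases (h.2.2 _ hq).2.2.1 with h1 | h1
    · right; right; right; left
      convert h1 using 1; simp only [vU]; abel
    · right; right; left
      convert h1 using 1; simp only [vD]; abel
  · rcases (h.2.2 _ hq).1 with h1 | h1
    · right; right; right; left
      convert h1 using 1; simp only [va]; abel
    · right; left
      convert h1 using 1; simp only [vc]; abel
  · left; exact hq
  · have := h.cov_jj hq
    convert this using 1; abel

theorem Til.cov [Finite V] (hgen : ∀ x : V, ∃ m n : ℤ, x = m • i + n • j) {P : Finset V}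
    (h : Til i j P) (q : V) : Cov i j P q := by
  classical
  haveI := Fintype.ofFinite V
  set C : Finset V := Finset.univ.filter (Cov i j P) with hC
  obtain ⟨p, hp⟩ := h.1
  obtain ⟨m, n, hmn⟩ := hgen (q - p)
  have h1 : ∀ x ∈ C, x + i ∈ C := by
    intro x hx
    simp only [hC, Finset.mem_filter, Finset.mem_univ, true_and] at hx ⊢
    exact h.cov_i hx
  have h2 : ∀ x ∈ C, x + j ∈ C := by
    intro x hx
    simp only [hC, Finset.mem_filter, Finset.mem_univ, true_and] at hx ⊢
    exact h.cov_j hx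
  have h0 : p ∈ C := by
    simp only [hC, Finset.mem_filter, Finset.mem_univ, true_and]
    exact Or.inl hp
  have h3 := zsmul_closed h2 n _ (zsmul_closed h1 m _ h0)
  simp only [hC, Finset.mem_filter, Finset.mem_univ, true_and] at h3
  have : q = p + m • i + n • j := by rw [add_assoc, ← hmn]; abel
  rwa [this]

theorem Til.maximal [Finite V] (hgen : ∀ x : V, ∃ m n : ℤ, x = m • i + n • j) {P σ : Finset V}
    (h : Til i j P) (hs : P ⊆ σ) (hσ : Ind i j σ) : σ = P := by
  refine Finset.Subset.antisymm ?_ hs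
  intro q hq
  rcases h.cov hgen q with hh | hh | hh | hh | hh
  · exact hh
  · exact (hσ.ee hq (hs hh) rfl).elim
  · exact (hσ.ee (hs hh) hq (by abel)).elim
  · exact (hσ.nn hq (hs hh) rfl).elim
  · exact (hσ.nn (hs hh) hq (by abel)).elim

theorem terminal [Fintype V] {σ : Finset V} (hσ : Ind i j σ) (hcyc : Cyc (va i j) (vc i j) σ)
    (hnc : ¬ Cyc (va i j) (vc i j) (nwless i j σ)) (ht : tog i j σ = ∅) :
    Til i j (per i j σ) := by
  classical
  have hinv := per_inv (i := i) (j := j) σ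
  have hsub := per_subset (i := i) (j := j) (σ := σ)
  -- everyone has a NW-child
  have hch : ∀ p ∈ per i j σ, p ∉ nwless i j σ := by
    intro r hr hrn
    apply hnc
    set R' := (per i j σ).filter (fun q => q ∉ nwless i j σ) with hR'
    have hback : ∀ z ∈ per i j σ, stp i j σ z ∈ nwless i j σ → z ∈ nwless i j σ := by
      intro z hz hs
      by_contra hcon
      have : stp i j σ z + (j - i) ∈ tog i j σ :=
        mem_tog.2 ⟨_, z, hinv.2.1 z hz, hz, rfl, hs, hcon, rfl⟩
      rw [ht] at this
      simp at this
    have honto := per_onto (σ := σ) (R := R') (Finset.filter_subset _ _) (by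
      intro y hy
      rw [hR', Finset.mem_filter] at hy ⊢
      exact ⟨hinv.2.1 y hy.1, fun h => hy.2 (hback y hy.1 h)⟩)
    refine ⟨(per i j σ).filter (fun q => q ∈ nwless i j σ), ?_, ⟨r, Finset.mem_filter.2 ⟨hr, hrn⟩⟩, ?_⟩
    · intro q hq
      exact (Finset.mem_filter.1 hq).2
    · intro y hy
      rw [Finset.mem_filter] at hy
      have hs : stp i j σ y ∈ (per i j σ).filter (fun q => q ∈ nwless i j σ) := by
        rw [Finset.mem_filter]
        refine ⟨hinv.2.1 y hy.1, ?_⟩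
        by_contra hcon
        obtain ⟨z, hz, e⟩ := honto (stp i j σ y) (Finset.mem_filter.2 ⟨hinv.2.1 y hy.1, hcon⟩)
        rw [Finset.mem_filter] at hz
        have := per_inj σ hz.1 hy.1 e
        subst this
        exact hz.2 hy.2
      rcases stp_cases σ y with h | ⟨h, _⟩
      · right; exact h ▸ hs
      · left; exact h ▸ hs
  have hch' : ∀ p ∈ per i j σ, p + vU i j ∈ σ ∨ p + vD i j ∈ σ := by
    intro p hp
    by_contra hcon
    push Not at hcon
    exact hch p hp (mem_nwless.2 ⟨hsub hp, hcon⟩)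
  have hUD : ∀ p ∈ per i j σ, p + vU i j ∈ σ → stp i j σ p + vD i j ∉ σ := by
    intro p hp h1 h2
    rcases stp_cases σ p with h | ⟨h, _⟩
    · rw [h] at h2
      exact hσ.ee h1 h2 (by simp only [vU, vc, vD]; abel)
    · rw [h] at h2
      exact hσ.nn h1 h2 (by simp only [vU, va, vD]; abel)
  set PU := (per i j σ).filter (fun q => q + vU i j ∈ σ) with hPU
  have hPUs : ∀ y ∈ PU, stp i j σ y ∈ PU := by
    intro y hy
    rw [hPU, Finset.mem_filter] at hy ⊢
    have := hinv.2.1 y hy.1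
    exact ⟨this, (hch' _ this).resolve_right (hUD y hy.1 hy.2)⟩
  have hPUo := per_onto (σ := σ) (R := PU) (Finset.filter_subset _ _) hPUs
  set PD := (per i j σ).filter (fun q => q + vD i j ∈ σ) with hPD
  have hPDU : ∀ y ∈ PD, y ∉ PU := by
    intro y hy hy2
    obtain ⟨z, hz, e⟩ := hPUo y hy2
    rw [hPU, Finset.mem_filter] at hz
    rw [hPD, Finset.mem_filter] at hy
    exact hUD z hz.1 hz.2 (e ▸ hy.2)
  have hPDs : ∀ y ∈ PD, stp i j σ y ∈ PD := by
    intro y hy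
    have hyU := hPDU y hy
    rw [hPD, Finset.mem_filter] at hy ⊢
    have hs := hinv.2.1 y hy.1
    refine ⟨hs, (hch' _ hs).resolve_left ?_⟩
    intro h
    obtain ⟨z, hz, e⟩ := hPUo _ (Finset.mem_filter.2 ⟨hs, h⟩)
    have := per_inj σ (Finset.mem_filter.1 hz).1 hy.1 e
    subst this
    exact hyU hz
  have hPDo := per_onto (σ := σ) (R := PD) (Finset.filter_subset _ _) hPDs
  -- translates are periodic
  have htrans : ∀ (b : V) (R : Finset V), R ⊆ per i j σ → (∀ y ∈ R, y + b ∈ σ) →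
      (∀ y ∈ R, stp i j σ y ∈ R) → (∀ y ∈ R, ∃ z ∈ R, stp i j σ z = y) →
      (∀ y ∈ R, stp i j σ y = y + va i j → y + b + vc i j ∉ σ) → ∀ y ∈ R, y + b ∈ per i j σ := by
    intro b R hR hRb hRs hRo hRa y hy
    have hcl : ∀ w ∈ R.image (· + b), w + va i j ∈ R.image (· + b) ∨ w + vc i j ∈ R.image (· + b) := by
      intro w hw
      obtain ⟨y, hy, rfl⟩ := Finset.mem_image.1 hw
      have : stp i j σ y + b ∈ R.image (· + b) := Finset.mem_image_of_mem (· + b) (hRs y hy)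
      rcases stp_cases σ y with h | ⟨h, _⟩
      · right
        rw [h] at this
        convert this using 1; abel
      · left
        rw [h] at this
        convert this using 1; abel
    have hco : R.image (· + b) ⊆ core i j σ := by
      intro w hw
      refine mem_core.2 ⟨R.image (· + b), ?_, hw, hcl⟩
      intro w hw
      obtain ⟨y, hy, rfl⟩ := Finset.mem_image.1 hw
      exact hRb y hy
    have hst : ∀ y ∈ R, stp i j σ (y + b) = stp i j σ y + b := by
      intro y hy
      have hm : stp i j σ y + b ∈ core i j σ := hco (Finset.mem_image_of_mem (· + b) (hRs y hy))
      rcases stp_cases σ y with h | ⟨h, _⟩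
      · rw [h] at hm
        rw [h]
        unfold stp
        have e : y + vc i j + b = y + b + vc i j := by abel
        rw [e] at hm ⊢
        rw [if_pos hm]
      · rw [h]
        unfold stp
        rw [if_neg (fun hh => hRa y hy h (core_subset hh))]
        abel
    refine mem_per.2 ⟨R.image (· + b), ⟨hco, ?_, ?_⟩, Finset.mem_image_of_mem _ hy⟩
    · intro w hw
      obtain ⟨y, hy, rfl⟩ := Finset.mem_image.1 hw
      show stp i j σ (y + b) ∈ _
      rw [hst y hy]
      exact Finset.mem_image_of_mem (· + b) (hRs y hy)
    · intro w hw
      obtain ⟨y, hy, rfl⟩ := Finset.mem_image.1 hw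
      obtain ⟨z, hz, e⟩ := hRo y hy
      exact ⟨z + b, Finset.mem_image_of_mem _ hz, by rw [hst z hz, e]⟩
  have hstσ : ∀ p ∈ per i j σ, stp i j σ p ∈ σ := fun p hp => hsub (hinv.2.1 p hp)
  have hU : ∀ y ∈ PU, y + vU i j ∈ per i j σ := by
    refine htrans (vU i j) PU (Finset.filter_subset _ _) (fun y hy => (Finset.mem_filter.1 hy).2)
      hPUs hPUo ?_
    intro y hy e h
    have := hstσ y (Finset.mem_filter.1 hy).1
    rw [e] at this
    exact hσ.nn this h (by simp only [va, vU, vc]; abel)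
  have hD : ∀ y ∈ PD, y + vD i j ∈ per i j σ := by
    refine htrans (vD i j) PD (Finset.filter_subset _ _) (fun y hy => (Finset.mem_filter.1 hy).2)
      hPDs hPDo ?_
    intro y hy e h
    have := hstσ y (Finset.mem_filter.1 hy).1
    rw [e] at this
    exact hσ.ee h this (by simp only [va, vD, vc]; abel)
  -- NW-parents by counting
  set w : V → V := fun p => if p + vU i j ∈ σ then p + vU i j else p + vD i j with hw
  have hwm : ∀ p ∈ per i j σ, w p ∈ per i j σ := by
    intro p hp
    simp only [hw]
    split_ifs with h
    · exact hU p (Finset.mem_filter.2 ⟨hp, h⟩)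
    · exact hD p (Finset.mem_filter.2 ⟨hp, (hch' p hp).resolve_left h⟩)
  have hcross : ∀ p ∈ per i j σ, ∀ q ∈ per i j σ, p + vU i j = q + vD i j → False := by
    intro p hp q hq e
    have hq2 : q = p + (i + j) := by
      rw [eq_sub_of_add_eq e.symm]; simp only [vU, vD]; abel
    have hs := hstσ p hp
    rcases stp_cases σ p with h | ⟨h, _⟩
    · rw [h] at hs
      exact hσ.ee (hsub hq) hs (by rw [hq2]; simp only [vc]; abel)
    · rw [h] at hs
      exact hσ.nn (hsub hq) hs (by rw [hq2]; simp only [va]; abel)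
  have hwinj : Set.InjOn w (per i j σ : Set V) := by
    intro p hp q hq e
    simp only [hw] at e
    split_ifs at e with h1 h2 h2
    · exact add_right_cancel e
    · exact (hcross p hp q hq e).elim
    · exact (hcross q hq p hp e.symm).elim
    · exact add_right_cancel e
  have hwonto := Finset.surjOn_of_injOn_of_card_le (s := per i j σ) (t := per i j σ) w
    (fun x hx => hwm x hx) hwinj le_rfl
  refine ⟨per_nonempty hcyc, hσ.mono hsub, ?_⟩
  intro p hp
  refine ⟨?_, ?_, ?_, ?_⟩
  · have := hinv.2.1 p hp
    rcases stp_cases σ p with h | ⟨h, _⟩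
    · right; exact h ▸ this
    · left; exact h ▸ this
  · obtain ⟨z, hz, e⟩ := hinv.2.2 p hp
    rcases stp_cases σ z with h | ⟨h, _⟩
    · right
      rw [← e, h]
      simpa using hz
    · left
      rw [← e, h]
      simpa using hz
  · have := hwm p hp
    simp only [hw] at this
    split_ifs at this
    · exact Or.inl this
    · exact Or.inr this
  · obtain ⟨z, hz, e⟩ := hwonto hp
    simp only [hw] at e
    split_ifs at e
    · left
      rw [← e]
      simpa using hz
    · right
      rw [← e]
      simpa using hz

open Classical in
theorem step3 [Fintype V] (hi : i ≠ 0) (hj : j ≠ 0) (hji : j - i ≠ 0) (h3j : 3 • j ≠ 0)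
    (ha : va i j ≠ 0) (hc : vc i j ≠ 0) (hgen : ∀ x : V, ∃ m n : ℤ, x = m • i + n • j) :
    ∑ σ : Finset V with (Ind i j σ ∧ Cyc (va i j) (vc i j) σ ∧
        ¬ Cyc (va i j) (vc i j) (nwless i j σ)), (-1 : ℤ) ^ σ.card
      = ∑ P : Finset V with Til i j P, (-1 : ℤ) ^ P.card := by
  rw [← Finset.sum_filter_add_sum_filter_not _ (fun σ => (tog i j σ).Nonempty)]
  rw [Finset.filter_filter, Finset.filter_filter, sum_toggle_var (fun σ => (Ind i j σ ∧ Cyc (va i j) (vc i j) σ ∧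
        ¬ Cyc (va i j) (vc i j) (nwless i j σ)) ∧ (tog i j σ).Nonempty) (tog i j), zero_add]
  · apply Finset.sum_congr _ (fun _ _ => rfl)
    ext σ
    simp only [Finset.mem_filter, Finset.mem_univ, true_and]
    constructor
    · rintro ⟨⟨h1, h2, h3⟩, h4⟩
      have := terminal h1 h2 h3 (Finset.not_nonempty_iff_eq_empty.1 h4)
      rw [this.maximal hgen per_subset h1]
      exact this
    · intro h
      have hnw : nwless i j σ = ∅ := by
        rw [Finset.eq_empty_iff_forall_notMem]
        intro p hp
        rw [mem_nwless] at hp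
        rcases (h.2.2 p hp.1).2.2.1 with h1 | h1
        · exact hp.2.1 h1
        · exact hp.2.2 h1
      refine ⟨⟨h.2.1, ⟨σ, Finset.Subset.refl _, h.1, fun y hy => (h.2.2 y hy).1⟩, ?_⟩, ?_⟩
      · rw [hnw]
        rintro ⟨N, h1, ⟨y, hy⟩, _⟩
        simpa using h1 hy
      · rintro ⟨x, hx⟩
        obtain ⟨p, z, _, _, _, hh, _⟩ := mem_tog.1 hx
        rw [hnw] at hh
        simp at hh
  · rintro σ ⟨_, h⟩
    exact h
  · rintro σ τ x ⟨⟨h1, h2, h3⟩, h4⟩ hx hτ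
    obtain ⟨a1, a2, a3, a4⟩ := tog_step hi hj hji h3j ha hc h1 h3 hx hτ
    exact ⟨⟨⟨a1, a2, a3⟩, a4 ▸ h4⟩, a4⟩

end Terminal


section Combine

variable {V : Type*} [AddCommGroup V] {i j : V}

open Classical in
theorem combine [Fintype V] {d : ℕ} [NeZero d] (hi : i ≠ 0) (hj : j ≠ 0) (ha : va i j ≠ 0)
    (hc : vc i j ≠ 0) (hgen : ∀ x : V, ∃ m n : ℤ, x = m • i + n • j)
    (k : V →+ ZMod d) (hki : k i = 1) (hkj : k j = -1)
    (hk : ∀ x, k x = 0 → ∃ n : ℤ, x = n • (i + j))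
    (h3 : ∑ σ : Finset V with (Ind i j σ ∧ Cyc (va i j) (vc i j) σ ∧
        ¬ Cyc (va i j) (vc i j) (nwless i j σ)), (-1 : ℤ) ^ σ.card
      = ∑ P : Finset V with Til i j P, (-1 : ℤ) ^ P.card) :
    ∑ σ : Finset V with Ind i j σ, (-1 : ℤ) ^ σ.card
      = ∑ P : Finset V with Til i j P, (-1 : ℤ) ^ P.card +
        (-1) ^ d * theta (d : ℤ) *
          (1 - ((Finset.univ.filter fun K : Finset V => Lev i j K).card : ℤ)) := by
  have h1 := acyc_all hi hj ha hc k hki hkj hk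
  have h2 := step2 hi hj ha hc hgen
  rw [Finset.sum_congr rfl (fun K hK => acyc_level ha hc k hki hkj hk K (Finset.mem_filter.1 hK).2),
    Finset.sum_const, nsmul_eq_mul] at h2
  have h4 : ∑ σ : Finset V with (Ind i j σ ∧ ¬ Cyc (va i j) (vc i j) (nwless i j σ)),
      (-1 : ℤ) ^ σ.card = ∑ σ : Finset V with (Ind i j σ ∧ ¬ Cyc (va i j) (vc i j) σ), (-1 : ℤ) ^ σ.card
      + ∑ P : Finset V with Til i j P, (-1 : ℤ) ^ P.card := by
    rw [← h3, ← Finset.sum_filter_add_sum_filter_not _ (fun σ => ¬ Cyc (va i j) (vc i j) σ),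
      Finset.filter_filter, Finset.filter_filter]
    congr 1
    · apply Finset.sum_congr _ (fun _ _ => rfl)
      apply Finset.filter_congr
      intro σ _
      have : Cyc (va i j) (vc i j) (nwless i j σ) → Cyc (va i j) (vc i j) σ := fun h =>
        h.mono (fun x hx => (mem_nwless.1 hx).1)
      tauto
    · apply Finset.sum_congr _ (fun _ _ => rfl)
      apply Finset.filter_congr
      intro σ _
      tauto
  rw [h4, h1] at h2
  linarith

open Classical in
theorem step3_deg [Fintype V] (h3i : 3 • i = 0) (h3j : 3 • j = 0) :
    ∑ σ : Finset V with (Ind i j σ ∧ Cyc (va i j) (vc i j) σ ∧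
        ¬ Cyc (va i j) (vc i j) (nwless i j σ)), (-1 : ℤ) ^ σ.card
      = ∑ P : Finset V with Til i j P, (-1 : ℤ) ^ P.card := by
  have e2i : 2 • i = -i := eq_neg_of_add_eq_zero_left (by rw [← h3i]; abel)
  have e2j : 2 • j = -j := eq_neg_of_add_eq_zero_left (by rw [← h3j]; abel)
  have key : ∀ (σ : Finset V), Ind i j σ → ∀ y, (y + va i j ∈ σ ∨ y + vc i j ∈ σ) →
      (y + vU i j ∉ σ ∧ y + vD i j ∉ σ) := by
    intro σ hσ y h
    simp only [va, vc, vU, vD, e2i, e2j] at h ⊢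
    rcases h with h | h
    · refine ⟨fun h' => hσ.ff h h' (Or.inl ?_), fun h' => hσ.ff h h' (Or.inr (Or.inr (Or.inr ?_)))⟩
      · have : y + (-j - i) - (y + (i + -j)) = - (2 • i) := by abel
        rw [this, e2i, neg_neg]
      · have : (y + (i + -j)) - (y + (j - -i)) = - (2 • j) := by abel
        rw [this, e2j, neg_neg]
    · refine ⟨fun h' => hσ.ff h h' (Or.inr (Or.inr (Or.inl ?_))), fun h' => hσ.ff h h' (Or.inr (Or.inl ?_))⟩
      · have : y + (-j - i) - (y + (-i + j)) = - (2 • j) := by abel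
        rw [this, e2j, neg_neg]
      · have : (y + (-i + j)) - (y + (j - -i)) = - (2 • i) := by abel
        rw [this, e2i, neg_neg]
  rw [Finset.filter_false_of_mem, Finset.filter_false_of_mem]
  · rintro P - ⟨⟨p, hp⟩, hI, h⟩
    obtain ⟨h1, -, h2, -⟩ := h p hp
    have := key P hI p h1
    tauto
  · rintro σ - ⟨hI, ⟨N, hN, hne, hcl⟩, hnc⟩
    refine hnc ⟨N, fun y hy => mem_nwless.2 ⟨hN hy, key σ hI y ?_⟩, hne, hcl⟩
    exact (hcl y hy).imp (fun h => hN h) (fun h => hN h)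

theorem ind_swap {σ : Finset V} : Ind j i σ ↔ Ind i j σ :=
  ⟨fun h p hp => (h p hp).symm, fun h p hp => (h p hp).symm⟩

theorem til_swap {P : Finset V} : Til j i P ↔ Til i j P := by
  have e1 : va j i = vc i j := by simp only [va, vc]; abel
  have e2 : vc j i = va i j := by simp only [va, vc]; abel
  have e3 : vU j i = - vD i j := by simp only [vU, vD]; abel
  have e4 : vD j i = - vU i j := by simp only [vU, vD]; abel
  unfold Til
  rw [e1, e2, e3, e4, ind_swap]
  simp only [sub_neg_eq_add, ← sub_eq_add_neg]
  refine and_congr_right fun _ => and_congr_right fun _ => forall₂_congr fun p _ => ?_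
  tauto

open Classical in
theorem main_comb [Fintype V] {d : ℕ} [NeZero d] (hi : i ≠ 0) (hj : j ≠ 0) (hji : j - i ≠ 0)
    (ha : va i j ≠ 0) (hc : vc i j ≠ 0) (hgen : ∀ x : V, ∃ m n : ℤ, x = m • i + n • j)
    (k : V →+ ZMod d) (hki : k i = 1) (hkj : k j = -1)
    (hk : ∀ x, k x = 0 → ∃ n : ℤ, x = n • (i + j)) (D : ℤ)
    (hD0 : ¬ (3 : ℤ) ∣ D → ∃ m n : ℤ, m • i + n • j = 0 ∧ ¬ (3 : ℤ) ∣ m + n)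
    (hD3 : (3 : ℤ) ∣ D → ∃ l : V →+ ZMod 3, l i = 1 ∧ l j = 1) :
    ∑ σ : Finset V with Ind i j σ, (-1 : ℤ) ^ σ.card
      = ∑ P : Finset V with Til i j P, (-1 : ℤ) ^ P.card - (-1) ^ d * theta (d : ℤ) * theta D := by
  have hgen' : ∀ x : V, ∃ m n : ℤ, x = m • j + n • i := fun x => by
    obtain ⟨m, n, h⟩ := hgen x
    exact ⟨n, m, by rw [h, add_comm]⟩
  have hlev : ((Finset.univ.filter fun K : Finset V => Lev i j K).card : ℤ) = 1 + theta D ∧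
      ((Finset.univ.filter fun K : Finset V => Lev j i K).card : ℤ) = 1 + theta D := by
    by_cases h : (3 : ℤ) ∣ D
    · obtain ⟨l, l1, l2⟩ := hD3 h
      rw [lev_card_three hgen l l1 l2, lev_card_three hgen' l l2 l1, theta, if_pos h]
      norm_num
    · obtain ⟨m, n, h1, h2⟩ := hD0 h
      rw [lev_card_zero m n h1 h2, lev_card_zero n m (by rw [add_comm]; exact h1)
        (by rw [add_comm]; exact h2), theta, if_neg h]
      norm_num
  by_cases h3j : 3 • j = 0
  · by_cases h3i : 3 • i = 0
    · rw [combine hi hj ha hc hgen k hki hkj hk (step3_deg h3i h3j), hlev.1]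
      ring
    · have e1 : va j i = vc i j := by simp only [va, vc]; abel
      have e2 : vc j i = va i j := by simp only [va, vc]; abel
      have hij : i - j ≠ 0 := fun h => hji (by rw [← neg_sub, h, neg_zero])
      have := combine hj hi (e1 ▸ hc) (e2 ▸ ha) hgen' (-k) (by simp [hkj]) (by simp [hki])
        (fun x hx => by rw [add_comm]; exact hk x (by simpa using hx))
        (step3 hj hi hij h3i (e1 ▸ hc) (e2 ▸ ha) hgen')
      simp only [ind_swap, til_swap] at this
      rw [this, hlev.2]
      ring
  · rw [combine hi hj ha hc hgen k hki hkj hk (step3 hi hj hji h3j ha hc hgen), hlev.1]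
    ring

end Combine


section Instantiate

/-- The two generators of the torus group. -/
abbrev gi (u v : ℤ × ℤ) : (ℤ × ℤ) ⧸ lat u v := ((1, 0) : ℤ × ℤ)
abbrev gj (u v : ℤ × ℤ) : (ℤ × ℤ) ⧸ lat u v := ((0, 1) : ℤ × ℤ)

theorem g_comb (u v : ℤ × ℤ) (m n : ℤ) :
    m • gi u v + n • gj u v = (((m, n) : ℤ × ℤ) : (ℤ × ℤ) ⧸ lat u v) := by
  rw [← QuotientAddGroup.mk_zsmul, ← QuotientAddGroup.mk_zsmul, ← QuotientAddGroup.mk_add]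
  simp

theorem lat_comb (u v : ℤ × ℤ) (A B : ℤ) : (A * u.1 + B * v.1, A * u.2 + B * v.2) ∈ lat u v := by
  have hu : u ∈ lat u v := AddSubgroup.subset_closure (by simp)
  have hv : v ∈ lat u v := AddSubgroup.subset_closure (by simp)
  have := (lat u v).add_mem ((lat u v).zsmul_mem hu A) ((lat u v).zsmul_mem hv B)
  convert this using 1
  ext <;> simp

theorem g_zero {u v : ℤ × ℤ} (m n : ℤ) :
    m • gi u v + n • gj u v = 0 ↔ ((m, n) : ℤ × ℤ) ∈ lat u v := by
  rw [g_comb, QuotientAddGroup.eq_zero_iff]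

theorem g_ne {u v : ℤ × ℤ} (hlen : ∀ w ∈ lat u v, w ≠ 0 → 9 ≤ w.1 ^ 2 + w.2 ^ 2) (m n : ℤ)
    (h0 : (m, n) ≠ ((0, 0) : ℤ × ℤ)) (h : m ^ 2 + n ^ 2 < 9) : m • gi u v + n • gj u v ≠ 0 := by
  rw [Ne, g_zero]
  intro hh
  have := hlen _ hh h0
  simp only at this
  omega

/-- A homomorphism from the torus group. -/
def gHom (u v : ℤ × ℤ) (d : ℕ) (s : ℤ) (hu : (d : ℤ) ∣ u.1 + s * u.2) (hv : (d : ℤ) ∣ v.1 + s * v.2) :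
    ((ℤ × ℤ) ⧸ lat u v) →+ ZMod d :=
  QuotientAddGroup.lift (lat u v)
    ((Int.castAddHom (ZMod d)).comp (AddMonoidHom.fst ℤ ℤ + (AddMonoidHom.mulLeft s).comp (AddMonoidHom.snd ℤ ℤ)))
    (by
      intro x hx
      induction hx using AddSubgroup.closure_induction with
      | mem x hx =>
        rcases hx with rfl | rfl
        · simpa using (ZMod.intCast_zmod_eq_zero_iff_dvd _ d).2 hu
        · simpa using (ZMod.intCast_zmod_eq_zero_iff_dvd _ d).2 hv
      | zero => exact map_zero _
      | add x y _ _ hx hy => exact add_mem hx hy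
      | neg x _ hx => exact neg_mem hx)

theorem gHom_mk (u v : ℤ × ℤ) (d : ℕ) (s : ℤ) (hu hv) (p : ℤ × ℤ) :
    gHom u v d s hu hv (p : (ℤ × ℤ) ⧸ lat u v) = ((p.1 + s * p.2 : ℤ) : ZMod d) := by
  unfold gHom
  exact QuotientAddGroup.lift_mk _ _ _

theorem indep_iff {u v : ℤ × ℤ} (hi : gi u v ≠ 0) (hj : gj u v ≠ 0) (σ : Finset ((ℤ × ℤ) ⧸ lat u v)) :
    Indep (torusGraph u v) σ ↔ Ind (gi u v) (gj u v) σ := by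
  constructor
  · intro h p hp
    refine ⟨fun h' => h hp h' ⟨?_, ?_⟩, fun h' => h hp h' ⟨?_, ?_⟩⟩
    · intro e; exact hi (by simpa using e)
    · right; left; simp
    · intro e; exact hj (by simpa using e)
    · right; right; right; simp
  · rintro h a ha b hb ⟨-, h'⟩
    exact h.ff ha hb (by tauto)

open Classical in
theorem main_sum (u v : ℤ × ℤ)
    (hindep : u.1 * v.2 - u.2 * v.1 ≠ 0)
    (hlen : ∀ w ∈ lat u v, w ≠ 0 → 9 ≤ w.1 ^ 2 + w.2 ^ 2)
    [Fintype ((ℤ × ℤ) ⧸ lat u v)] [LinearOrder ((ℤ × ℤ) ⧸ lat u v)] :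
    (∑ I : IndepSet (torusGraph u v), (-1 : ℤ) ^ I.1.card)
      = ∑ P : Finset ((ℤ × ℤ) ⧸ lat u v) with Til (gi u v) (gj u v) P, (-1 : ℤ) ^ P.card
        - (-1) ^ (Int.gcd (u.1 - u.2) (v.1 - v.2))
          * theta (Int.gcd (u.1 - u.2) (v.1 - v.2))
          * theta (Int.gcd (u.1 + u.2) (v.1 + v.2)) := by
  have hi : gi u v ≠ 0 := by simpa using g_ne hlen 1 0 (by simp) (by norm_num)
  have hj : gj u v ≠ 0 := by simpa using g_ne hlen 0 1 (by simp) (by norm_num)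
  have hji : gj u v - gi u v ≠ 0 := by
    have := g_ne hlen (-1) 1 (by simp) (by norm_num)
    rwa [neg_one_zsmul, one_zsmul, neg_add_eq_sub] at this
  have ha : va (gi u v) (gj u v) ≠ 0 := by
    have := g_ne hlen 1 2 (by simp) (by norm_num)
    rwa [one_zsmul] at this
  have hc : vc (gi u v) (gj u v) ≠ 0 := by
    have := g_ne hlen 2 1 (by simp) (by norm_num)
    rwa [one_zsmul] at this
  set d := Int.gcd (u.1 - u.2) (v.1 - v.2) with hd
  have hd0 : d ≠ 0 := by
    intro h
    rw [hd, Int.gcd_eq_zero_iff] at h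
    apply hindep
    have h1 : u.1 = u.2 := by linarith [h.1]
    have h2 : v.1 = v.2 := by linarith [h.2]
    rw [h1, h2]; ring
  haveI : NeZero d := ⟨hd0⟩
  have hgen : ∀ x : (ℤ × ℤ) ⧸ lat u v, ∃ m n : ℤ, x = m • gi u v + n • gj u v := by
    intro x
    obtain ⟨p, rfl⟩ := QuotientAddGroup.mk_surjective x
    exact ⟨p.1, p.2, by rw [g_comb]⟩
  have hsum : (∑ I : IndepSet (torusGraph u v), (-1 : ℤ) ^ I.1.card) =
      ∑ σ : Finset ((ℤ × ℤ) ⧸ lat u v) with Ind (gi u v) (gj u v) σ, (-1 : ℤ) ^ σ.card := by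
    symm
    refine Finset.sum_bij' (fun σ h => (⟨σ, (indep_iff hi hj σ).2 (Finset.mem_filter.1 h).2⟩ : IndepSet (torusGraph u v)))
      (fun I _ => I.1) (fun _ _ => Finset.mem_univ _)
      (fun I _ => Finset.mem_filter.2 ⟨Finset.mem_univ _, (indep_iff hi hj _).1 I.2⟩)
      (fun _ _ => rfl) (fun _ _ => rfl) (fun _ _ => rfl)
  rw [hsum]
  refine main_comb (d := d) hi hj hji ha hc hgen (gHom u v d (-1)
    (by have := Int.gcd_dvd_left (a := u.1 - u.2) (b := v.1 - v.2); rw [← hd] at this; convert this using 1; ring)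
    (by have := Int.gcd_dvd_right (a := u.1 - u.2) (b := v.1 - v.2); rw [← hd] at this; convert this using 1; ring))
    (by rw [gHom_mk]; simp) (by rw [gHom_mk]; simp) ?_ _ ?_ ?_
  · intro x hx
    obtain ⟨p, rfl⟩ := QuotientAddGroup.mk_surjective x
    rw [gHom_mk, ZMod.intCast_zmod_eq_zero_iff_dvd] at hx
    obtain ⟨t, ht⟩ := hx
    have hb := Int.gcd_eq_gcd_ab (u.1 - u.2) (v.1 - v.2)
    rw [← hd] at hb
    set A := Int.gcdA (u.1 - u.2) (v.1 - v.2)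
    set B := Int.gcdB (u.1 - u.2) (v.1 - v.2)
    refine ⟨p.1 - t * (A * u.1 + B * v.1), ?_⟩
    rw [zsmul_add, g_comb, QuotientAddGroup.eq]
    convert lat_comb u v (-t * A) (-t * B) using 1
    rw [Prod.ext_iff]
    simp only [Prod.fst_add, Prod.snd_add, Prod.fst_neg, Prod.snd_neg]
    constructor
    · ring
    · rw [hb] at ht
      linear_combination ht
  · intro h
    have hb := Int.gcd_eq_gcd_ab (u.1 + u.2) (v.1 + v.2)
    set A := Int.gcdA (u.1 + u.2) (v.1 + v.2)
    set B := Int.gcdB (u.1 + u.2) (v.1 + v.2)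
    refine ⟨A * u.1 + B * v.1, A * u.2 + B * v.2, (g_zero _ _).2 (lat_comb u v A B), ?_⟩
    convert h using 2
    rw [hb]; ring
  · intro h
    refine ⟨gHom u v 3 1 ?_ ?_, ?_, ?_⟩
    · rw [one_mul]; exact h.trans (Int.gcd_dvd_left ..)
    · rw [one_mul]; exact h.trans (Int.gcd_dvd_right ..)
    · rw [gHom_mk]; simp
    · rw [gHom_mk]; simp

end Instantiate


section Grid

/-- Piecewise linear interpolation. -/
noncomputable def pl (α : ℤ → ℤ) (τ : ℝ) : ℝ :=
  α ⌊τ⌋ + Int.fract τ * ((α (⌊τ⌋ + 1) : ℝ) - α ⌊τ⌋)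

theorem pl_add (α : ℤ → ℤ) (i : ℤ) (s : ℝ) (h0 : 0 ≤ s) (h1 : s < 1) :
    pl α (i + s) = α i + s * ((α (i + 1) : ℝ) - α i) := by
  have hf : ⌊(i : ℝ) + s⌋ = i := by
    rw [Int.floor_eq_iff]; constructor <;> linarith
  have hg : Int.fract ((i : ℝ) + s) = s := by
    rw [Int.fract, hf]; ring
  rw [pl, hf, hg]

theorem int_lip (α : ℤ → ℤ) (h : ∀ i, |(α (i + 1) : ℝ) - α i| ≤ 1) (m : ℤ) (k : ℕ) :
    |(α (m + k) : ℝ) - α m| ≤ k := by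
  induction k with
  | zero => simp
  | succ k ih =>
    have h1 := h (m + k)
    rw [abs_le] at h1 ih ⊢
    push_cast
    rw [← add_assoc]
    constructor <;> linarith [h1.1, h1.2, ih.1, ih.2]

theorem pl_lip_aux (α : ℤ → ℤ) (h : ∀ i, |(α (i + 1) : ℝ) - α i| ≤ 1) {x y : ℝ} (hxy : x ≤ y) :
    |pl α y - pl α x| ≤ y - x := by
  have hx0 := Int.fract_nonneg x
  have hx1 := (Int.fract_lt_one x).le
  have hy0 := Int.fract_nonneg y
  have hy1 := (Int.fract_lt_one y).le
  have ex := Int.floor_add_fract x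
  have ey := Int.floor_add_fract y
  have hm := Int.floor_le_floor hxy
  unfold pl
  generalize Int.fract x = s at *
  generalize Int.fract y = t at *
  generalize ⌊x⌋ = m at *
  generalize ⌊y⌋ = n at *
  subst ex ey
  rcases hm.eq_or_lt with e | hlt
  · subst e
    have h1 := abs_le.1 (h m)
    rw [abs_le]
    constructor <;> nlinarith [h1.1, h1.2]
  · obtain ⟨k, hk⟩ := Int.eq_ofNat_of_zero_le (show 0 ≤ n - (m + 1) by omega)
    have h1 := abs_le.1 (h m)
    have h2 := abs_le.1 (h n)
    have h3 := int_lip α h (m + 1) k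
    have e : m + 1 + (k : ℤ) = n := by omega
    rw [e, abs_le] at h3
    have e' : (n : ℝ) = m + 1 + k := by exact_mod_cast e.symm
    rw [e', abs_le]
    constructor <;> nlinarith [h1.1, h1.2, h2.1, h2.2, h3.1, h3.2]

theorem pl_lip (α : ℤ → ℤ) (h : ∀ i, |(α (i + 1) : ℝ) - α i| ≤ 1) (x y : ℝ) :
    |pl α x - pl α y| ≤ |x - y| := by
  rcases le_total x y with hxy | hxy
  · rw [abs_sub_comm, abs_sub_comm x, abs_of_nonneg (sub_nonneg.2 hxy)]
    exact pl_lip_aux α h hxy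
  · rw [abs_of_nonneg (sub_nonneg.2 hxy)]
    exact pl_lip_aux α h hxy

theorem grid_cover (α β : ℤ → ℤ) (hα : ∀ i, |(α (i + 1) : ℝ) - α i| ≤ 1)
    (hβ : ∀ i, |(β (i + 1) : ℝ) - β i| ≤ 1) (x y : ℝ) :
    ∃ i j : ℤ, ∃ s t : ℝ, 0 ≤ s ∧ s < 1 ∧ 0 ≤ t ∧ t < 1 ∧
      x = 3 * (i + s) + (β j + t * ((β (j + 1) : ℝ) - β j)) ∧
      y = α i + s * ((α (i + 1) : ℝ) - α i) + 3 * (j + t) := by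
  set F : ℝ → ℝ := fun τ => x / 3 - pl β ((y - pl α τ) / 3) / 3 with hF
  have hlip : LipschitzWith (1 / 9) F := by
    apply LipschitzWith.of_dist_le_mul
    intro a b
    rw [Real.dist_eq, Real.dist_eq]
    have h1 := pl_lip β hβ ((y - pl α b) / 3) ((y - pl α a) / 3)
    have h2 := pl_lip α hα a b
    have e1 : F a - F b = (pl β ((y - pl α b) / 3) - pl β ((y - pl α a) / 3)) / 3 := by
      simp only [hF]; ring
    have e2 : (y - pl α b) / 3 - (y - pl α a) / 3 = (pl α a - pl α b) / 3 := by ring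
    rw [e2, abs_div, abs_of_pos (show (0 : ℝ) < 3 by norm_num)] at h1
    rw [e1, abs_div, abs_of_pos (show (0 : ℝ) < 3 by norm_num)]
    push_cast
    linarith
  have hc : ContractingWith (1 / 9) F := ⟨by rw [← NNReal.coe_lt_coe]; push_cast; norm_num, hlip⟩
  have hfix : F (hc.fixedPoint F) = hc.fixedPoint F := hc.fixedPoint_isFixedPt
  set τ := hc.fixedPoint F
  set τ' := (y - pl α τ) / 3 with hτ'
  have e1 : x = 3 * τ + pl β τ' := by
    have : x / 3 - pl β τ' / 3 = τ := hfix
    linarith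
  have e2 : y = pl α τ + 3 * τ' := by rw [hτ']; ring
  refine ⟨⌊τ⌋, ⌊τ'⌋, Int.fract τ, Int.fract τ', Int.fract_nonneg _, Int.fract_lt_one _,
    Int.fract_nonneg _, Int.fract_lt_one _, ?_, ?_⟩
  · rw [Int.floor_add_fract]
    exact e1
  · rw [Int.floor_add_fract]
    exact e2

theorem grid_unique (α β : ℤ → ℤ) (hα : ∀ i, |(α (i + 1) : ℝ) - α i| ≤ 1)
    (hβ : ∀ i, |(β (i + 1) : ℝ) - β i| ≤ 1) {i j i' j' : ℤ} {s t s' t' : ℝ}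
    (hs : 0 ≤ s) (hs1 : s < 1) (ht : 0 ≤ t) (ht1 : t < 1)
    (hs' : 0 ≤ s') (hs1' : s' < 1) (ht' : 0 ≤ t') (ht1' : t' < 1)
    (e1 : 3 * ((i : ℝ) + s) + (β j + t * ((β (j + 1) : ℝ) - β j)) =
      3 * (i' + s') + (β j' + t' * ((β (j' + 1) : ℝ) - β j')))
    (e2 : α i + s * ((α (i + 1) : ℝ) - α i) + 3 * (j + t) =
      α i' + s' * ((α (i' + 1) : ℝ) - α i') + 3 * (j' + t')) : i = i' ∧ j = j' := by
  rw [← pl_add β j t ht ht1, ← pl_add β j' t' ht' ht1'] at e1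
  rw [← pl_add α i s hs hs1, ← pl_add α i' s' hs' hs1'] at e2
  have h1 := pl_lip β hβ (j + t) (j' + t')
  have h2 := pl_lip α hα (i + s) (i' + s')
  have e3 : pl β (j + t) - pl β (j' + t') = -3 * ((i + s) - (i' + s')) := by linarith
  have e4 : pl α (i + s) - pl α (i' + s') = -3 * ((j + t) - (j' + t')) := by linarith
  rw [e3, abs_mul] at h1
  rw [e4, abs_mul] at h2
  norm_num at h1 h2
  have n1 := abs_nonneg ((i + s) - (i' + s'))
  have n2 := abs_nonneg ((j + t) - (j' + t'))
  have z1 : |((i + s) - (i' + s'))| = 0 := by linarith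
  have z2 : |((j + t) - (j' + t'))| = 0 := by linarith
  rw [abs_eq_zero] at z1 z2
  constructor
  · have a1 : (i : ℝ) < i' + 1 := by linarith
    have a2 : (i' : ℝ) < i + 1 := by linarith
    have a1 : i < i' + 1 := by exact_mod_cast a1
    have a2 : i' < i + 1 := by exact_mod_cast a2
    omega
  · have a1 : (j : ℝ) < j' + 1 := by linarith
    have a2 : (j' : ℝ) < j + 1 := by linarith
    have a1 : j < j' + 1 := by exact_mod_cast a1
    have a2 : j' < j + 1 := by exact_mod_cast a2
    omega

end Grid


section ZTiling

/-- Sets of lattice points which are the vertex sets of rhombus tilings. -/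
structure ZTil (S : Set (ℤ × ℤ)) : Prop where
  ne : S.Nonempty
  indE : ∀ x y, (x, y) ∈ S → (x + 1, y) ∉ S
  indN : ∀ x y, (x, y) ∈ S → (x, y + 1) ∉ S
  ne_child : ∀ x y, (x, y) ∈ S → (x + 1, y + 2) ∈ S ∨ (x + 2, y + 1) ∈ S
  ne_par : ∀ x y, (x, y) ∈ S → (x - 1, y - 2) ∈ S ∨ (x - 2, y - 1) ∈ S
  nw_child : ∀ x y, (x, y) ∈ S → (x - 1, y + 2) ∈ S ∨ (x - 2, y + 1) ∈ S
  nw_par : ∀ x y, (x, y) ∈ S → (x + 1, y - 2) ∈ S ∨ (x + 2, y - 1) ∈ S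

variable {S : Set (ℤ × ℤ)}

theorem ZTil.ee (h : ZTil S) {x y x' y' : ℤ} (h1 : (x, y) ∈ S) (h2 : (x', y') ∈ S)
    (ex : x' = x + 1) (ey : y' = y) : False := by
  subst ex ey; exact h.indE _ _ h1 h2

theorem ZTil.nn (h : ZTil S) {x y x' y' : ℤ} (h1 : (x, y) ∈ S) (h2 : (x', y') ∈ S)
    (ex : x' = x) (ey : y' = y + 1) : False := by
  subst ex ey; exact h.indN _ _ h1 h2

theorem ZTil.uNE (h : ZTil S) {x y : ℤ} (h1 : (x + 1, y + 2) ∈ S) (h2 : (x + 2, y + 1) ∈ S) : False := by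
  rcases h.nw_child _ _ h2 with h3 | h3
  · exact h.nn h1 h3 (by ring) (by ring)
  · exact h.ee h3 h1 (by ring) (by ring)

theorem ZTil.uNW (h : ZTil S) {x y : ℤ} (h1 : (x - 1, y + 2) ∈ S) (h2 : (x - 2, y + 1) ∈ S) : False := by
  rcases h.ne_child _ _ h2 with h3 | h3
  · exact h.nn h1 h3 (by ring) (by ring)
  · exact h.ee h1 h3 (by ring) (by ring)

theorem ZTil.uSW (h : ZTil S) {x y : ℤ} (h1 : (x - 1, y - 2) ∈ S) (h2 : (x - 2, y - 1) ∈ S) : False := by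
  rcases h.nw_par _ _ h2 with h3 | h3
  · exact h.nn h3 h1 (by ring) (by ring)
  · exact h.ee h1 h3 (by ring) (by ring)

theorem ZTil.uSE (h : ZTil S) {x y : ℤ} (h1 : (x + 1, y - 2) ∈ S) (h2 : (x + 2, y - 1) ∈ S) : False := by
  rcases h.ne_par _ _ h2 with h3 | h3
  · exact h.nn h3 h1 (by ring) (by ring)
  · exact h.ee h3 h1 (by ring) (by ring)

/-- The NW edge vectors of the four rhombi. -/
def nwv : Fin 4 → ℤ × ℤ := ![(-1, 2), (-2, 1), (-2, 1), (-1, 2)]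

/-- Offset of the corner from the bottom vertex. -/
def offs : Fin 4 → ℤ × ℤ := ![(0, 0), (-2, 1), (-2, 1), (0, 0)]

/-- Bottom vertex. -/
def bot (r : PlacedRhombus) : ℤ × ℤ := r.corner - offs r.kind

theorem rh_ext {r r' : PlacedRhombus} (h1 : bot r = bot r') (h2 : r.kind = r'.kind) : r = r' := by
  cases r; cases r'
  simp only [bot] at *
  subst h2
  simpa using h1

theorem bot_mk (p : ℤ × ℤ) (k : Fin 4) : bot ⟨p + offs k, k⟩ = p := by simp [bot]

theorem kind_cases (r : PlacedRhombus) : r.kind = 0 ∨ r.kind = 1 ∨ r.kind = 2 ∨ r.kind = 3 := by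
  have : ∀ k : Fin 4, k = 0 ∨ k = 1 ∨ k = 2 ∨ k = 3 := by decide
  exact this _

theorem mem_closed {r : PlacedRhombus} {z : ℝ × ℝ} : z ∈ closedCell r ↔
    ∃ s t : ℝ, 0 ≤ s ∧ s ≤ 1 ∧ 0 ≤ t ∧ t ≤ 1 ∧
      z = toR (bot r) + s • toR (edgeVec1 r.kind) + t • toR (nwv r.kind) := by
  obtain ⟨⟨x, y⟩, k⟩ := r
  unfold closedCell
  fin_cases k
  · simp [bot, toR, edgeVec1, edgeVec2, offs, nwv]
  · constructor
    · rintro ⟨s, t, h1, h2, h3, h4, rfl⟩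
      refine ⟨s, 1 - t, h1, h2, by linarith, by linarith, ?_⟩
      ext <;> simp [bot, toR, edgeVec1, edgeVec2, offs, nwv] <;> ring
    · rintro ⟨s, t, h1, h2, h3, h4, rfl⟩
      refine ⟨s, 1 - t, h1, h2, by linarith, by linarith, ?_⟩
      ext <;> simp [bot, toR, edgeVec1, edgeVec2, offs, nwv] <;> ring
  · constructor
    · rintro ⟨s, t, h1, h2, h3, h4, rfl⟩
      refine ⟨s, 1 - t, h1, h2, by linarith, by linarith, ?_⟩
      ext <;> simp [bot, toR, edgeVec1, edgeVec2, offs, nwv] <;> ring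
    · rintro ⟨s, t, h1, h2, h3, h4, rfl⟩
      refine ⟨s, 1 - t, h1, h2, by linarith, by linarith, ?_⟩
      ext <;> simp [bot, toR, edgeVec1, edgeVec2, offs, nwv] <;> ring
  · simp [bot, toR, edgeVec1, edgeVec2, offs, nwv]

theorem mem_open {r : PlacedRhombus} {z : ℝ × ℝ} : z ∈ openCell r ↔
    ∃ s t : ℝ, 0 < s ∧ s < 1 ∧ 0 < t ∧ t < 1 ∧
      z = toR (bot r) + s • toR (edgeVec1 r.kind) + t • toR (nwv r.kind) := by
  obtain ⟨⟨x, y⟩, k⟩ := r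
  unfold openCell
  fin_cases k
  · simp [bot, toR, edgeVec1, edgeVec2, offs, nwv]
  · constructor
    · rintro ⟨s, t, h1, h2, h3, h4, rfl⟩
      refine ⟨s, 1 - t, h1, h2, by linarith, by linarith, ?_⟩
      ext <;> simp [bot, toR, edgeVec1, edgeVec2, offs, nwv] <;> ring
    · rintro ⟨s, t, h1, h2, h3, h4, rfl⟩
      refine ⟨s, 1 - t, h1, h2, by linarith, by linarith, ?_⟩
      ext <;> simp [bot, toR, edgeVec1, edgeVec2, offs, nwv] <;> ring
  · constructor
    · rintro ⟨s, t, h1, h2, h3, h4, rfl⟩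
      refine ⟨s, 1 - t, h1, h2, by linarith, by linarith, ?_⟩
      ext <;> simp [bot, toR, edgeVec1, edgeVec2, offs, nwv] <;> ring
    · rintro ⟨s, t, h1, h2, h3, h4, rfl⟩
      refine ⟨s, 1 - t, h1, h2, by linarith, by linarith, ?_⟩
      ext <;> simp [bot, toR, edgeVec1, edgeVec2, offs, nwv] <;> ring
  · simp [bot, toR, edgeVec1, edgeVec2, offs, nwv]

/-- The family of tiles attached to a vertex set. -/
def tilesOf (S : Set (ℤ × ℤ)) : Set PlacedRhombus :=
  {r | bot r ∈ S ∧ bot r + edgeVec1 r.kind ∈ S ∧ bot r + nwv r.kind ∈ S}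

theorem ZTil.exists_kind (h : ZTil S) {p : ℤ × ℤ} (hp : p ∈ S) :
    ∃ k : Fin 4, p + edgeVec1 k ∈ S ∧ p + nwv k ∈ S := by
  obtain ⟨x, y⟩ := p
  rcases h.ne_child _ _ hp with h1 | h1 <;> rcases h.nw_child _ _ hp with h2 | h2
  · exact ⟨0, h1, h2⟩
  · exact ⟨2, h1, h2⟩
  · exact ⟨3, h1, h2⟩
  · exact ⟨1, h1, h2⟩

theorem ZTil.s_unique (h : ZTil S) {p : ℤ × ℤ} {k k' : Fin 4} (h1 : p + edgeVec1 k ∈ S)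
    (h2 : p + edgeVec1 k' ∈ S) : edgeVec1 k = edgeVec1 k' := by
  obtain ⟨x, y⟩ := p
  have key : (x, y) + ((1, 2) : ℤ × ℤ) ∈ S → (x, y) + ((2, 1) : ℤ × ℤ) ∈ S → False := h.uNE
  fin_cases k <;> fin_cases k' <;> first | rfl | exact (key h1 h2).elim | exact (key h2 h1).elim

theorem ZTil.b_unique (h : ZTil S) {p : ℤ × ℤ} {k k' : Fin 4} (h1 : p + nwv k ∈ S)
    (h2 : p + nwv k' ∈ S) : nwv k = nwv k' := by
  obtain ⟨x, y⟩ := p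
  have key : (x, y) + ((-1, 2) : ℤ × ℤ) ∈ S → (x, y) + ((-2, 1) : ℤ × ℤ) ∈ S → False := h.uNW
  fin_cases k <;> fin_cases k' <;> first | rfl | exact (key h1 h2).elim | exact (key h2 h1).elim

theorem kind_eq {k k' : Fin 4} (h1 : edgeVec1 k = edgeVec1 k') (h2 : nwv k = nwv k') : k = k' := by
  revert k k'; decide

theorem ZTil.corner4 (h : ZTil S) {p : ℤ × ℤ} {k : Fin 4} (hp : p ∈ S) (h1 : p + edgeVec1 k ∈ S)
    (h2 : p + nwv k ∈ S) : p + edgeVec1 k + nwv k ∈ S := by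
  obtain ⟨x, y⟩ := p
  have conv : ∀ {a b a' b' : ℤ}, (a, b) ∈ S → a = a' → b = b' → (a', b') ∈ S := by
    rintro a b a' b' h rfl rfl; exact h
  fin_cases k
  · replace h1 : (x + 1, y + 2) ∈ S := h1
    replace h2 : (x - 1, y + 2) ∈ S := h2
    show (x + 1 - 1, y + 2 + 2) ∈ S
    rcases h.nw_child _ _ h1 with h3 | h3
    · exact h3
    · exact (h.nn h2 h3 (by ring) (by ring)).elim
  · replace h1 : (x + 2, y + 1) ∈ S := h1
    replace h2 : (x - 2, y + 1) ∈ S := h2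
    show (x + 2 - 2, y + 1 + 1) ∈ S
    rcases h.nw_child _ _ h1 with h3 | h3
    · rcases h.ne_child _ _ h2 with h4 | h4
      · rcases h.ne_par _ _ h3 with h5 | h5
        · exact (h.nn hp h5 (by ring) (by ring)).elim
        · exact (h.nn h5 h4 (by ring) (by ring)).elim
      · exact conv h4 (by ring) (by ring)
    · exact h3
  · replace h1 : (x + 1, y + 2) ∈ S := h1
    replace h2 : (x - 2, y + 1) ∈ S := h2
    show (x + 1 - 2, y + 2 + 1) ∈ S
    rcases h.ne_child _ _ h2 with h3 | h3
    · exact conv h3 (by ring) (by ring)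
    · exact (h.ee h3 h1 (by ring) (by ring)).elim
  · replace h1 : (x + 2, y + 1) ∈ S := h1
    replace h2 : (x - 1, y + 2) ∈ S := h2
    show (x + 2 - 1, y + 1 + 2) ∈ S
    rcases h.nw_child _ _ h1 with h3 | h3
    · exact h3
    · exact (h.ee h2 h3 (by ring) (by ring)).elim

/-- A lattice point of `S` in a tile (half-open) is the bottom vertex. -/
theorem ZTil.lattice_in (h : ZTil S) {r : PlacedRhombus} (hr : r ∈ tilesOf S) {q : ℤ × ℤ} (hq : q ∈ S)
    {s t : ℝ} (hs : 0 ≤ s) (hs1 : s < 1) (ht : 0 ≤ t) (ht1 : t < 1)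
    (e : toR q = toR (bot r) + s • toR (edgeVec1 r.kind) + t • toR (nwv r.kind)) : q = bot r := by
  obtain ⟨h0, h1, h2⟩ := hr
  have h3 := h.corner4 h0 h1 h2
  rcases hb : bot r with ⟨x, y⟩
  rw [hb] at e h0 h1 h2 h3
  obtain ⟨a, b⟩ := q
  have hE : ∀ {x y x' y' : ℤ}, (x, y) ∈ S → (x', y') ∈ S → ¬ (x' = x + 1 ∧ y' = y) :=
    fun h1 h2 h3 => h.ee h1 h2 h3.1 h3.2
  have hN : ∀ {x y x' y' : ℤ}, (x, y) ∈ S → (x', y') ∈ S → ¬ (x' = x ∧ y' = y + 1) :=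
    fun h1 h2 h3 => h.nn h1 h2 h3.1 h3.2
  rw [Prod.ext_iff] at e
  suffices hh : a = x ∧ b = y by rw [hh.1, hh.2]
  rcases kind_cases r with hk | hk | hk | hk <;> rw [hk] at e h1 h2 h3 <;>
    simp [toR, edgeVec1, nwv] at e h1 h2 h3 <;> obtain ⟨ea, eb⟩ := e
  · have f1 : (0 : ℝ) ≤ 2 * (a - x) + (b - y) := by rw [ea, eb]; linarith
    have f2 : (2 : ℝ) * (a - x) + (b - y) < 4 := by rw [ea, eb]; linarith
    have f3 : (0 : ℝ) ≤ (b - y) - 2 * (a - x) := by rw [ea, eb]; linarith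
    have f4 : (b - y) - 2 * (a - x) < (4 : ℝ) := by rw [ea, eb]; linarith
    have f1 : (0 : ℤ) ≤ 2 * (a - x) + (b - y) := by exact_mod_cast f1
    have f2 : (2 : ℤ) * (a - x) + (b - y) < 4 := by exact_mod_cast f2
    have f3 : (0 : ℤ) ≤ (b - y) - 2 * (a - x) := by exact_mod_cast f3
    have f4 : (b - y) - 2 * (a - x) < (4 : ℤ) := by exact_mod_cast f4
    have := hN h0 hq
    have := hE hq h1
    have := hN hq h3
    omega
  · have f1 : (0 : ℝ) ≤ (a - x) + 2 * (b - y) := by rw [ea, eb]; linarith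
    have f2 : (a - x) + 2 * (b - y) < (4 : ℝ) := by rw [ea, eb]; linarith
    have f3 : (0 : ℝ) ≤ 2 * (b - y) - (a - x) := by rw [ea, eb]; linarith
    have f4 : 2 * (b - y) - (a - x) < (4 : ℝ) := by rw [ea, eb]; linarith
    have f1 : (0 : ℤ) ≤ (a - x) + 2 * (b - y) := by exact_mod_cast f1
    have f2 : (a - x) + 2 * (b - y) < (4 : ℤ) := by exact_mod_cast f2
    have f3 : (0 : ℤ) ≤ 2 * (b - y) - (a - x) := by exact_mod_cast f3
    have f4 : 2 * (b - y) - (a - x) < (4 : ℤ) := by exact_mod_cast f4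
    have := hN h0 hq
    have := hE hq h1
    have := hE h2 hq
    omega
  · have f1 : (0 : ℝ) ≤ (a - x) + 2 * (b - y) := by rw [ea, eb]; linarith
    have f2 : (a - x) + 2 * (b - y) < (5 : ℝ) := by rw [ea, eb]; linarith
    have f3 : (0 : ℝ) ≤ (b - y) - 2 * (a - x) := by rw [ea, eb]; linarith
    have f4 : (b - y) - 2 * (a - x) < (5 : ℝ) := by rw [ea, eb]; linarith
    have f1 : (0 : ℤ) ≤ (a - x) + 2 * (b - y) := by exact_mod_cast f1
    have f2 : (a - x) + 2 * (b - y) < (5 : ℤ) := by exact_mod_cast f2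
    have f3 : (0 : ℤ) ≤ (b - y) - 2 * (a - x) := by exact_mod_cast f3
    have f4 : (b - y) - 2 * (a - x) < (5 : ℤ) := by exact_mod_cast f4
    have := hN h0 hq
    have := hE hq h1
    have := hE h2 hq
    have := hN hq h3
    omega
  · have f1 : (0 : ℝ) ≤ 2 * (a - x) + (b - y) := by rw [ea, eb]; linarith
    have f2 : (2 : ℝ) * (a - x) + (b - y) < 5 := by rw [ea, eb]; linarith
    have f3 : (0 : ℝ) ≤ 2 * (b - y) - (a - x) := by rw [ea, eb]; linarith
    have f4 : 2 * (b - y) - (a - x) < (5 : ℝ) := by rw [ea, eb]; linarith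
    have f1 : (0 : ℤ) ≤ 2 * (a - x) + (b - y) := by exact_mod_cast f1
    have f2 : (2 : ℤ) * (a - x) + (b - y) < 5 := by exact_mod_cast f2
    have f3 : (0 : ℤ) ≤ 2 * (b - y) - (a - x) := by exact_mod_cast f3
    have f4 : 2 * (b - y) - (a - x) < (5 : ℤ) := by exact_mod_cast f4
    have := hN h0 hq
    have := hE hq h1
    have := hE h2 hq
    have := hN hq h3
    omega

end ZTiling


section ZTiling2

variable {S : Set (ℤ × ℤ)}

theorem ZTil.par_unique (h : ZTil S) {p q : ℤ × ℤ} {k k' : Fin 4} (hp : p ∈ S) (hq : q ∈ S)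
    (e : p + edgeVec1 k = q + edgeVec1 k') : p = q := by
  obtain ⟨x, y⟩ := p
  obtain ⟨x', y'⟩ := q
  have key : ∀ x y x' y' : ℤ, (x, y) ∈ S → (x', y') ∈ S → x + 1 = x' + 2 → y + 2 = y' + 1 → False := by
    intro x y x' y' h1 h2 e1 e2
    refine h.uSW (x := x + 1) (y := y + 2) (by convert h1 using 2 <;> ring) (by convert h2 using 2 <;> omega)
  rw [Prod.ext_iff] at e
  rw [Prod.ext_iff]
  fin_cases k <;> fin_cases k' <;> simp [edgeVec1] at e ⊢ <;>
    first | exact e | exact (key _ _ _ _ hp hq e.1 e.2).elim | exact (key _ _ _ _ hq hp e.1.symm e.2.symm).elim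

theorem ZTil.nwpar_unique (h : ZTil S) {p q : ℤ × ℤ} {k k' : Fin 4} (hp : p ∈ S) (hq : q ∈ S)
    (e : p + nwv k = q + nwv k') : p = q := by
  obtain ⟨x, y⟩ := p
  obtain ⟨x', y'⟩ := q
  have key : ∀ x y x' y' : ℤ, (x, y) ∈ S → (x', y') ∈ S → x + -1 = x' + -2 → y + 2 = y' + 1 → False := by
    intro x y x' y' h1 h2 e1 e2
    refine h.uSE (x := x - 1) (y := y + 2) (by convert h1 using 2 <;> ring) (by convert h2 using 2 <;> omega)
  rw [Prod.ext_iff] at e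
  rw [Prod.ext_iff]
  fin_cases k <;> fin_cases k' <;> simp [nwv] at e ⊢ <;>
    first | exact e | exact (key _ _ _ _ hp hq e.1 e.2).elim | exact (key _ _ _ _ hq hp e.1.symm e.2.symm).elim

/-- The kind of the tile at `p`. -/
noncomputable def ZTil.kd (h : ZTil S) (p : S) : Fin 4 := (h.exists_kind p.2).choose

theorem ZTil.kd1 (h : ZTil S) (p : S) : p.1 + edgeVec1 (h.kd p) ∈ S :=
  (h.exists_kind p.2).choose_spec.1

theorem ZTil.kd2 (h : ZTil S) (p : S) : p.1 + nwv (h.kd p) ∈ S :=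
  (h.exists_kind p.2).choose_spec.2

theorem ZTil.nxt_bij (h : ZTil S) :
    Function.Bijective (fun p : S => (⟨p.1 + edgeVec1 (h.kd p), h.kd1 p⟩ : S)) := by
  constructor
  · intro p q e
    rw [Subtype.mk.injEq] at e
    exact Subtype.ext (h.par_unique p.2 q.2 e)
  · rintro ⟨⟨x, y⟩, hq⟩
    have key : ∀ k : Fin 4, (x, y) - edgeVec1 k ∈ S →
        ∃ p : S, (⟨p.1 + edgeVec1 (h.kd p), h.kd1 p⟩ : S) = ⟨(x, y), hq⟩ := by
      intro k hk
      refine ⟨⟨_, hk⟩, ?_⟩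
      rw [Subtype.mk.injEq]
      have := h.s_unique (h.kd1 ⟨_, hk⟩) (k' := k) (by simpa using hq)
      rw [this]; simp
    rcases h.ne_par _ _ hq with h1 | h1
    · exact key 0 h1
    · exact key 1 h1

theorem ZTil.nw_bij (h : ZTil S) :
    Function.Bijective (fun p : S => (⟨p.1 + nwv (h.kd p), h.kd2 p⟩ : S)) := by
  constructor
  · intro p q e
    rw [Subtype.mk.injEq] at e
    exact Subtype.ext (h.nwpar_unique p.2 q.2 e)
  · rintro ⟨⟨x, y⟩, hq⟩
    have key : ∀ k : Fin 4, (x, y) - nwv k ∈ S →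
        ∃ p : S, (⟨p.1 + nwv (h.kd p), h.kd2 p⟩ : S) = ⟨(x, y), hq⟩ := by
      intro k hk
      refine ⟨⟨_, hk⟩, ?_⟩
      rw [Subtype.mk.injEq]
      have := h.b_unique (h.kd2 ⟨_, hk⟩) (k' := k) (by simpa using hq)
      rw [this]; simp
    rcases h.nw_par _ _ hq with h1 | h1
    · exact key 0 (by convert h1 using 2 <;> simp [nwv])
    · exact key 1 (by convert h1 using 2 <;> simp [nwv])

/-- NE successor. -/
noncomputable def ZTil.nxt (h : ZTil S) : Equiv.Perm S := Equiv.ofBijective _ h.nxt_bij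

/-- NW successor. -/
noncomputable def ZTil.nw (h : ZTil S) : Equiv.Perm S := Equiv.ofBijective _ h.nw_bij

theorem ZTil.nxt_val (h : ZTil S) (p : S) : (h.nxt p).1 = p.1 + edgeVec1 (h.kd p) := rfl

theorem ZTil.nw_val (h : ZTil S) (p : S) : (h.nw p).1 = p.1 + nwv (h.kd p) := rfl

theorem ZTil.comm (h : ZTil S) : Commute h.nxt h.nw := by
  ext p : 1
  apply Subtype.ext
  have h4 := h.corner4 p.2 (h.kd1 p) (h.kd2 p)
  show (h.nxt (h.nw p)).1 = (h.nw (h.nxt p)).1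
  have e1 : edgeVec1 (h.kd (h.nw p)) = edgeVec1 (h.kd p) := by
    refine h.s_unique (h.kd1 (h.nw p)) ?_
    rw [h.nw_val, add_right_comm]; exact h4
  have e2 : nwv (h.kd (h.nxt p)) = nwv (h.kd p) := by
    refine h.b_unique (h.kd2 (h.nxt p)) ?_
    rw [h.nxt_val]; exact h4
  rw [h.nxt_val, h.nw_val (h.nxt p), h.nw_val, h.nxt_val, e1, e2, add_right_comm]

theorem ev1_sum : ∀ k : Fin 4, (edgeVec1 k).1 + (edgeVec1 k).2 = 3 := by decide
theorem ev1_diff : ∀ k : Fin 4, (edgeVec1 k).2 - (edgeVec1 k).1 = 1 ∨ (edgeVec1 k).2 - (edgeVec1 k).1 = -1 := by decide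
theorem nwv_diff : ∀ k : Fin 4, (nwv k).2 - (nwv k).1 = 3 := by decide
theorem nwv_sum : ∀ k : Fin 4, (nwv k).1 + (nwv k).2 = 1 ∨ (nwv k).1 + (nwv k).2 = -1 := by decide

/-- Grid points. -/
noncomputable def ZTil.z (h : ZTil S) (p0 : S) (i j : ℤ) : S := (h.nxt ^ i) ((h.nw ^ j) p0)

theorem ZTil.z_succ_i (h : ZTil S) (p0 : S) (i j : ℤ) : h.z p0 (i + 1) j = h.nxt (h.z p0 i j) := by
  unfold ZTil.z
  rw [add_comm, zpow_one_add, Equiv.Perm.mul_apply]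

theorem ZTil.z_succ_j (h : ZTil S) (p0 : S) (i j : ℤ) : h.z p0 i (j + 1) = h.nw (h.z p0 i j) := by
  unfold ZTil.z
  have : h.nxt ^ i * h.nw = h.nw * h.nxt ^ i := (h.comm.zpow_left i).eq
  rw [add_comm, zpow_one_add, Equiv.Perm.mul_apply, ← Equiv.Perm.mul_apply, this,
    Equiv.Perm.mul_apply]

theorem ZTil.z_sum (h : ZTil S) (p0 : S) (i j : ℤ) :
    (h.z p0 i j).1.1 + (h.z p0 i j).1.2 = 3 * i + ((h.z p0 0 j).1.1 + (h.z p0 0 j).1.2) := by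
  have hs : ∀ i, (h.z p0 (i + 1) j).1.1 + (h.z p0 (i + 1) j).1.2 =
      (h.z p0 i j).1.1 + (h.z p0 i j).1.2 + 3 := by
    intro i
    rw [h.z_succ_i, h.nxt_val, Prod.fst_add, Prod.snd_add]
    have := ev1_sum (h.kd (h.z p0 i j))
    linarith
  induction i using Int.induction_on with
  | zero => simp
  | succ i ih => rw [hs, ih]; ring
  | pred i ih =>
    have := hs (-i - 1)
    rw [sub_add_cancel, ih] at this
    linarith

theorem ZTil.z_diff (h : ZTil S) (p0 : S) (i j : ℤ) :
    (h.z p0 i j).1.2 - (h.z p0 i j).1.1 = 3 * j + ((h.z p0 i 0).1.2 - (h.z p0 i 0).1.1) := by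
  have hs : ∀ j, (h.z p0 i (j + 1)).1.2 - (h.z p0 i (j + 1)).1.1 =
      (h.z p0 i j).1.2 - (h.z p0 i j).1.1 + 3 := by
    intro j
    rw [h.z_succ_j, h.nw_val, Prod.fst_add, Prod.snd_add]
    have := nwv_diff (h.kd (h.z p0 i j))
    linarith
  induction j using Int.induction_on with
  | zero => simp
  | succ i ih => rw [hs, ih]; ring
  | pred i ih =>
    have := hs (-i - 1)
    rw [sub_add_cancel, ih] at this
    linarith

/-- The tile at a vertex. -/
theorem ZTil.tile_kind (h : ZTil S) {r : PlacedRhombus} (hr : r ∈ tilesOf S) (p : S) (hp : bot r = p.1) :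
    r.kind = h.kd p := by
  obtain ⟨h0, h1, h2⟩ := hr
  rw [hp] at h1 h2
  exact kind_eq (h.s_unique h1 (h.kd1 p)) (h.b_unique h2 (h.kd2 p))

theorem ZTil.tile_mem (h : ZTil S) (p : S) : (⟨p.1 + offs (h.kd p), h.kd p⟩ : PlacedRhombus) ∈ tilesOf S := by
  refine ⟨?_, ?_, ?_⟩
  · rw [bot_mk]; exact p.2
  · rw [bot_mk]; exact h.kd1 p
  · rw [bot_mk]; exact h.kd2 p

/-- Points of the tile at `z i j` in grid coordinates. -/
theorem ZTil.tile_pt (h : ZTil S) (p0 : S) (i j : ℤ) {r : PlacedRhombus} (hr : r ∈ tilesOf S)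
    (hb : bot r = (h.z p0 i j).1) (s t : ℝ) (z : ℝ × ℝ) :
    z = toR (bot r) + s • toR (edgeVec1 r.kind) + t • toR (nwv r.kind) ↔
    (z.1 + z.2 = 3 * (i + s) + ((((h.z p0 0 j).1.1 + (h.z p0 0 j).1.2 : ℤ) : ℝ) +
        t * ((((h.z p0 0 (j + 1)).1.1 + (h.z p0 0 (j + 1)).1.2 : ℤ) : ℝ) -
          ((h.z p0 0 j).1.1 + (h.z p0 0 j).1.2 : ℤ))) ∧
     z.2 - z.1 = (((h.z p0 i 0).1.2 - (h.z p0 i 0).1.1 : ℤ) : ℝ) +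
        s * ((((h.z p0 (i + 1) 0).1.2 - (h.z p0 (i + 1) 0).1.1 : ℤ) : ℝ) -
          ((h.z p0 i 0).1.2 - (h.z p0 i 0).1.1 : ℤ)) + 3 * (j + t)) := by
  have hk := h.tile_kind hr _ hb
  have a1 : (h.z p0 (i + 1) j).1 = bot r + edgeVec1 r.kind := by rw [h.z_succ_i, h.nxt_val, hk, hb]
  have a2 : (h.z p0 i (j + 1)).1 = bot r + nwv r.kind := by rw [h.z_succ_j, h.nw_val, hk, hb]
  have b1 := h.z_sum p0 i j
  have b2 := h.z_sum p0 i (j + 1)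
  have b3 := h.z_diff p0 i j
  have b4 := h.z_diff p0 (i + 1) j
  rw [a2] at b2
  rw [a1] at b4
  rw [← hb] at b1 b3
  have c1 := ev1_sum r.kind
  have c2 := nwv_diff r.kind
  have d1 : (h.z p0 0 j).1.1 + (h.z p0 0 j).1.2 = (bot r).1 + (bot r).2 - 3 * i := by linarith
  have d2 : (h.z p0 0 (j + 1)).1.1 + (h.z p0 0 (j + 1)).1.2 =
    (bot r + nwv r.kind).1 + (bot r + nwv r.kind).2 - 3 * i := by linarith
  have d3 : (h.z p0 i 0).1.2 - (h.z p0 i 0).1.1 = (bot r).2 - (bot r).1 - 3 * j := by linarith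
  have d4 : (h.z p0 (i + 1) 0).1.2 - (h.z p0 (i + 1) 0).1.1 =
    (bot r + edgeVec1 r.kind).2 - (bot r + edgeVec1 r.kind).1 - 3 * j := by linarith
  rw [d1, d2, d3, d4]
  have c1 : ((edgeVec1 r.kind).1 : ℝ) + (edgeVec1 r.kind).2 = 3 := by exact_mod_cast c1
  have c2 : ((nwv r.kind).2 : ℝ) - (nwv r.kind).1 = 3 := by exact_mod_cast c2
  rw [Prod.ext_iff]
  simp only [toR, Prod.fst_add, Prod.snd_add, Prod.smul_fst, Prod.smul_snd, smul_eq_mul]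
  push_cast
  constructor
  · rintro ⟨e1, e2⟩
    constructor
    · linear_combination e1 + e2 + s * c1
    · linear_combination e2 - e1 + t * c2
  · rintro ⟨e1, e2⟩
    constructor
    · linear_combination (1 / 2) * e1 - (1 / 2) * e2 - s * c1 / 2 + t * c2 / 2
    · linear_combination (1 / 2) * e1 + (1 / 2) * e2 - s * c1 / 2 - t * c2 / 2

theorem ZTil.lipB (h : ZTil S) (p0 : S) (j : ℤ) :
    |((((h.z p0 0 (j + 1)).1.1 + (h.z p0 0 (j + 1)).1.2 : ℤ) : ℝ) -
          ((h.z p0 0 j).1.1 + (h.z p0 0 j).1.2 : ℤ))| ≤ 1 := by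
  rw [← Int.cast_sub, ← Int.cast_abs]
  rw [h.z_succ_j, h.nw_val, Prod.fst_add, Prod.snd_add]
  have := nwv_sum (h.kd (h.z p0 0 j))
  have h2 : ∀ x : ℤ, (x = 1 ∨ x = -1) → |x| ≤ 1 := by rintro x (rfl | rfl) <;> simp
  exact_mod_cast h2 _ (by omega)

theorem ZTil.lipA (h : ZTil S) (p0 : S) (i : ℤ) :
    |((((h.z p0 (i + 1) 0).1.2 - (h.z p0 (i + 1) 0).1.1 : ℤ) : ℝ) -
          ((h.z p0 i 0).1.2 - (h.z p0 i 0).1.1 : ℤ))| ≤ 1 := by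
  rw [← Int.cast_sub, ← Int.cast_abs]
  rw [h.z_succ_i, h.nxt_val, Prod.fst_add, Prod.snd_add]
  have := ev1_diff (h.kd (h.z p0 i 0))
  have h2 : ∀ x : ℤ, (x = 1 ∨ x = -1) → |x| ≤ 1 := by rintro x (rfl | rfl) <;> simp
  exact_mod_cast h2 _ (by omega)

theorem ZTil.cover_aux (h : ZTil S) (p0 : S) (z : ℝ × ℝ) : ∃ i j : ℤ, ∃ r ∈ tilesOf S,
    bot r = (h.z p0 i j).1 ∧ ∃ s t : ℝ, 0 ≤ s ∧ s < 1 ∧ 0 ≤ t ∧ t < 1 ∧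
      z = toR (bot r) + s • toR (edgeVec1 r.kind) + t • toR (nwv r.kind) := by
  obtain ⟨i, j, s, t, h1, h2, h3, h4, e1, e2⟩ := grid_cover
    (fun i => (h.z p0 i 0).1.2 - (h.z p0 i 0).1.1) (fun j => (h.z p0 0 j).1.1 + (h.z p0 0 j).1.2)
    (h.lipA p0) (h.lipB p0) (z.1 + z.2) (z.2 - z.1)
  refine ⟨i, j, _, h.tile_mem (h.z p0 i j), bot_mk _ _, s, t, h1, h2, h3, h4, ?_⟩
  rw [h.tile_pt p0 i j (h.tile_mem (h.z p0 i j)) (bot_mk _ _)]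
  exact ⟨e1, e2⟩

theorem ZTil.all_z (h : ZTil S) (p0 p : S) : ∃ i j : ℤ, p = h.z p0 i j := by
  obtain ⟨i, j, r, hr, hb, s, t, h1, h2, h3, h4, e⟩ := h.cover_aux p0 (toR p.1)
  exact ⟨i, j, Subtype.ext (by rw [← hb]; exact h.lattice_in hr p.2 h1 h2 h3 h4 e)⟩

theorem ZTil.cover (h : ZTil S) : (⋃ r ∈ tilesOf S, closedCell r) = Set.univ := by
  rw [Set.eq_univ_iff_forall]
  intro z
  obtain ⟨p, hp⟩ := h.ne
  obtain ⟨i, j, r, hr, -, s, t, h1, h2, h3, h4, e⟩ := h.cover_aux ⟨p, hp⟩ z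
  rw [Set.mem_iUnion₂]
  exact ⟨r, hr, mem_closed.2 ⟨s, t, h1, h2.le, h3, h4.le, e⟩⟩

theorem ZTil.disj (h : ZTil S) {r r' : PlacedRhombus} (hr : r ∈ tilesOf S) (hr' : r' ∈ tilesOf S)
    {z : ℝ × ℝ} (hz : z ∈ openCell r) (hz' : z ∈ openCell r') : r = r' := by
  obtain ⟨p, hp⟩ := h.ne
  obtain ⟨i, j, e⟩ := h.all_z ⟨p, hp⟩ ⟨_, hr.1⟩
  obtain ⟨i', j', e'⟩ := h.all_z ⟨p, hp⟩ ⟨_, hr'.1⟩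
  have e := congrArg Subtype.val e
  have e' := congrArg Subtype.val e'
  obtain ⟨s, t, h1, h2, h3, h4, f⟩ := mem_open.1 hz
  obtain ⟨s', t', h1', h2', h3', h4', f'⟩ := mem_open.1 hz'
  rw [h.tile_pt ⟨p, hp⟩ i j hr e] at f
  rw [h.tile_pt ⟨p, hp⟩ i' j' hr' e'] at f'
  have := grid_unique
    (fun i => (h.z ⟨p, hp⟩ i 0).1.2 - (h.z ⟨p, hp⟩ i 0).1.1)
    (fun j => (h.z ⟨p, hp⟩ 0 j).1.1 + (h.z ⟨p, hp⟩ 0 j).1.2)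
    (h.lipA ⟨p, hp⟩) (h.lipB ⟨p, hp⟩) h1.le h2 h3.le h4 h1'.le h2' h3'.le h4'
    (f.1.symm.trans f'.1) (f.2.symm.trans f'.2)
  have hb : bot r = bot r' := by
    have e1 : bot r = _ := e
    have e2 : bot r' = _ := e'
    rw [e1, e2, this.1, this.2]
  exact rh_ext hb ((h.tile_kind hr _ e).trans (h.tile_kind hr' _ (by rw [← hb]; exact e)).symm)

end ZTiling2


section Geometry

def cs : Fin 4 → ℤ × ℤ := ![(2, 1), (1, 2), (1, 2), (2, 1)]
def ct : Fin 4 → ℤ × ℤ := ![(-2, 1), (-1, 2), (-2, 1), (-1, 2)]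
def nn4 : Fin 4 → ℤ := ![4, 4, 5, 5]
def lf (c : ℤ × ℤ) (z : ℝ × ℝ) : ℝ := c.1 * z.1 + c.2 * z.2
def lz (c p : ℤ × ℤ) : ℤ := c.1 * p.1 + c.2 * p.2

theorem nn4_pos : ∀ k, 0 < nn4 k := by decide
theorem cs_e : ∀ k, lz (cs k) (edgeVec1 k) = nn4 k := by decide
theorem cs_n : ∀ k, lz (cs k) (nwv k) = 0 := by decide
theorem ct_e : ∀ k, lz (ct k) (edgeVec1 k) = 0 := by decide
theorem ct_n : ∀ k, lz (ct k) (nwv k) = nn4 k := by decide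

theorem lf_toR (c p : ℤ × ℤ) : lf c (toR p) = lz c p := by
  simp [lf, lz, toR]

theorem lf_add (c : ℤ × ℤ) (z w : ℝ × ℝ) : lf c (z + w) = lf c z + lf c w := by
  simp only [lf, Prod.fst_add, Prod.snd_add]; ring

theorem lf_sub (c : ℤ × ℤ) (z w : ℝ × ℝ) : lf c (z - w) = lf c z - lf c w := by
  simp only [lf, Prod.fst_sub, Prod.snd_sub]; ring

theorem lf_smul (c : ℤ × ℤ) (s : ℝ) (z : ℝ × ℝ) : lf c (s • z) = s * lf c z := by
  simp only [lf, Prod.smul_fst, Prod.smul_snd, smul_eq_mul]; ring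

theorem lf_ext {k : Fin 4} {z w : ℝ × ℝ} (h1 : lf (cs k) z = lf (cs k) w)
    (h2 : lf (ct k) z = lf (ct k) w) : z = w := by
  fin_cases k <;> simp [lf, cs, ct] at h1 h2 <;> ext <;> linarith

theorem cell_pt (r : PlacedRhombus) (s t : ℝ) (z : ℝ × ℝ) :
    z = toR (bot r) + s • toR (edgeVec1 r.kind) + t • toR (nwv r.kind) ↔
      lf (cs r.kind) (z - toR (bot r)) = s * nn4 r.kind ∧ lf (ct r.kind) (z - toR (bot r)) = t * nn4 r.kind := by
  constructor
  · rintro rfl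
    rw [add_assoc, add_sub_cancel_left]
    simp only [lf_add, lf_smul, lf_toR, cs_e, cs_n, ct_e, ct_n]
    constructor <;> simp
  · rintro ⟨h1, h2⟩
    rw [lf_sub] at h1 h2
    apply lf_ext (k := r.kind)
    · simp only [lf_add, lf_smul, lf_toR, cs_e, cs_n] at h1 ⊢
      push_cast; linarith
    · simp only [lf_add, lf_smul, lf_toR, ct_e, ct_n] at h2 ⊢
      push_cast; linarith

theorem closed_form {r : PlacedRhombus} {z : ℝ × ℝ} : z ∈ closedCell r ↔
    (0 ≤ lf (cs r.kind) (z - toR (bot r)) ∧ lf (cs r.kind) (z - toR (bot r)) ≤ nn4 r.kind) ∧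
    (0 ≤ lf (ct r.kind) (z - toR (bot r)) ∧ lf (ct r.kind) (z - toR (bot r)) ≤ nn4 r.kind) := by
  have hN : (0 : ℝ) < nn4 r.kind := by exact_mod_cast nn4_pos _
  rw [mem_closed]
  simp only [cell_pt]
  constructor
  · rintro ⟨s, t, h1, h2, h3, h4, e1, e2⟩
    rw [e1, e2]
    refine ⟨⟨by positivity, ?_⟩, ⟨by positivity, ?_⟩⟩ <;> nlinarith
  · rintro ⟨⟨h1, h2⟩, ⟨h3, h4⟩⟩
    refine ⟨lf (cs r.kind) (z - toR (bot r)) / nn4 r.kind, lf (ct r.kind) (z - toR (bot r)) / nn4 r.kind,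
      div_nonneg h1 hN.le, (div_le_one hN).2 h2, div_nonneg h3 hN.le, (div_le_one hN).2 h4, ?_, ?_⟩
    · rw [div_mul_cancel₀ _ hN.ne']
    · rw [div_mul_cancel₀ _ hN.ne']

theorem open_form {r : PlacedRhombus} {z : ℝ × ℝ} : z ∈ openCell r ↔
    (0 < lf (cs r.kind) (z - toR (bot r)) ∧ lf (cs r.kind) (z - toR (bot r)) < nn4 r.kind) ∧
    (0 < lf (ct r.kind) (z - toR (bot r)) ∧ lf (ct r.kind) (z - toR (bot r)) < nn4 r.kind) := by
  have hN : (0 : ℝ) < nn4 r.kind := by exact_mod_cast nn4_pos _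
  rw [mem_open]
  simp only [cell_pt]
  constructor
  · rintro ⟨s, t, h1, h2, h3, h4, e1, e2⟩
    rw [e1, e2]
    refine ⟨⟨by positivity, ?_⟩, ⟨by positivity, ?_⟩⟩ <;> nlinarith
  · rintro ⟨⟨h1, h2⟩, ⟨h3, h4⟩⟩
    refine ⟨lf (cs r.kind) (z - toR (bot r)) / nn4 r.kind, lf (ct r.kind) (z - toR (bot r)) / nn4 r.kind,
      div_pos h1 hN, (div_lt_one hN).2 h2, div_pos h3 hN, (div_lt_one hN).2 h4, ?_, ?_⟩
    · rw [div_mul_cancel₀ _ hN.ne']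
    · rw [div_mul_cancel₀ _ (ne_of_gt hN)]

/-- SmallEps displacements. -/
noncomputable def dir : Fin 4 → ℝ × ℝ := ![(0, 1 / 10), (0, -(1 / 10)), (1 / 10, 0), (-(1 / 10), 0)]
def sS : Fin 4 → ℤ := ![1, -1, 1, -1]
def sT : Fin 4 → ℤ := ![1, -1, -1, 1]

def SmallEps (s : ℤ) (ε : ℝ) : Prop := (s = 1 ∧ 0 < ε ∧ ε < 1) ∨ (s = -1 ∧ -1 < ε ∧ ε < 0)

theorem small_S (k e : Fin 4) : SmallEps (sS e) (lf (cs k) (dir e)) := by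
  fin_cases e
  · left; refine ⟨rfl, ?_⟩; fin_cases k <;> simp [lf, cs, dir] <;> norm_num
  · right; refine ⟨rfl, ?_⟩; fin_cases k <;> simp [lf, cs, dir] <;> norm_num
  · left; refine ⟨rfl, ?_⟩; fin_cases k <;> simp [lf, cs, dir] <;> norm_num
  · right; refine ⟨rfl, ?_⟩; fin_cases k <;> simp [lf, cs, dir] <;> norm_num

theorem small_T (k e : Fin 4) : SmallEps (sT e) (lf (ct k) (dir e)) := by
  fin_cases e
  · left; refine ⟨rfl, ?_⟩; fin_cases k <;> simp [lf, ct, dir] <;> norm_num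
  · right; refine ⟨rfl, ?_⟩; fin_cases k <;> simp [lf, ct, dir] <;> norm_num
  · right; refine ⟨rfl, ?_⟩; fin_cases k <;> simp [lf, ct, dir] <;> norm_num
  · left; refine ⟨rfl, ?_⟩; fin_cases k <;> simp [lf, ct, dir] <;> norm_num

theorem small_closed {s : ℤ} {ε : ℝ} (h : SmallEps s ε) {n N : ℤ} (h1 : 0 ≤ (n : ℝ) + ε)
    (h2 : (n : ℝ) + ε ≤ N) : 1 - s ≤ 2 * n ∧ 2 * n ≤ 2 * N - 1 - s := by
  rcases h with ⟨rfl, a, b⟩ | ⟨rfl, a, b⟩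
  · have c1 : ((-1 : ℤ) : ℝ) < n := by push_cast; linarith
    have c2 : (n : ℝ) < N := by linarith
    have c1 : -1 < n := by exact_mod_cast c1
    have c2 : n < N := by exact_mod_cast c2
    omega
  · have c1 : ((0 : ℤ) : ℝ) < n := by push_cast; linarith
    have c2 : (n : ℝ) < ((N + 1 : ℤ) : ℝ) := by push_cast; linarith
    have c1 : 0 < n := by exact_mod_cast c1
    have c2 : n < N + 1 := by exact_mod_cast c2
    omega

theorem small_open {s : ℤ} {ε : ℝ} (h : SmallEps s ε) {n N : ℤ} (h1 : 1 - s ≤ 2 * n)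
    (h2 : 2 * n ≤ 2 * N - 1 - s) : 0 < (n : ℝ) + ε ∧ (n : ℝ) + ε < N := by
  rcases h with ⟨rfl, a, b⟩ | ⟨rfl, a, b⟩
  · have c1 : ((0 : ℤ) : ℝ) ≤ n := by exact_mod_cast (by omega)
    have c2 : (n : ℝ) ≤ ((N - 1 : ℤ) : ℝ) := by exact_mod_cast (by omega)
    push_cast at c1 c2
    constructor <;> linarith
  · have c1 : ((1 : ℤ) : ℝ) ≤ n := by exact_mod_cast (by omega)
    have c2 : (n : ℝ) ≤ N := by exact_mod_cast (by omega)
    push_cast at c1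
    constructor <;> linarith

/-- `q` moved slightly in direction `e` lies in the tile. -/
def Near (r : PlacedRhombus) (q : ℤ × ℤ) (e : Fin 4) : Prop :=
  (1 - sS e ≤ 2 * lz (cs r.kind) (q - bot r) ∧
    2 * lz (cs r.kind) (q - bot r) ≤ 2 * nn4 r.kind - 1 - sS e) ∧
  (1 - sT e ≤ 2 * lz (ct r.kind) (q - bot r) ∧
    2 * lz (ct r.kind) (q - bot r) ≤ 2 * nn4 r.kind - 1 - sT e)

/-- Interior lattice points. -/
def Inn (r : PlacedRhombus) (q : ℤ × ℤ) : Prop :=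
  (1 ≤ lz (cs r.kind) (q - bot r) ∧ lz (cs r.kind) (q - bot r) ≤ nn4 r.kind - 1) ∧
  (1 ≤ lz (ct r.kind) (q - bot r) ∧ lz (ct r.kind) (q - bot r) ≤ nn4 r.kind - 1)

/-- Corners: bottom, top, left, right. -/
def cor (e : Fin 4) (r : PlacedRhombus) : ℤ × ℤ :=
  ![bot r, bot r + edgeVec1 r.kind + nwv r.kind, bot r + nwv r.kind, bot r + edgeVec1 r.kind] e

theorem lf_disp (c q b : ℤ × ℤ) (w : ℝ × ℝ) :
    lf c (toR q + w - toR b) = (lz c (q - b) : ℝ) + lf c w := by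
  simp [lf, lz, toR]; ring

theorem near_of_closed {r : PlacedRhombus} {q : ℤ × ℤ} {e : Fin 4} (h : toR q + dir e ∈ closedCell r) :
    Near r q e := by
  rw [closed_form, lf_disp, lf_disp] at h
  exact ⟨small_closed (small_S _ _) h.1.1 h.1.2, small_closed (small_T _ _) h.2.1 h.2.2⟩

theorem open_of_near {r : PlacedRhombus} {q : ℤ × ℤ} {e : Fin 4} (h : Near r q e) :
    toR q + dir e ∈ openCell r := by
  rw [open_form, lf_disp, lf_disp]
  exact ⟨small_open (small_S _ _) h.1.1 h.1.2, small_open (small_T _ _) h.2.1 h.2.2⟩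

theorem near_cases {r : PlacedRhombus} {q : ℤ × ℤ} {e : Fin 4} (h : Near r q e) :
    Inn r q ∨ q = cor e r := by
  obtain ⟨a, b⟩ := q
  unfold Near at h
  unfold Inn cor
  rcases hb : bot r with ⟨x, y⟩
  rw [hb] at h
  rcases kind_cases r with hk | hk | hk | hk <;> rw [hk] at h ⊢ <;> fin_cases e <;>
    simp [lz, cs, ct, nn4, sS, sT, edgeVec1, nwv] at h ⊢ <;> omega

theorem near_cor (e : Fin 4) (r : PlacedRhombus) : Near r (cor e r) e := by
  unfold Near cor
  rcases kind_cases r with hk | hk | hk | hk <;> rw [hk] <;> fin_cases e <;>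
    simp [lz, cs, ct, nn4, sS, sT, edgeVec1, nwv] <;> omega

theorem near_inn {r : PlacedRhombus} {q : ℤ × ℤ} (h : Inn r q) (e : Fin 4) : Near r q e := by
  have h1 : sS e = 1 ∨ sS e = -1 := by revert e; decide
  have h2 : sT e = 1 ∨ sT e = -1 := by revert e; decide
  unfold Inn at h
  unfold Near
  omega

theorem not_inn_cor (e : Fin 4) (r : PlacedRhombus) : ¬ Inn r (cor e r) := by
  unfold Inn cor
  rcases kind_cases r with hk | hk | hk | hk <;> rw [hk] <;> fin_cases e <;>
    simp [lz, cs, ct, nn4, edgeVec1, nwv] <;> omega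

theorem inn_up (r : PlacedRhombus) : Inn r (bot r + (0, 1)) := by
  unfold Inn
  rcases kind_cases r with hk | hk | hk | hk <;> rw [hk] <;>
    simp [lz, cs, ct, nn4]

theorem inn_right (r : PlacedRhombus) : Inn r (cor 2 r + (1, 0)) := by
  unfold Inn cor
  rcases kind_cases r with hk | hk | hk | hk <;> rw [hk] <;>
    simp [lz, cs, ct, nn4, nwv] <;> omega

variable {Λ : AddSubgroup (ℤ × ℤ)} {T : Set PlacedRhombus}

theorem IsTiling.near_unique (h : IsTiling Λ T) {r r' : PlacedRhombus} (hr : r ∈ T) (hr' : r' ∈ T)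
    {q : ℤ × ℤ} {e : Fin 4} (h1 : Near r q e) (h2 : Near r' q e) : r = r' := by
  by_contra hne
  have := h.2.1 r hr r' hr' hne
  have hm : toR q + dir e ∈ openCell r ∩ openCell r' := ⟨open_of_near h1, open_of_near h2⟩
  rw [this] at hm
  exact hm

theorem IsTiling.near_exists (h : IsTiling Λ T) (q : ℤ × ℤ) (e : Fin 4) : ∃ r ∈ T, Near r q e := by
  have : toR q + dir e ∈ ⋃ r ∈ T, closedCell r := by rw [h.2.2]; trivial
  rw [Set.mem_iUnion₂] at this
  obtain ⟨r, hr, h1⟩ := this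
  exact ⟨r, hr, near_of_closed h1⟩

theorem IsTiling.cor_not_inn (h : IsTiling Λ T) {r r' : PlacedRhombus} (hr : r ∈ T) (hr' : r' ∈ T)
    (e : Fin 4) : ¬ Inn r' (cor e r) := by
  intro hi
  have := h.near_unique hr hr' (near_cor e r) (near_inn hi e)
  subst this
  exact not_inn_cor e r hi

/-- The vertex set of a tiling. -/
def verts (T : Set PlacedRhombus) : Set (ℤ × ℤ) := bot '' T

theorem IsTiling.cor_iff (h : IsTiling Λ T) (q : ℤ × ℤ) (e : Fin 4) :
    (∃ r ∈ T, cor e r = q) ↔ ∀ r ∈ T, ¬ Inn r q := by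
  constructor
  · rintro ⟨r, hr, rfl⟩ r' hr'
    exact h.cor_not_inn hr hr' e
  · intro hq
    obtain ⟨r, hr, hn⟩ := h.near_exists q e
    rcases near_cases hn with h1 | h1
    · exact (hq r hr h1).elim
    · exact ⟨r, hr, h1.symm⟩

theorem IsTiling.mem_verts (h : IsTiling Λ T) (q : ℤ × ℤ) (e : Fin 4) :
    q ∈ verts T ↔ ∃ r ∈ T, cor e r = q := by
  rw [h.cor_iff, ← h.cor_iff q 0]
  rfl

theorem IsTiling.cor_mem (h : IsTiling Λ T) {r : PlacedRhombus} (hr : r ∈ T) (e : Fin 4) :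
    cor e r ∈ verts T := (h.mem_verts _ e).2 ⟨r, hr, rfl⟩

theorem IsTiling.ztil (h : IsTiling Λ T) : ZTil (verts T) := by
  have hni : ∀ q ∈ verts T, ∀ r ∈ T, ¬ Inn r q := fun q hq => (h.cor_iff q 0).1 ((h.mem_verts q 0).1 hq)
  refine ⟨?_, ?_, ?_, ?_, ?_, ?_, ?_⟩
  · obtain ⟨r, hr, -⟩ := h.near_exists 0 0
    exact ⟨bot r, r, hr, rfl⟩
  · intro x y hq hq'
    obtain ⟨r, hr, e⟩ := (h.mem_verts _ 2).1 hq
    have := inn_right r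
    rw [e] at this
    exact hni _ hq' r hr (by simpa using this)
  · intro x y hq hq'
    obtain ⟨r, hr, e⟩ := (h.mem_verts _ 0).1 hq
    have := inn_up r
    replace e : bot r = (x, y) := e
    rw [e] at this
    exact hni _ hq' r hr (by simpa using this)
  · intro x y hq
    obtain ⟨r, hr, e⟩ := (h.mem_verts _ 0).1 hq
    replace e : bot r = (x, y) := e
    have := h.cor_mem hr 3
    simp only [cor, e] at this
    rcases kind_cases r with hk | hk | hk | hk <;> rw [hk] at this <;> simp [edgeVec1] at this <;> tauto
  · intro x y hq
    obtain ⟨r, hr, e⟩ := (h.mem_verts _ 3).1 hq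
    replace e : bot r + edgeVec1 r.kind = (x, y) := e
    have := h.cor_mem hr 0
    replace this : bot r ∈ verts T := this
    rw [eq_sub_of_add_eq e] at this
    rcases kind_cases r with hk | hk | hk | hk <;> rw [hk] at this <;> simp [edgeVec1] at this <;> tauto
  · intro x y hq
    obtain ⟨r, hr, e⟩ := (h.mem_verts _ 0).1 hq
    replace e : bot r = (x, y) := e
    have := h.cor_mem hr 2
    simp only [cor, e] at this
    rcases kind_cases r with hk | hk | hk | hk <;> rw [hk] at this <;>
      simp [nwv, ← sub_eq_add_neg] at this <;> tauto
  · intro x y hq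
    obtain ⟨r, hr, e⟩ := (h.mem_verts _ 2).1 hq
    replace e : bot r + nwv r.kind = (x, y) := e
    have := h.cor_mem hr 0
    replace this : bot r ∈ verts T := this
    rw [eq_sub_of_add_eq e] at this
    rcases kind_cases r with hk | hk | hk | hk <;> rw [hk] at this <;>
      simp [nwv] at this <;> tauto

theorem IsTiling.eq_tilesOf (h : IsTiling Λ T) : T = tilesOf (verts T) := by
  ext r
  constructor
  · intro hr
    exact ⟨h.cor_mem hr 0, h.cor_mem hr 3, h.cor_mem hr 2⟩
  · rintro ⟨h0, h1, h2⟩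
    obtain ⟨r', hr', e⟩ := (h.mem_verts _ 0).1 h0
    replace e : bot r' = bot r := e
    have h1' := h.cor_mem hr' 3
    have h2' := h.cor_mem hr' 2
    replace h1' : bot r' + edgeVec1 r'.kind ∈ _ := h1'
    replace h2' : bot r' + nwv r'.kind ∈ _ := h2'
    rw [e] at h1' h2'
    have := kind_eq (h.ztil.s_unique h1 h1') (h.ztil.b_unique h2 h2')
    rw [rh_ext e.symm this]
    exact hr'

theorem ZTil.isTiling {S : Set (ℤ × ℤ)} (h : ZTil S) (hS : ∀ w ∈ Λ, ∀ p ∈ S, p + w ∈ S) :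
    IsTiling Λ (tilesOf S) := by
  refine ⟨?_, ?_, h.cover⟩
  · rintro w hw r ⟨h0, h1, h2⟩
    have e : bot (rTranslate w r) = bot r + w := by
      simp only [bot, rTranslate]; abel
    refine ⟨?_, ?_, ?_⟩
    · rw [e]; exact hS w hw _ h0
    · rw [e, add_right_comm]; exact hS w hw _ h1
    · rw [e, add_right_comm]; exact hS w hw _ h2
  · intro r hr r' hr' hne
    rw [Set.eq_empty_iff_forall_notMem]
    rintro z ⟨hz, hz'⟩
    exact hne (h.disj hr hr' hz hz')

theorem ZTil.verts_tilesOf {S : Set (ℤ × ℤ)} (h : ZTil S) : verts (tilesOf S) = S := by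
  ext p
  constructor
  · rintro ⟨r, hr, rfl⟩
    exact hr.1
  · intro hp
    exact ⟨_, h.tile_mem ⟨p, hp⟩, bot_mk _ _⟩

end Geometry


section Counting

variable {u v : ℤ × ℤ}

/-- The periodic set of lattice points lying over a set of classes. -/
def lift (P : Finset ((ℤ × ℤ) ⧸ lat u v)) : Set (ℤ × ℤ) :=
  {p | (p : (ℤ × ℤ) ⧸ lat u v) ∈ P}

theorem mem_lift {P : Finset ((ℤ × ℤ) ⧸ lat u v)} {p : ℤ × ℤ} :
    p ∈ lift P ↔ (p : (ℤ × ℤ) ⧸ lat u v) ∈ P := Iff.rfl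

theorem lift_inv (P : Finset ((ℤ × ℤ) ⧸ lat u v)) : ∀ w ∈ lat u v, ∀ p ∈ lift P, p + w ∈ lift P := by
  intro w hw p hp
  rw [mem_lift] at hp ⊢
  rwa [QuotientAddGroup.mk_add, (QuotientAddGroup.eq_zero_iff w).2 hw, add_zero]

theorem til_iff (P : Finset ((ℤ × ℤ) ⧸ lat u v)) : Til (gi u v) (gj u v) P ↔ ZTil (lift P) := by
  have e1 : ∀ x y : ℤ, (((x, y) : ℤ × ℤ) : (ℤ × ℤ) ⧸ lat u v) + gi u v = ((x + 1, y) : ℤ × ℤ) := by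
    intro x y; rw [← QuotientAddGroup.mk_add]; simp
  have e2 : ∀ x y : ℤ, (((x, y) : ℤ × ℤ) : (ℤ × ℤ) ⧸ lat u v) + gj u v = ((x, y + 1) : ℤ × ℤ) := by
    intro x y; rw [← QuotientAddGroup.mk_add]; simp
  have ca : va (gi u v) (gj u v) = ((1, 2) : ℤ × ℤ) := by
    rw [← g_comb]; simp only [va]; module
  have cc : vc (gi u v) (gj u v) = ((2, 1) : ℤ × ℤ) := by
    rw [← g_comb]; simp only [vc]; module
  have cU : vU (gi u v) (gj u v) = ((-1, 2) : ℤ × ℤ) := by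
    rw [← g_comb]; simp only [vU]; module
  have cD : vD (gi u v) (gj u v) = ((-2, 1) : ℤ × ℤ) := by
    rw [← g_comb]; simp only [vD]; module
  have ea : ∀ x y a b : ℤ, (((x, y) : ℤ × ℤ) : (ℤ × ℤ) ⧸ lat u v) + ((a, b) : ℤ × ℤ)
      = ((x + a, y + b) : ℤ × ℤ) := by
    intro x y a b; rw [← QuotientAddGroup.mk_add]; rfl
  have es : ∀ x y a b : ℤ, (((x, y) : ℤ × ℤ) : (ℤ × ℤ) ⧸ lat u v) - ((a, b) : ℤ × ℤ)
      = ((x - a, y - b) : ℤ × ℤ) := by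
    intro x y a b; rw [← QuotientAddGroup.mk_sub]; rfl
  constructor
  · rintro ⟨h0, hI, h⟩
    have key := fun x y (hp : ((x, y) : ℤ × ℤ) ∈ lift P) => h _ hp
    simp only [ca, cc, cU, cD, ea, es] at key
    refine ⟨?_, ?_, ?_, ?_, ?_, ?_, ?_⟩
    · obtain ⟨p, hp⟩ := h0
      induction p using QuotientAddGroup.induction_on with
      | H p => exact ⟨p, hp⟩
    · intro x y hp hq
      have := (hI _ hp).1
      rw [e1] at this
      exact this hq
    · intro x y hp hq
      have := (hI _ hp).2
      rw [e2] at this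
      exact this hq
    · intro x y hp
      exact (key x y hp).1
    · intro x y hp
      exact (key x y hp).2.1
    · intro x y hp
      simpa [mem_lift, ← sub_eq_add_neg] using (key x y hp).2.2.1
    · intro x y hp
      simpa [mem_lift] using (key x y hp).2.2.2
  · intro h
    refine ⟨?_, ?_, ?_⟩
    · obtain ⟨p, hp⟩ := h.ne
      exact ⟨_, hp⟩
    · intro p hp
      induction p using QuotientAddGroup.induction_on with
      | H p =>
        obtain ⟨x, y⟩ := p
        rw [e1, e2]
        exact ⟨h.indE x y hp, h.indN x y hp⟩
    · intro p hp
      induction p using QuotientAddGroup.induction_on with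
      | H p =>
        obtain ⟨x, y⟩ := p
        simp only [ca, cc, cU, cD, ea, es]
        refine ⟨h.ne_child x y hp, h.ne_par x y hp, ?_, ?_⟩
        · simpa [mem_lift, ← sub_eq_add_neg] using h.nw_child x y hp
        · simpa [mem_lift] using h.nw_par x y hp

theorem bot_translate (w : ℤ × ℤ) (r : PlacedRhombus) : bot (rTranslate w r) = bot r + w := by
  simp only [bot, rTranslate]; abel

theorem numTiles_lift (P : Finset ((ℤ × ℤ) ⧸ lat u v)) (h : ZTil (lift P)) :
    numTiles (lat u v) (tilesOf (lift P)) = P.card := by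
  have hT := h.isTiling (lift_inv P)
  have hP : Nat.card ((P : Set ((ℤ × ℤ) ⧸ lat u v)) : Type) = P.card := by simp
  rw [← hP]
  unfold numTiles
  refine Nat.card_congr (Equiv.ofBijective
    (Quot.lift (fun r => (⟨(bot r.1 : (ℤ × ℤ) ⧸ lat u v), r.2.1⟩ :
      ((P : Set ((ℤ × ℤ) ⧸ lat u v)) : Type))) ?_) ⟨?_, ?_⟩)
  · rintro ⟨r, hr⟩ ⟨r', hr'⟩ ⟨w, hw, e⟩
    apply Subtype.ext
    change (bot r : (ℤ × ℤ) ⧸ lat u v) = bot r'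
    replace e : rTranslate w r' = r := e
    rw [← e, bot_translate, QuotientAddGroup.mk_add, (QuotientAddGroup.eq_zero_iff w).2 hw, add_zero]
  · rintro ⟨r, hr⟩ ⟨r', hr'⟩ e
    have e' : (bot r : (ℤ × ℤ) ⧸ lat u v) = bot r' := congrArg Subtype.val e
    apply Quot.sound
    refine ⟨-bot r' + bot r, QuotientAddGroup.eq.1 e'.symm, ?_⟩
    have hm : rTranslate (-bot r' + bot r) r' ∈ tilesOf (lift P) :=
      hT.1 _ (QuotientAddGroup.eq.1 e'.symm) _ hr'
    have hb : bot (rTranslate (-bot r' + bot r) r') = bot r := by rw [bot_translate]; abel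
    exact rh_ext hb ((h.tile_kind hm ⟨bot r, hr.1⟩ hb).trans (h.tile_kind hr ⟨bot r, hr.1⟩ rfl).symm)
  · rintro ⟨p, hp⟩
    induction p using QuotientAddGroup.induction_on with
    | H p =>
      refine ⟨Quot.mk _ ⟨_, h.tile_mem ⟨p, hp⟩⟩, ?_⟩
      apply Subtype.ext
      change ((bot _ : ℤ × ℤ) : (ℤ × ℤ) ⧸ lat u v) = p
      rw [bot_mk]

open Classical in
/-- The classes of the vertices of a tiling. -/
noncomputable def classes [Fintype ((ℤ × ℤ) ⧸ lat u v)] (T : Set PlacedRhombus) :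
    Finset ((ℤ × ℤ) ⧸ lat u v) :=
  Finset.univ.filter fun x => ∃ p ∈ verts T, (p : (ℤ × ℤ) ⧸ lat u v) = x

theorem lift_classes [Fintype ((ℤ × ℤ) ⧸ lat u v)] {T : Set PlacedRhombus}
    (h : IsTiling (lat u v) T) : lift (u := u) (v := v) (classes T) = verts T := by
  ext p
  simp only [mem_lift, classes, Finset.mem_filter, Finset.mem_univ, true_and]
  constructor
  · rintro ⟨q, ⟨r, hr, rfl⟩, e⟩
    refine ⟨rTranslate (-bot r + p) r, h.1 _ (QuotientAddGroup.eq.1 e) _ hr, ?_⟩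
    rw [bot_translate]; abel
  · intro hp
    exact ⟨p, hp, rfl⟩

theorem lift_inj {P Q : Finset ((ℤ × ℤ) ⧸ lat u v)} (h : lift P = lift Q) : P = Q := by
  ext x
  induction x using QuotientAddGroup.induction_on with
  | H p => exact Set.ext_iff.1 h p

theorem card_tilings [Fintype ((ℤ × ℤ) ⧸ lat u v)] (f : ℕ → Prop) :
    Nat.card {T : Set PlacedRhombus // IsTiling (lat u v) T ∧ f (numTiles (lat u v) T)} =
    Nat.card {P : Finset ((ℤ × ℤ) ⧸ lat u v) // Til (gi u v) (gj u v) P ∧ f P.card} := by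
  have hz : ∀ T, IsTiling (lat u v) T → ZTil (lift (u := u) (v := v) (classes T)) := by
    intro T hT
    rw [lift_classes hT]
    exact hT.ztil
  have ht : ∀ T, IsTiling (lat u v) T → tilesOf (lift (u := u) (v := v) (classes T)) = T := by
    intro T hT
    rw [lift_classes hT, ← hT.eq_tilesOf]
  refine Nat.card_congr ⟨fun T => ⟨classes T.1, (til_iff _).2 (hz _ T.2.1), ?_⟩,
    fun P => ⟨tilesOf (lift P.1), ((til_iff _).1 P.2.1).isTiling (lift_inv _), ?_⟩, ?_, ?_⟩
  · rw [← numTiles_lift _ (hz _ T.2.1), ht _ T.2.1]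
    exact T.2.2
  · rw [numTiles_lift _ ((til_iff _).1 P.2.1)]
    exact P.2.2
  · rintro ⟨T, hT, -⟩
    exact Subtype.ext (ht T hT)
  · rintro ⟨P, hP, -⟩
    apply Subtype.ext
    apply lift_inj
    change lift (classes (tilesOf (lift P))) = lift P
    rw [lift_classes (((til_iff _).1 hP).isTiling (lift_inv _)), ((til_iff _).1 hP).verts_tilesOf]

open Classical in
theorem tilings_sum [Fintype ((ℤ × ℤ) ⧸ lat u v)] :
    (evenTilings (lat u v) : ℤ) - oddTilings (lat u v) =
      ∑ P : Finset ((ℤ × ℤ) ⧸ lat u v) with Til (gi u v) (gj u v) P, (-1 : ℤ) ^ P.card := by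
  unfold evenTilings oddTilings
  rw [card_tilings (fun n => Even n), card_tilings (fun n => Odd n), Nat.card_eq_fintype_card,
    Nat.card_eq_fintype_card, Fintype.card_subtype, Fintype.card_subtype]
  rw [← Finset.sum_filter_add_sum_filter_not _ (fun P => Even P.card), sub_eq_add_neg,
    Finset.filter_filter, Finset.filter_filter]
  congr 1
  · rw [Finset.sum_congr rfl (g := fun _ => (1 : ℤ))]
    · simp
    · intro P hP
      exact (Finset.mem_filter.1 hP).2.2.neg_one_pow
  · rw [Finset.sum_congr rfl (g := fun _ => (-1 : ℤ))]
    · simp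
    · intro P hP
      exact (Nat.not_even_iff_odd.1 (Finset.mem_filter.1 hP).2.2).neg_one_pow

end Counting

/-- **Jonsson's theorem.** For the torus square lattice `G_{u,v}` (every nonzero
vector of `Λ = ℤu + ℤv` of Euclidean length at least 3), the Witten index
`Σ_I (−1)^{|I|}` (sum over independent sets) equals
`t_b − t_f − (−1)^d θ_d θ_{d*}`, where `d = gcd(u₁−u₂, v₁−v₂)`, `d* = gcd(u₁+u₂, v₁+v₂)`. -/
theorem jonsson_witten_index (u v : ℤ × ℤ)
    (hindep : u.1 * v.2 - u.2 * v.1 ≠ 0)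
    (hlen : ∀ w ∈ lat u v, w ≠ 0 → 9 ≤ w.1 ^ 2 + w.2 ^ 2)
    [Fintype ((ℤ × ℤ) ⧸ lat u v)] [LinearOrder ((ℤ × ℤ) ⧸ lat u v)] :
    (∑ I : IndepSet (torusGraph u v), (-1 : ℤ) ^ I.1.card)
      = (evenTilings (lat u v) : ℤ) - oddTilings (lat u v)
        - (-1) ^ (Int.gcd (u.1 - u.2) (v.1 - v.2))
          * theta (Int.gcd (u.1 - u.2) (v.1 - v.2))
          * theta (Int.gcd (u.1 + u.2) (v.1 + v.2)) := by
  rw [main_sum u v hindep hlen, tilings_sum]
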